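/- arXiv:1705.02606 — 4 statements merged into one kernel-verified Lean document; each statement's English description precedes it below -/
import Mathlib

section
/- Let k be a Hilbertian field. Then every finite group G occurs as the automorphism group of infinitely many distinct finite field extensions of k. -/
/-- A field `k` is *Hilbertian* if Hilbert's irreducibility theorem holds over `k`:
for every polynomial `P(T,X) ∈ k[T][X]` which is irreducible over the rational function
field `k(T)`, there are infinitely many specializations `t₀ ∈ k` such that `P(t₀,X)` is
irreducible over `k`. -/
def IsHilbertian (k : Type*) [Field k] : Prop :=
  ∀ P : Polynomial (Polynomial k),
    Irreducible (P.map (algebraMap (Polynomial k) (RatFunc k))) →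
    {t₀ : k | Irreducible (P.map (Polynomial.evalRingHom t₀))}.Infinite

namespace AutHilb

open Equiv

/-- small subsets of size `s c` -/
abbrev Sub (m r : ℕ) := {A : Finset (Fin m) // A.card = r}

abbrev Om (G : Type*) (m : ℕ) (s : G → ℕ) := (G × Fin m) ⊕ (G × ((c : G) → Sub m (s c)))

def subMap {m r : ℕ} (p : Perm (Fin m)) (A : Sub m r) : Sub m r :=
  ⟨A.1.map p.toEmbedding, by rw [Finset.card_map]; exact A.2⟩

lemma subMap_one {m r : ℕ} (A : Sub m r) : subMap 1 A = A := by
  ext; simp [subMap]; rfl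

lemma subMap_mul {m r : ℕ} (p q : Perm (Fin m)) (A : Sub m r) :
    subMap (p * q) A = subMap p (subMap q A) := by
  apply Subtype.ext; simp only [subMap, Finset.map_map]; rfl

section
variable {G : Type*} [Group G] {m : ℕ} {s : G → ℕ}

def hAct (h : G → Perm (Fin m)) : Om G m s → Om G m s
  | .inl (g, i) => .inl (g, h g i)
  | .inr (g, f) => .inr (g, fun c => subMap (h (g * c)) (f c))

def gAct (a : G) : Om G m s → Om G m s
  | .inl (g, i) => .inl (a * g, i)
  | .inr (g, f) => .inr (a * g, f)

variable (G m s) in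
def hHom : (G → Perm (Fin m)) →* Perm (Om G m s) :=
  letI : MulAction (G → Perm (Fin m)) (Om G m s) :=
    { smul := hAct
      one_smul := by rintro (⟨g, i⟩ | ⟨g, f⟩) <;> simp [HSMul.hSMul, hAct, subMap_one]
      mul_smul := by
        rintro h h' (⟨g, i⟩ | ⟨g, f⟩) <;> simp [HSMul.hSMul, hAct, subMap_mul] }
  MulAction.toPermHom _ _

variable (G m s) in
def gHom : G →* Perm (Om G m s) :=
  letI : MulAction G (Om G m s) :=
    { smul := gAct
      one_smul := by rintro (⟨g, i⟩ | ⟨g, f⟩) <;> simp [HSMul.hSMul, gAct]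
      mul_smul := by
        rintro h h' (⟨g, i⟩ | ⟨g, f⟩) <;> simp [HSMul.hSMul, gAct, mul_assoc] }
  MulAction.toPermHom _ _

@[simp] lemma hHom_inl (h : G → Perm (Fin m)) (g : G) (i : Fin m) :
    hHom G m s h (.inl (g, i)) = .inl (g, h g i) := rfl
@[simp] lemma hHom_inr (h : G → Perm (Fin m)) (g : G) (f) :
    hHom G m s h (.inr (g, f)) = .inr (g, fun c => subMap (h (g * c)) (f c)) := rfl
@[simp] lemma gHom_inl (a : G) (g : G) (i : Fin m) :
    gHom G m s a (.inl (g, i)) = .inl (a * g, i) := rfl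
@[simp] lemma gHom_inr (a : G) (g : G) (f) :
    gHom G m s a (.inr (g, f)) = .inr (a * g, f) := rfl

lemma g_conj (a : G) (h : G → Perm (Fin m)) :
    gHom G m s a * hHom G m s h = hHom G m s (fun g => h (a⁻¹ * g)) * gHom G m s a := by
  ext1 x
  rcases x with (⟨g, i⟩ | ⟨g, f⟩) <;> simp [mul_assoc]

lemma sub_eq {m r r' : ℕ} (hr : 2 * r < m) (hr' : 2 * r' < m) (A : Sub m r) (A' : Sub m r')
    (h : ∀ p : Perm (Fin m), subMap p A = A ↔ subMap p A' = A') : A.1 = A'.1 := by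
  obtain ⟨A, rfl⟩ := A
  obtain ⟨A', rfl⟩ := A'
  simp only [subMap, Subtype.mk.injEq] at h
  by_contra hne
  obtain ⟨b, hb⟩ : ∃ b, b ∉ A ∪ A' := by
    by_contra hcon
    push Not at hcon
    have : A ∪ A' = Finset.univ := by ext; simp [hcon]
    have h2 := Finset.card_union_le A A'
    rw [this, Finset.card_univ, Fintype.card_fin] at h2
    omega
  simp only [Finset.mem_union, not_or] at hb
  have key : ∀ C D : Finset (Fin m), b ∉ C → b ∉ D → ∀ a ∈ C, a ∉ D →
      (∀ p : Perm (Fin m), C.map p.toEmbedding = C ↔ D.map p.toEmbedding = D) → False := by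
    intro C D hbC hbD a haC haD hp
    have h1 : D.map (swap a b).toEmbedding = D := by
      ext x
      simp only [Finset.mem_map_equiv, symm_swap]
      by_cases hxa : x = a
      · subst hxa; simp [hbD, haD]
      by_cases hxb : x = b
      · subst hxb; simp [hbD, haD]
      rw [swap_apply_of_ne_of_ne hxa hxb]
    have h2 := (hp _).2 h1
    apply hbC
    rw [← h2]
    simp [haC]
  by_cases hsub : A ⊆ A'
  · obtain ⟨a, ha', ha⟩ := Finset.exists_of_ssubset (lt_of_le_of_ne hsub hne)
    exact key A' A hb.2 hb.1 a ha' ha (fun p => (h p).symm)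
  · obtain ⟨a, ha, ha'⟩ := Finset.not_subset.1 hsub
    exact key A A' hb.1 hb.2 a ha ha' h

lemma choose_gt {m r : ℕ} (h2 : 2 ≤ r) (hr : 2 * r < m) : m < m.choose r := by
  induction r, h2 using Nat.le_induction with
  | base =>
    rw [Nat.choose_two_right]
    obtain ⟨t, rfl⟩ : ∃ t, m = t + 5 := ⟨m - 5, by omega⟩
    have : (t + 5) * (t + 5 - 1) = (t+5) * (t + 4) := rfl
    rw [this, Nat.lt_iff_add_one_le, Nat.le_div_iff_mul_le (by norm_num)]
    nlinarith
  | succ n hn ih =>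
    have := ih (by omega)
    exact this.trans_le (Nat.choose_le_succ_of_lt_half_left (by omega))

lemma sub_trans {m r : ℕ} (A B : Sub m r) : ∃ p : Perm (Fin m), subMap p A = B := by
  have e : {x // x ∈ A.1} ≃ {x // x ∈ B.1} := Finset.equivOfCardEq (by rw [A.2, B.2])
  refine ⟨e.extendSubtype, ?_⟩
  apply Subtype.ext
  apply Finset.eq_of_subset_of_card_le
  · intro x hx
    simp only [subMap, Finset.mem_map] at hx
    obtain ⟨y, hy, rfl⟩ := hx
    exact e.extendSubtype_mem y hy
  · simp [subMap, A.2, B.2]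

section main

lemma inl_to_inl (hs2 : ∀ c, 2 ≤ s c) (hsm : ∀ c, 2 * s c < m) (σ : Perm (Om G m s))
    (hσ : ∀ h, ∃ h', hHom G m s h * σ = σ * hHom G m s h') (g : G) (i : Fin m) :
    ∃ g' i', σ (.inl (g, i)) = .inl (g', i') := by
  rcases hx : σ (.inl (g, i)) with (⟨g', i'⟩ | ⟨g', f⟩)
  · exact ⟨g', i', rfl⟩
  exfalso
  have hex : ∀ B : Sub m (s 1), ∃ j : Fin m, ∃ f' : ((c : G) → Sub m (s c)),
      σ (.inl (g, j)) = .inr (g', f') ∧ f' 1 = B := by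
    intro B
    obtain ⟨p, hp⟩ := sub_trans (f 1) B
    obtain ⟨h', hh'⟩ := hσ (fun _ => p)
    have := congrArg (fun τ => τ (.inl (g, i))) hh'
    simp only [Perm.mul_apply, hx, hHom_inl, hHom_inr] at this
    exact ⟨_, _, this.symm, hp⟩
  choose j f' hj hf' using hex
  have hinj : Function.Injective j := by
    intro B B' hBB
    have h1 := hj B
    rw [hBB, hj B'] at h1
    simp only [Sum.inr.injEq, Prod.mk.injEq, true_and] at h1
    rw [← hf' B, ← hf' B', h1]
  have := Fintype.card_le_of_injective j hinj
  rw [Fintype.card_fin] at this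
  have h3 : Fintype.card (Sub m (s 1)) = m.choose (s 1) := by
    simp
  have := choose_gt (hs2 1) (hsm 1)
  omega

lemma normal_form (hs2 : ∀ c, 2 ≤ s c) (hsm : ∀ c, 2 * s c < m) (hsi : Function.Injective s)
    [Finite G] (hm : 0 < m) (σ : Perm (Om G m s))
    (hσ : ∀ h, ∃ h', hHom G m s h * σ = σ * hHom G m s h')
    (hσ' : ∀ h, ∃ h', hHom G m s h * σ⁻¹ = σ⁻¹ * hHom G m s h') :
    ∃ h a, σ = hHom G m s h * gHom G m s a := by
  have h1 := inl_to_inl hs2 hsm σ hσ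
  choose pi q hpq using h1
  let i0 : Fin m := ⟨0, hm⟩
  have hpi : ∀ g i, pi g i = pi g i0 := by
    intro g i
    obtain ⟨h', hh'⟩ := hσ' (fun _ => swap i i0)
    have h2 : σ * hHom G m s (fun _ => swap i i0) = hHom G m s h' * σ := by
      have := congrArg (fun τ => σ * τ * σ) hh'
      simpa [mul_assoc] using this
    have := congrArg (fun τ => τ (.inl (g, i0))) h2
    simp only [Perm.mul_apply, hHom_inl, hpq, Sum.inl.injEq, Prod.mk.injEq, swap_apply_right] at this
    exact this.1
  let P : G → G := fun g => pi g i0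
  have hP : ∀ g i, σ (.inl (g, i)) = .inl (P g, q g i) := by
    intro g i; rw [hpq, hpi]
  have hPsurj : Function.Surjective P := by
    intro g'
    obtain ⟨g, i, hgi⟩ := inl_to_inl hs2 hsm σ⁻¹ hσ' g' i0
    refine ⟨g, ?_⟩
    have : σ (.inl (g, i)) = .inl (g', i0) := by rw [← hgi]; simp
    rw [hP] at this
    simpa using (Prod.mk.injEq _ _ _ _ ▸ Sum.inl.inj this).1
  have hPbij : Function.Bijective P := ⟨Finite.injective_iff_surjective.2 hPsurj, hPsurj⟩
  let Pe : G ≃ G := Equiv.ofBijective P hPbij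
  have hq : ∀ g, Function.Bijective (q g) := by
    intro g
    refine Finite.injective_iff_bijective.1 ?_
    intro i j hij
    have : σ (.inl (g, i)) = σ (.inl (g, j)) := by rw [hP, hP, hij]
    simpa using σ.injective this
  let h : G → Perm (Fin m) := fun g' => Equiv.ofBijective _ (hq (Pe.symm g'))
  have hh : ∀ g i, h (P g) i = q g i := by
    intro g i
    have : Pe.symm (P g) = g := Pe.symm_apply_apply g
    simp only [h, Equiv.ofBijective_apply, this]
  set τ := (hHom G m s h)⁻¹ * σ with hτ
  have hτσ : σ = hHom G m s h * τ := by rw [hτ]; group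
  have hτl : ∀ g i, τ (.inl (g, i)) = .inl (P g, i) := by
    intro g i
    rw [hτ, Perm.mul_apply, hP, Perm.inv_eq_iff_eq, hHom_inl, hh]
  have hτn : ∀ u : G → Perm (Fin m), τ * hHom G m s (fun g => u (P g)) = hHom G m s u * τ := by
    intro u
    obtain ⟨u', hu'⟩ := hσ (h * u * h⁻¹)
    have h3 : hHom G m s u * τ = τ * hHom G m s u' := by
      rw [hτ, mul_assoc, ← hu', map_mul, map_mul, map_inv]; group
    have : u' = fun g => u (P g) := by
      funext g
      ext1 i
      have := congrArg (fun τ => τ (.inl (g, i))) h3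
      simp only [Perm.mul_apply, hHom_inl, hτl, Sum.inl.injEq, Prod.mk.injEq, true_and] at this
      exact this.symm
    rw [h3, this]
  have hr : ∀ g f, ∃ g' f', τ (.inr (g, f)) = .inr (g', f') := by
    intro g f
    rcases hx : τ (.inr (g, f)) with (⟨g', i'⟩ | ⟨g', f'⟩)
    · exfalso
      obtain ⟨g, rfl⟩ := hPsurj g'
      rw [← hτl] at hx
      exact absurd (τ.injective hx) (by simp)
    · exact ⟨_, _, rfl⟩
  have hr2 : ∀ g f g' f', τ (.inr (g, f)) = .inr (g', f') →
      (∀ c, P (g * c) = g' * c) ∧ f' = f := by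
    intro g f g' f' hx
    have key : ∀ u : G → Perm (Fin m), (∀ c, subMap (u (P (g * c))) (f c) = f c) ↔
        (∀ c, subMap (u (g' * c)) (f' c) = f' c) := by
      intro u
      have := congrArg (fun τ => τ (.inr (g, f))) (hτn u)
      simp only [Perm.mul_apply, hHom_inr, hx] at this
      constructor
      · intro hc
        simp only [hc, hx] at this
        have := (Prod.mk.injEq _ _ _ _ ▸ Sum.inr.inj this).2
        intro c
        exact (congrFun this c).symm
      · intro hc
        simp only [hc, ← hx] at this
        have := (Prod.mk.injEq _ _ _ _ ▸ Sum.inr.inj (τ.injective this)).2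
        intro c
        exact (congrFun this c)
    classical
    have key2 : ∀ c c', P (g * c) = g' * c' → ∀ p, subMap p (f c) = f c ↔ subMap p (f' c') = f' c' := by
      intro c c' hcc p
      have := key (Function.update 1 (g' * c') p)
      constructor
      · intro hp
        have h5 := this.1 (by
          intro d
          by_cases hd : P (g * d) = g' * c'
          · have : d = c := by
              have := hPbij.1 (hd.trans hcc.symm)
              simpa using this
            subst this
            rw [hd]; simpa using hp
          · rw [Function.update_of_ne hd]; exact subMap_one _) c'
        simpa using h5
      · intro hp
        have h5 := this.2 (by
          intro d
          by_cases hd : d = c'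
          · subst hd
            simpa using hp
          · rw [Function.update_of_ne (by simpa using hd)]; exact subMap_one _) c
        rw [hcc] at h5
        simpa using h5
    have key3 : ∀ c c', P (g * c) = g' * c' → c = c' ∧ (f c).1 = (f' c').1 := by
      intro c c' hcc
      have h6 := sub_eq (hsm c) (hsm c') (f c) (f' c') (key2 c c' hcc)
      refine ⟨hsi ?_, h6⟩
      rw [← (f c).2, ← (f' c').2, h6]
    have key4 : ∀ c, P (g * c) = g' * c := by
      intro c
      have := (key3 c (g'⁻¹ * P (g * c)) (by simp)).1
      conv_rhs => rw [this]
      simp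
    refine ⟨key4, ?_⟩
    funext c
    exact Subtype.ext (key3 c c (key4 c)).2.symm
  refine ⟨h, P 1, ?_⟩
  rw [hτσ]
  congr 1
  have f0 : (c : G) → Sub m (s c) := fun c =>
    Classical.choice (by
      obtain ⟨A, -, hA⟩ := Finset.exists_subset_card_eq (s := (Finset.univ : Finset (Fin m))) (n := s c)
        (by rw [Finset.card_univ, Fintype.card_fin]; have := hsm c; omega)
      exact ⟨⟨A, hA⟩⟩)
  have hPl : ∀ g, P g = P 1 * g := by
    intro g
    obtain ⟨g', f', hx⟩ := hr 1 f0
    have h7 := (hr2 _ _ _ _ hx).1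
    have h8 := h7 1
    have h9 := h7 g
    simp only [mul_one, one_mul] at h8 h9
    rw [h9, h8]
  ext1 x
  rcases x with (⟨g, i⟩ | ⟨g, f⟩)
  · rw [hτl, gHom_inl, hPl]
  · obtain ⟨g', f', hx⟩ := hr g f
    obtain ⟨h7, rfl⟩ := hr2 _ _ _ _ hx
    rw [hx, gHom_inr]
    have := h7 1
    simp only [mul_one] at this
    rw [← this, hPl]
end main
end

theorem exists_perm_grp.{u} (G : Type u) [Group G] [Finite G] (N : ℕ) :
    ∃ (Ω : Type u) (_ : Finite Ω) (H : Subgroup (Perm Ω)) (ρ : G →* Perm Ω),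
      3 ≤ Nat.card Ω ∧ N ≤ H.index ∧ (∀ a, ρ a ∈ Subgroup.normalizer (H : Set (Perm Ω))) ∧ (∀ a, ρ a ∈ H → a = 1) ∧
      ∀ σ ∈ Subgroup.normalizer (H : Set (Perm Ω)), ∃ h ∈ H, ∃ a, σ = h * ρ a := by
  classical
  obtain ⟨e⟩ : Nonempty (G ≃ Fin (Nat.card G)) := ⟨Finite.equivFin G⟩
  let s : G → ℕ := fun c => e c + 2
  let m := 2 * Nat.card G + 4 + N
  have hs2 : ∀ c, 2 ≤ s c := fun c => by simp [s]
  have hsm : ∀ c, 2 * s c < m := fun c => by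
    have := (e c).2
    simp only [s, m]; omega
  have hsi : Function.Injective s := by
    intro a b hab
    apply e.injective
    ext
    simpa [s] using hab
  have hm : 0 < m := by simp only [m]; omega
  have f0 : (c : G) → Sub m (s c) := fun c =>
    Classical.choice (by
      obtain ⟨A, -, hA⟩ := Finset.exists_subset_card_eq (s := (Finset.univ : Finset (Fin m))) (n := s c)
        (by rw [Finset.card_univ, Fintype.card_fin]; have := hsm c; omega)
      exact ⟨⟨A, hA⟩⟩)
  have hfin : Finite (Om G m s) := inferInstance
  have hinjf : Function.Injective (fun i : Fin m => (Sum.inl (1, i) : Om G m s)) := by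
    intro i j hij; simpa using hij
  refine ⟨Om G m s, hfin, (hHom G m s).range, gHom G m s, ?_, ?_, ?_, ?_, ?_⟩
  · have := Nat.card_le_card_of_injective _ hinjf
    rw [Nat.card_fin] at this
    exact le_trans (by simp only [m]; omega) this
  · skip
    let w : Om G m s := .inr (1, f0)
    have : Function.Injective (fun i : Fin m =>
        (QuotientGroup.mk (swap (Sum.inl (1, i)) w) : Perm (Om G m s) ⧸ (hHom G m s).range)) := by
      intro i j hij
      simp only [QuotientGroup.eq] at hij
      obtain ⟨h, hh⟩ := hij
      by_contra hne
      have := congrArg (fun τ => τ w) hh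
      simp only [Perm.mul_apply, swap_apply_right, swap_inv] at this
      rw [swap_apply_of_ne_of_ne (by simpa using Ne.symm hne) (by simp [w])] at this
      simp [w] at this
    have h2 := Nat.card_le_card_of_injective _ this
    rw [Nat.card_fin] at h2
    change m ≤ Subgroup.index _ at h2
    simp only [m] at h2 ⊢
    omega
  · intro a
    rw [Subgroup.mem_normalizer_iff]
    intro x
    constructor
    · rintro ⟨h, rfl⟩
      exact ⟨fun g => h (a⁻¹ * g), by rw [g_conj]; group⟩
    · rintro ⟨h, hh⟩
      refine ⟨fun g => h (a * g), ?_⟩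
      have h1 := g_conj (s := s) a⁻¹ h
      rw [hh] at h1
      simp only [inv_inv] at h1
      have h2 : hHom G m s (fun g => h (a * g)) = (gHom G m s) a⁻¹ * ((gHom G m s) a * x * ((gHom G m s) a)⁻¹) *
        ((gHom G m s) a⁻¹)⁻¹ := by rw [h1]; group
      rw [h2, map_inv]; group
  · rintro a ⟨h, hh⟩
    have := congrArg (fun τ => τ (.inl (1, ⟨0, hm⟩))) hh
    simp only [hHom_inl, gHom_inl, Sum.inl.injEq, Prod.mk.injEq, mul_one] at this
    exact this.1.symm
  · have hn : ∀ σ ∈ Subgroup.normalizer (((hHom G m s).range : Subgroup (Perm (Om G m s))) : Set (Perm (Om G m s))),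
        ∀ h, ∃ h', hHom G m s h * σ = σ * hHom G m s h' := by
      intro σ hσ h
      rw [Subgroup.mem_normalizer_iff''] at hσ
      obtain ⟨h', hh'⟩ := (hσ (hHom G m s h)).1 ⟨h, rfl⟩
      exact ⟨h', by rw [hh']; group⟩
    intro σ hσ
    obtain ⟨h, a, hha⟩ := normal_form hs2 hsm hsi hm σ (hn σ hσ) (hn _ (inv_mem hσ))
    exact ⟨_, ⟨h, rfl⟩, a, hha⟩

open scoped Polynomial

theorem partA {k : Type*} [Field k] {G Γ : Type*} [Group G] [Group Γ]
    (F : IntermediateField k (AlgebraicClosure k)) [FiniteDimensional k F] [IsGalois k F]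
    (e : Gal(F/k) ≃* Γ) (H : Subgroup Γ) (ρ : G →* Γ)
    (h1 : ∀ a, ρ a ∈ Subgroup.normalizer (H : Set Γ)) (h2 : ∀ a, ρ a ∈ H → a = 1)
    (h3 : ∀ σ ∈ Subgroup.normalizer (H : Set Γ), ∃ h ∈ H, ∃ a, σ = h * ρ a) :
    ∃ L : IntermediateField k (AlgebraicClosure k), FiniteDimensional k L ∧
      Nonempty ((L ≃ₐ[k] L) ≃* G) ∧ Module.finrank k L = H.index := by
  let H' : Subgroup Gal(F/k) := H.comap e.toMonoidHom
  let ρ' : G →* Gal(F/k) := e.symm.toMonoidHom.comp ρ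
  have hρ' : ∀ a, e (ρ' a) = ρ a := fun a => e.apply_symm_apply _
  have memH' : ∀ g, g ∈ H' ↔ e g ∈ H := fun g => Iff.rfl
  let L0 : IntermediateField k F := IntermediateField.fixedField H'
  have memL0 : ∀ x : F, x ∈ L0 ↔ ∀ g ∈ H', g x = x := by
    intro x; exact IntermediateField.mem_fixedField_iff H' x
  have hfix : ∀ g : Gal(F/k), (∀ x ∈ L0, g x = x) → g ∈ H' := by
    intro g hg
    rw [← IntermediateField.fixingSubgroup_fixedField H', IntermediateField.mem_fixingSubgroup_iff]
    exact hg
  have hmap : ∀ a, ∀ x ∈ L0, ρ' a x ∈ L0 := by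
    intro a x hx
    rw [memL0] at hx ⊢
    intro g hg
    have h4 : (ρ' a)⁻¹ * g * ρ' a ∈ H' := by
      rw [memH', map_mul, map_mul, map_inv, hρ']
      exact (Subgroup.mem_normalizer_iff''.1 (h1 a) _).1 hg
    have := hx _ h4
    rw [AlgEquiv.mul_apply, AlgEquiv.mul_apply, AlgEquiv.aut_inv, AlgEquiv.symm_apply_eq] at this
    exact this
  let f : G → (L0 ≃ₐ[k] L0) := fun a =>
    { toFun := fun x => ⟨ρ' a x, hmap a x x.2⟩
      invFun := fun x => ⟨ρ' a⁻¹ x, hmap a⁻¹ x x.2⟩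
      left_inv := fun x => by
        apply Subtype.ext
        change (ρ' a⁻¹ * ρ' a) x = x
        rw [← map_mul]; simp
      right_inv := fun x => by
        apply Subtype.ext
        change (ρ' a * ρ' a⁻¹) x = x
        rw [← map_mul]; simp
      map_mul' := fun x y => by apply Subtype.ext; simp
      map_add' := fun x y => by apply Subtype.ext; simp
      commutes' := fun r => by
        apply Subtype.ext
        exact (ρ' a).commutes r }
  have hf : ∀ a (x : L0), ((f a x : L0) : F) = ρ' a x := fun a x => rfl
  let φ : G →* (L0 ≃ₐ[k] L0) := MonoidHom.mk' f (by
    intro a b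
    ext1 x
    apply Subtype.ext
    rw [AlgEquiv.mul_apply, hf, hf, hf, map_mul, AlgEquiv.mul_apply])
  have hinj : Function.Injective φ := by
    rw [injective_iff_map_eq_one]
    intro a ha
    apply h2
    rw [← hρ', ← memH']
    apply hfix
    intro x hx
    have := congrArg (fun τ : (L0 ≃ₐ[k] L0) => ((τ ⟨x, hx⟩ : L0) : F)) ha
    exact this
  have hsurj : Function.Surjective φ := by
    intro τ
    let σ : Gal(F/k) := τ.liftNormal F
    have hσ : ∀ x : L0, σ x = (τ x : L0) := fun x => τ.liftNormal_commutes F x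
    have hσ' : ∀ x : L0, σ⁻¹ x = (τ⁻¹ x : L0) := fun x => by
      rw [AlgEquiv.aut_inv, AlgEquiv.symm_apply_eq, hσ, AlgEquiv.aut_inv, AlgEquiv.apply_symm_apply]
    have hfx : ∀ g ∈ H', ∀ x : L0, g x = x := fun g hg x => (memL0 x).1 x.2 g hg
    have hn : e σ ∈ Subgroup.normalizer (H : Set Γ) := by
      rw [Subgroup.mem_normalizer_iff]
      intro y
      obtain ⟨g, rfl⟩ := e.surjective y
      rw [← map_inv, ← map_mul, ← map_mul]
      change g ∈ H' ↔ σ * g * σ⁻¹ ∈ H'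
      constructor
      · intro hg
        apply hfix
        intro x hx
        lift x to L0 using hx
        rw [AlgEquiv.mul_apply, AlgEquiv.mul_apply, hσ', hfx g hg, ← hσ', ← AlgEquiv.mul_apply]
        simp
      · intro hg
        apply hfix
        intro x hx
        lift x to L0 using hx
        have := hfx _ hg (τ x)
        rw [AlgEquiv.mul_apply, AlgEquiv.mul_apply, ← hσ, ← AlgEquiv.mul_apply σ⁻¹ σ, inv_mul_cancel] at this
        simpa using this
    obtain ⟨h, hh, a, ha⟩ := h3 _ hn
    refine ⟨a, ?_⟩
    have hσe : σ = e.symm h * ρ' a := by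
      apply e.injective
      rw [ha, map_mul, hρ', e.apply_symm_apply]
    ext1 x
    apply Subtype.ext
    rw [← hσ, hσe, AlgEquiv.mul_apply]
    have : e.symm h ∈ H' := by rw [memH', e.apply_symm_apply]; exact hh
    exact (hfx _ this (f a x)).symm
  refine ⟨IntermediateField.lift L0, ?_, ?_, ?_⟩
  · exact LinearEquiv.finiteDimensional (IntermediateField.liftAlgEquiv L0).toLinearEquiv
  · exact ⟨(AlgEquiv.autCongr (IntermediateField.liftAlgEquiv L0).symm).trans
      (MulEquiv.ofBijective φ ⟨hinj, hsurj⟩).symm⟩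
  · rw [← (IntermediateField.liftAlgEquiv L0).toLinearEquiv.finrank_eq]
    rw [IntermediateField.finrank_eq_fixingSubgroup_index, IntermediateField.fixingSubgroup_fixedField]
    exact Subgroup.index_comap_of_surjective H e.surjective

lemma exists_u {k R J : Type*} [Field k] [Infinite k] [Field R] [Finite J] (c : k →+* R) {n : ℕ}
    (v : J → Fin n → R) :
    ∃ u : k, ∀ j, ∑ i : Fin n, c u ^ (i : ℕ) * v j i = 0 → ∀ i, v j i = 0 := by
  classical
  let p : J → R[X] := fun j => ∑ i, Polynomial.C (v j i) * Polynomial.X ^ (i : ℕ)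
  have hp : ∀ j i, (p j).coeff (i : Fin n) = v j i := by
    intro j i
    simp [p, Polynomial.finsetSum_coeff, Polynomial.coeff_X_pow, Fin.val_inj]
  have hfin : (⋃ j, {u : k | p j ≠ 0 ∧ (p j).eval (c u) = 0}).Finite := by
    apply Set.finite_iUnion
    intro j
    by_cases h0 : p j = 0
    · simp [h0]
    · apply Set.Finite.subset (Set.Finite.preimage c.injective.injOn ((p j).roots.toFinset.finite_toSet))
      intro u hu
      simp only [Set.mem_ofPred_eq] at hu
      simp [h0, hu.2]
  obtain ⟨u, hu⟩ := hfin.exists_notMem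
  refine ⟨u, fun j hj i => ?_⟩
  simp only [Set.mem_iUnion, not_exists, Set.mem_ofPred_eq, not_and] at hu
  have : p j = 0 := by
    by_contra h0
    refine hu j h0 ?_
    rw [← hj]
    simp only [p, Polynomial.eval_finsetSum, Polynomial.eval_mul, Polynomial.eval_C, Polynomial.eval_pow, Polynomial.eval_X]
    exact Finset.sum_congr rfl fun i _ => mul_comm _ _
  rw [← hp, this, Polynomial.coeff_zero]

theorem IsHilbertian.infinite {k : Type*} [Field k] (hk : IsHilbertian k) : Infinite k := by
  have := hk Polynomial.X (by rw [Polynomial.map_X]; exact Polynomial.irreducible_X)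
  exact Set.infinite_univ_iff.1 (this.mono (Set.subset_univ _))

theorem exists_irred {k : Type*} [Field k] (hk : IsHilbertian k) (d : ℕ) (hd : 2 ≤ d) :
    ∃ q : k[X], q.Monic ∧ q.natDegree = d ∧ Irreducible q ∧ q.Separable := by
  let r : k[X][X] := Polynomial.C Polynomial.X * Polynomial.X + Polynomial.C Polynomial.X
  have hr : r.degree < d := by
    apply lt_of_le_of_lt (Polynomial.degree_linear_le) 
    exact_mod_cast hd
  let P : k[X][X] := Polynomial.X ^ d - r
  have hP : P.Monic := Polynomial.monic_X_pow_sub hr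
  have hPd : P.degree = d := by
    simp only [P]
    rw [Polynomial.degree_sub_eq_left_of_degree_lt] <;> rw [Polynomial.degree_X_pow]
    exact hr
  have hPirr : Irreducible P := by
    have hprime : (Ideal.span {(Polynomial.X : k[X])}).IsPrime := by
      rw [Ideal.span_singleton_prime Polynomial.X_ne_zero]; exact Polynomial.prime_X
    refine Polynomial.irreducible_of_eisenstein_criterion hprime ?_ ?_ ?_ ?_ hP.isPrimitive
    · rw [hP.leadingCoeff, ← Ideal.ne_top_iff_one]; exact hprime.ne_top
    · intro n hn
      rw [hPd] at hn
      have hn : n < d := by exact_mod_cast hn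
      rw [Ideal.mem_span_singleton]
      simp only [P, r, Polynomial.coeff_sub, Polynomial.coeff_add, Polynomial.coeff_X_pow, Polynomial.coeff_C_mul, hn.ne, if_false, Polynomial.coeff_C]
      rw [zero_sub, dvd_neg]
      apply dvd_add (Dvd.intro _ rfl)
      split_ifs <;> simp
    · rw [hPd]; exact_mod_cast (by omega : 0 < d)
    · rw [Ideal.span_singleton_pow, Ideal.mem_span_singleton]
      have : P.coeff 0 = - Polynomial.X := by
        simp [P, r]; omega
      rw [this, dvd_neg]
      intro hdvd
      have := Polynomial.natDegree_le_of_dvd hdvd Polynomial.X_ne_zero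
      simp at this
  have hinf := hk P ((hP.irreducible_iff_irreducible_map_fraction_map (K := RatFunc k)).1 hPirr)
  obtain ⟨t, ht, ht0⟩ := (hinf.sdiff (Set.finite_singleton (0 : k))).nonempty
  simp only [Set.mem_singleton_iff] at ht0
  have hm := hP.map (Polynomial.evalRingHom t)
  refine ⟨_, hm, ?_, ht, ?_⟩
  · rw [hP.natDegree_map]; exact Polynomial.natDegree_eq_of_degree_eq_some hPd
  · rw [Polynomial.separable_iff_derivative_ne_zero ht]
    intro h0
    have := congrArg (fun p => Polynomial.coeff p 0) h0
    simp [P, r, Polynomial.coeff_derivative, Polynomial.coeff_X_pow] at this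
    split_ifs at this <;> first | omega | simp_all

section setup
variable {k : Type*} [Field k] {E : Type*} [Field E] [Algebra k[X] E] [FaithfulSMul k[X] E]

lemma exists_phi (a : k) : ∃ φ : integralClosure k[X] E →+* AlgebraicClosure k,
    φ.comp (algebraMap k[X] (integralClosure k[X] E)) =
      (algebraMap k (AlgebraicClosure k)).comp (Polynomial.evalRingHom a) := by
  let B := integralClosure k[X] E
  have hker : (RingHom.ker (Polynomial.evalRingHom a)).IsMaximal :=
    RingHom.ker_isMaximal_of_surjective _ (fun x => ⟨Polynomial.C x, by simp⟩)
  have hBinj : Function.Injective (algebraMap k[X] B) := by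
    have : Function.Injective (algebraMap k[X] E) := FaithfulSMul.algebraMap_injective _ _
    rw [IsScalarTower.algebraMap_eq k[X] B E, RingHom.coe_comp] at this
    exact Function.Injective.of_comp this
  obtain ⟨Q, hQ, hQk⟩ := Ideal.exists_ideal_over_maximal_of_isIntegral (S := B)
    (RingHom.ker (Polynomial.evalRingHom a)) (by
      rw [(RingHom.injective_iff_ker_eq_bot _).1 hBinj]; exact bot_le)
  let : Field (B ⧸ Q) := Ideal.Quotient.field Q
  let ι : k →+* (B ⧸ Q) := (Ideal.Quotient.mk Q).comp ((algebraMap k[X] B).comp Polynomial.C)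
  let : Algebra k (B ⧸ Q) := ι.toAlgebra
  have hfac : (Ideal.Quotient.mk Q).comp (algebraMap k[X] B) = ι.comp (Polynomial.evalRingHom a) := by
    apply Polynomial.ringHom_ext'
    · ext x; simp [ι]
    · simp only [ι, RingHom.comp_apply, Polynomial.coe_evalRingHom, Polynomial.eval_X]
      rw [Ideal.Quotient.eq, ← map_sub, ← Ideal.mem_comap, hQk, RingHom.mem_ker]
      simp
  have hIntg : Algebra.IsAlgebraic k (B ⧸ Q) := by
    refine ⟨fun y => ?_⟩
    obtain ⟨b, rfl⟩ := Ideal.Quotient.mk_surjective y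
    obtain ⟨p, hp, hpb⟩ := (integralClosure.isIntegral b : IsIntegral k[X] b)
    apply IsIntegral.isAlgebraic
    refine ⟨p.map (Polynomial.evalRingHom a), hp.map _, ?_⟩
    change Polynomial.eval₂ ι _ _ = 0
    rw [Polynomial.eval₂_map, ← hfac, ← Polynomial.hom_eval₂, hpb, map_zero]
  let ψ : (B ⧸ Q) →ₐ[k] AlgebraicClosure k := IsAlgClosed.lift
  refine ⟨ψ.toRingHom.comp (Ideal.Quotient.mk Q), ?_⟩
  rw [RingHom.comp_assoc, hfac, ← RingHom.comp_assoc]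
  congr 1
  exact ψ.comp_algebraMap
end setup

section setup2
variable {k : Type*} [Field k] {E : Type*} [Field E] [Algebra k[X] E]
  [Algebra (RatFunc k) E] [IsScalarTower k[X] (RatFunc k) E]

lemma decomp [Infinite k] [FiniteDimensional (RatFunc k) E] [IsGalois (RatFunc k) E] {n : ℕ}
    (x : Fin n → integralClosure k[X] E)
    (hperm : ∀ g : Gal(E/RatFunc k), ∃ π : Perm (Fin n), ∀ i, g (x i) = x (π i))
    (a : k) (φ : integralClosure k[X] E →+* AlgebraicClosure k)
    (hφ : φ.comp (algebraMap k[X] (integralClosure k[X] E)) =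
      (algebraMap k (AlgebraicClosure k)).comp (Polynomial.evalRingHom a))
    (τ : AlgebraicClosure k ≃ₐ[k] AlgebraicClosure k) :
    ∃ (g : Gal(E/RatFunc k)) (π : Perm (Fin n)), (∀ i, g (x i) = x (π i)) ∧
      ∀ i, φ (x (π i)) = τ (φ (x i)) := by
  classical
  let B := integralClosure k[X] E
  let c : k →+* B := (algebraMap k[X] B).comp Polynomial.C
  have hc : ∀ u, φ (c u) = algebraMap k _ u := by
    intro u
    have := RingHom.congr_fun hφ (Polynomial.C u)
    change φ (algebraMap k[X] _ (Polynomial.C u)) = _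
    simpa using this
  obtain ⟨u, hu⟩ := exists_u (algebraMap k (AlgebraicClosure k))
    (fun (π : Perm (Fin n)) i => φ (x (π i)) - τ (φ (x i)))
  let b : B := ∑ i : Fin n, c u ^ (i : ℕ) * x i
  have : IsFractionRing B E :=
    IsIntegralClosure.isFractionRing_of_finite_extension k[X] (RatFunc k) E B
  let _ := IsIntegralClosure.MulSemiringAction k[X] (RatFunc k) E B
  have hinv : Algebra.IsInvariant k[X] B Gal(E/RatFunc k) :=
    Algebra.isInvariant_of_isGalois k[X] (RatFunc k) E B
  have hact : ∀ (g : Gal(E/RatFunc k)) (y : B), ((g • y : B) : E) = g y := fun g y =>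
    algebraMap_galRestrict_apply k[X] g y
  let _ : Fintype Gal(E/RatFunc k) := Fintype.ofFinite _
  obtain ⟨q, hq⟩ := (Polynomial.mem_lifts _).1
    (Algebra.IsInvariant.charpoly_mem_lifts k[X] B Gal(E/RatFunc k) b)
  have hroot : Polynomial.eval₂ (algebraMap k[X] B) b q = 0 := by
    rw [← Polynomial.eval_map, hq, MulSemiringAction.eval_charpoly]
  have h1 : Polynomial.eval₂ (φ.comp (algebraMap k[X] B)) (τ (φ b)) q = 0 := by
    have h2 : (τ : AlgebraicClosure k →+* AlgebraicClosure k).comp (φ.comp (algebraMap k[X] B)) = φ.comp (algebraMap k[X] B) := by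
      rw [hφ]
      ext x <;> simp
    have h3 := congrArg (fun z => τ (φ z)) hroot
    simp only [map_zero] at h3
    rw [Polynomial.hom_eval₂] at h3
    have h4 := Polynomial.hom_eval₂ q (φ.comp (algebraMap k[X] B)) (τ : AlgebraicClosure k →+* AlgebraicClosure k) (φ b)
    rw [h2] at h4
    exact h4.symm.trans h3
  rw [← Polynomial.eval₂_map, hq, MulSemiringAction.charpoly_eq, Polynomial.eval₂_finsetProd,
    Finset.prod_eq_zero_iff] at h1
  obtain ⟨g, -, hg⟩ := h1
  rw [Polynomial.eval₂_sub, Polynomial.eval₂_X, Polynomial.eval₂_C, sub_eq_zero] at hg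
  obtain ⟨π, hπ⟩ := hperm g
  refine ⟨g, π, hπ, ?_⟩
  have hgb : g • b = ∑ i : Fin n, c u ^ (i : ℕ) * x (π i) := by
    apply Subtype.ext
    rw [hact]
    simp only [b, AddSubmonoidClass.coe_finsetSum, map_sum, map_mul, map_pow, MulMemClass.coe_mul, SubmonoidClass.coe_pow, hπ]
    have : g (c u : E) = c u := by
      have : (c u : E) = algebraMap (RatFunc k) E (algebraMap k[X] (RatFunc k) (Polynomial.C u)) := by
        rw [← IsScalarTower.algebraMap_apply]; rfl
      rw [this, AlgEquiv.commutes]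
    simp only [this]
  intro i
  rw [← sub_eq_zero]
  refine hu π ?_ i
  rw [hgb] at hg
  simp only [b, map_sum, map_mul, map_pow, hc, AlgEquiv.commutes] at hg
  simp only [mul_sub, Finset.sum_sub_distrib, hg, sub_self]
end setup2

lemma conj_of_root {k : Type*} [Field k] (q : k[X]) (hq : Irreducible q) (hm : q.Monic)
    (y z : AlgebraicClosure k) (hy : Polynomial.aeval y q = 0) (hz : Polynomial.aeval z q = 0) :
    ∃ τ : AlgebraicClosure k ≃ₐ[k] AlgebraicClosure k, τ y = z := by
  apply minpoly.exists_algEquiv_of_root' (Algebra.IsAlgebraic.isAlgebraic y)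
  rw [← minpoly.eq_of_irreducible_of_monic hq hy hm]
  exact hz

/-- group criterion -/
lemma eq_top_criterion {n : ℕ} (D : Subgroup (Perm (Fin n))) (htr : ∀ i j, ∃ π ∈ D, π i = j)
    (i0 : Fin n) (h2 : ∀ i j, i ≠ i0 → j ≠ i0 → ∃ π ∈ D, π i0 = i0 ∧ π i = j)
    (hsw : ∃ i j, i ≠ j ∧ swap i j ∈ D) : D = ⊤ := by
  obtain ⟨i, j, hij, hs⟩ := hsw
  have h2t : MulAction.IsMultiplyPretransitive D (Fin n) 2 := by
    rw [MulAction.is_two_pretransitive_iff]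
    intro a b c d hab hcd
    obtain ⟨p, hp, hpa⟩ := htr a i0
    obtain ⟨q, hq, hqc⟩ := htr c i0
    obtain ⟨r, hr, hr0, hrb⟩ := h2 (p b) (q d) (by rw [← hpa]; simpa using hab.symm)
      (by rw [← hqc]; simpa using hcd.symm)
    refine ⟨⟨q⁻¹ * r * p, mul_mem (mul_mem (inv_mem hq) hr) hp⟩, ?_, ?_⟩
    · change (q⁻¹ * r * p) a = c
      simp only [Perm.mul_apply, hpa, hr0]
      rw [Perm.inv_eq_iff_eq, hqc]
    · change (q⁻¹ * r * p) b = d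
      simp [hrb]
  exact Equiv.Perm.subgroup_eq_top_of_isPreprimitive_of_isSwap_mem
    (MulAction.isPreprimitive_of_is_two_pretransitive h2t) _ ⟨i, j, hij, rfl⟩ hs

/-- the interpolation -/
lemma exists_f {k : Type*} [Field k] [Infinite k] (n : ℕ) (h1 h2 h3 : k[X])
    (m1 : h1.Monic) (m2 : h2.Monic) (m3 : h3.Monic)
    (d1 : h1.natDegree = n) (d2 : h2.natDegree = n) (d3 : h3.natDegree = n) :
    ∃ f : k[X][X], f.Monic ∧ f.natDegree = n ∧ ∃ a1 a2 a3 : k,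
      f.map (Polynomial.evalRingHom a1) = h1 ∧ f.map (Polynomial.evalRingHom a2) = h2 ∧
      f.map (Polynomial.evalRingHom a3) = h3 := by
  classical
  obtain ⟨a, ha⟩ := Infinite.exists_notMem_finset ({0, 1} : Finset k)
  simp only [Finset.mem_insert, Finset.mem_singleton, not_or] at ha
  have ha1 : a - 1 ≠ 0 := sub_ne_zero.2 ha.2
  have key : ∀ h : k[X], h.Monic → h.natDegree = n → (h - h1).degree < h1.degree := by
    intro h hm hd
    rw [← neg_sub, Polynomial.degree_neg]
    exact Polynomial.degree_sub_lt_left (by rw [Polynomial.degree_eq_natDegree m1.ne_zero,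
      Polynomial.degree_eq_natDegree hm.ne_zero, d1, hd]) m1.ne_zero (by rw [m1.leadingCoeff, hm.leadingCoeff])
  let s : k[X] := h3 - h1 - Polynomial.C a * (h2 - h1)
  have hs : s.degree < h1.degree := by
    apply (Polynomial.degree_sub_le _ _).trans_lt
    apply max_lt (key _ m3 d3)
    rw [Polynomial.degree_C_mul ha.1]
    exact key _ m2 d2
  let r : k[X][X] := Polynomial.C Polynomial.X * (h2 - h1).map Polynomial.C +
    Polynomial.C (Polynomial.X * (Polynomial.X - 1) * Polynomial.C ((a * (a - 1))⁻¹)) * s.map Polynomial.C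
  have hmapd : ∀ p : k[X], (p.map (Polynomial.C : k →+* k[X])).degree = p.degree := fun p =>
    Polynomial.degree_map_eq_of_injective Polynomial.C_injective p
  have hcm : ∀ (z : k[X]) (p : k[X][X]), (Polynomial.C z * p).degree ≤ p.degree := by
    intro z p
    apply (Polynomial.degree_mul_le _ _).trans
    calc _ ≤ 0 + p.degree := by gcongr; exact Polynomial.degree_C_le
      _ = _ := zero_add _
  have hr : r.degree < (h1.map (Polynomial.C : k →+* k[X])).degree := by
    apply (Polynomial.degree_add_le _ _).trans_lt
    rw [hmapd]
    apply max_lt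
    · exact (hcm _ _).trans_lt (by rw [hmapd]; exact key _ m2 d2)
    · exact (hcm _ _).trans_lt (by rw [hmapd]; exact hs)
  have hcomp : ∀ (t : k) (p : k[X]), (p.map (Polynomial.C : k →+* k[X])).map (Polynomial.evalRingHom t) = p := by
    intro t p
    rw [Polynomial.map_map]
    have : (Polynomial.evalRingHom t).comp (Polynomial.C : k →+* k[X]) = RingHom.id k :=
      RingHom.ext fun x => by simp
    rw [this, Polynomial.map_id]
  refine ⟨h1.map Polynomial.C + r, (m1.map _).add_of_left hr, ?_, 0, 1, a, ?_, ?_, ?_⟩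
  · rw [Polynomial.natDegree_add_eq_left_of_degree_lt hr, m1.natDegree_map, d1]
  · simp [r, hcomp, -Polynomial.map_sub]
  · simp only [r, hcomp, Polynomial.map_add, Polynomial.map_mul, Polynomial.map_C, Polynomial.coe_evalRingHom, Polynomial.eval_mul, Polynomial.eval_X, Polynomial.eval_sub, Polynomial.eval_one, Polynomial.eval_C]
    simp
  · have : a * (a - 1) * (a * (a - 1))⁻¹ = 1 := mul_inv_cancel₀ (mul_ne_zero ha.1 ha1)
    simp only [r, hcomp, Polynomial.map_add, Polynomial.map_mul, Polynomial.map_C, Polynomial.coe_evalRingHom, Polynomial.eval_mul, Polynomial.eval_X, Polynomial.eval_sub, Polynomial.eval_one, Polynomial.eval_C]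
    rw [this]
    simp [s]

lemma perm_of_aut {M : Type*} [CommRing M] [IsDomain M] {n : ℕ} (x : Fin n → M)
    (hx : Function.Injective x) (g : M →+* M) (hg : Function.Injective g)
    (h : (∏ i, (Polynomial.X - Polynomial.C (x i))).map g =
      ∏ i, (Polynomial.X - Polynomial.C (x i))) :
    ∃ π : Perm (Fin n), ∀ i, g (x i) = x (π i) := by
  have h1 : ∀ i, ∃ j, g (x i) = x j := by
    intro i
    have h2 : (∏ i, (Polynomial.X - Polynomial.C (x i))).eval (g (x i)) = 0 := by
      rw [← h, Polynomial.eval_map, Polynomial.eval₂_at_apply, Polynomial.eval_prod,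
        Finset.prod_eq_zero (Finset.mem_univ i) (by simp), map_zero]
    rw [Polynomial.eval_prod, Finset.prod_eq_zero_iff] at h2
    obtain ⟨j, -, hj⟩ := h2
    exact ⟨j, by simpa [sub_eq_zero] using hj⟩
  choose π hπ using h1
  have hinj : Function.Injective π := by
    intro i j hij
    apply hx
    apply hg
    rw [hπ, hπ, hij]
  exact ⟨Equiv.ofBijective π (Finite.injective_iff_bijective.1 hinj), hπ⟩

lemma galois_step {k : Type*} [Field k] {n : ℕ} (y : Fin n → AlgebraicClosure k)
    (hy : Function.Injective y) (p : k[X])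
    (hp : p.map (algebraMap k (AlgebraicClosure k)) = ∏ i, (Polynomial.X - Polynomial.C (y i)))
    (u : k) (Q : k[X]) (hQ : Irreducible Q) (hQm : Q.Monic) (hQd : n.factorial ≤ Q.natDegree)
    (hQu : Polynomial.aeval (∑ i : Fin n, algebraMap k (AlgebraicClosure k) u ^ (i : ℕ) * y i) Q = 0) :
    ∃ F : IntermediateField k (AlgebraicClosure k), FiniteDimensional k F ∧ IsGalois k F ∧
      Nonempty (Gal(F/k) ≃* Perm (Fin n)) := by
  classical
  have hspl : (p.map (algebraMap k (AlgebraicClosure k))).Splits := IsAlgClosed.splits _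
  have hp0 : p ≠ 0 := by
    rintro rfl
    rw [Polynomial.map_zero] at hp
    exact (Polynomial.monic_prod_of_monic _ _ (fun i _ => Polynomial.monic_X_sub_C (y i))).ne_zero hp.symm
  have hsep : p.Separable := by
    rw [← Polynomial.separable_map (algebraMap k (AlgebraicClosure k)), hp]
    exact Polynomial.separable_prod_X_sub_C_iff.2 hy
  have hroot : p.rootSet (AlgebraicClosure k) = Set.range y := by
    ext z
    rw [Polynomial.mem_rootSet, ← Polynomial.eval_map_algebraMap, hp, Polynomial.eval_prod, Finset.prod_eq_zero_iff]
    simp only [Set.mem_range, Polynomial.eval_sub, Polynomial.eval_X, Polynomial.eval_C, sub_eq_zero,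
      Finset.mem_univ, true_and, ne_eq, hp0, not_false_eq_true, eq_comm]
  let F := IntermediateField.adjoin k (p.rootSet (AlgebraicClosure k))
  have hF : p.IsSplittingField k F := IntermediateField.adjoin_rootSet_isSplittingField hspl
  have hfd : FiniteDimensional k F := Polynomial.IsSplittingField.finiteDimensional F p
  have hgal : IsGalois k F := IsGalois.of_separable_splitting_field hsep
  refine ⟨F, hfd, hgal, ?_⟩
  have hyF : ∀ i, y i ∈ F := fun i => IntermediateField.subset_adjoin _ _ (by rw [hroot]; exact ⟨i, rfl⟩)
  let z : Fin n → F := fun i => ⟨y i, hyF i⟩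
  have hz : Function.Injective z := fun i j h => hy (congrArg Subtype.val h)
  have hpz : p.map (algebraMap k F) = ∏ i, (Polynomial.X - Polynomial.C (z i)) := by
    apply Polynomial.map_injective (algebraMap F (AlgebraicClosure k)) (algebraMap F _).injective
    rw [Polynomial.map_map, ← IsScalarTower.algebraMap_eq, hp, Polynomial.map_prod]
    simp only [Polynomial.map_sub, Polynomial.map_X, Polynomial.map_C]
    rfl
  have hperm : ∀ g : Gal(F/k), ∃ π : Perm (Fin n), ∀ i, g (z i) = z (π i) := by
    intro g
    refine perm_of_aut z hz (g : F →+* F) g.injective ?_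
    rw [← hpz, Polynomial.map_map]
    congr 1
    ext x; simp
  choose π hπ using hperm
  let ψ : Gal(F/k) →* Perm (Fin n) := MonoidHom.mk' π (by
    intro a b
    ext i
    congr 1
    apply hz
    rw [← hπ, AlgEquiv.mul_apply, hπ b, hπ a]
    rfl)
  have hψ : Function.Injective ψ := by
    intro a b hab
    have hab' : π a = π b := hab
    have h1 : (a : F →ₐ[k] F) = b := by
      have := hF.adjoin_rootSet
      apply AlgHom.ext_of_adjoin_eq_top this
      intro w hw
      rw [Polynomial.mem_rootSet, ← Polynomial.eval_map_algebraMap, hpz, Polynomial.eval_prod, Finset.prod_eq_zero_iff] at hw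
      obtain ⟨-, i, -, hi⟩ := hw
      have : w = z i := by simpa [sub_eq_zero] using hi
      rw [this]
      change a (z i) = b (z i)
      rw [hπ, hπ, hab']
    exact AlgEquiv.ext fun w => DFunLike.congr_fun h1 w
  have hcard : Nat.card (Perm (Fin n)) ≤ Nat.card Gal(F/k) := by
    rw [IsGalois.card_aut_eq_finrank, Nat.card_eq_fintype_card, Fintype.card_perm, Fintype.card_fin]
    refine hQd.trans ?_
    let w : F := ∑ i : Fin n, algebraMap k F u ^ (i : ℕ) * z i
    have hw : Polynomial.aeval w Q = 0 := by
      apply (algebraMap F (AlgebraicClosure k)).injective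
      rw [map_zero, ← Polynomial.aeval_algebraMap_apply, ← hQu]
      congr 2
      simp only [w, map_sum, map_mul, map_pow, ← IsScalarTower.algebraMap_apply]
      rfl
    rw [minpoly.eq_of_irreducible_of_monic hQ hw hQm]
    exact minpoly.natDegree_le w
  exact ⟨MulEquiv.ofBijective ψ (hψ.bijective_of_nat_card_le hcard)⟩

section setup3
variable {k : Type*} [Field k] {E : Type*} [Field E] [Algebra k[X] E]

lemma spec_prod {n : ℕ} (f : k[X][X]) (x : Fin n → integralClosure k[X] E)
    (hf : f.map (algebraMap k[X] (integralClosure k[X] E)) =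
      ∏ i, (Polynomial.X - Polynomial.C (x i)))
    (a : k) (φ : integralClosure k[X] E →+* AlgebraicClosure k)
    (hφ : φ.comp (algebraMap k[X] (integralClosure k[X] E)) =
      (algebraMap k (AlgebraicClosure k)).comp (Polynomial.evalRingHom a)) :
    (f.map (Polynomial.evalRingHom a)).map (algebraMap k (AlgebraicClosure k)) =
      ∏ i, (Polynomial.X - Polynomial.C (φ (x i))) := by
  rw [Polynomial.map_map, ← hφ, ← Polynomial.map_map, hf, Polynomial.map_prod]
  simp

variable [Algebra (RatFunc k) E] [IsScalarTower k[X] (RatFunc k) E]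

set_option maxHeartbeats 2000000 in
lemma spec_step (hk : IsHilbertian k) {n : ℕ} (f : k[X][X]) (x : Fin n → integralClosure k[X] E)
    [FaithfulSMul k[X] E] [FiniteDimensional (RatFunc k) E]
    (hf : f.map (algebraMap k[X] (integralClosure k[X] E)) =
      ∏ i, (Polynomial.X - Polynomial.C (x i)))
    (hx : Function.Injective x)
    (hD : ∀ π : Perm (Fin n), ∃ g : Gal(E/RatFunc k), ∀ i, g (x i) = x (π i)) :
    ∃ F : IntermediateField k (AlgebraicClosure k), FiniteDimensional k F ∧ IsGalois k F ∧
      Nonempty (Gal(F/k) ≃* Perm (Fin n)) := by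
  classical
  have : Infinite k := IsHilbertian.infinite hk
  let B := integralClosure k[X] E
  let c : k →+* E := (algebraMap k[X] E).comp Polynomial.C
  obtain ⟨u, hu⟩ := exists_u c
    (fun (π : Perm (Fin n) × Perm (Fin n)) i => (x (π.1 i) : E) - x (π.2 i))
  let θ : B := ∑ i : Fin n, algebraMap k[X] B (Polynomial.C u) ^ (i : ℕ) * x i
  have hIntg : ∀ b : B, IsIntegral k[X] b := fun b => Algebra.IsIntegral.isIntegral b
  let P := minpoly k[X] θ
  have hPm : P.Monic := minpoly.monic (hIntg θ)
  have hP : minpoly (RatFunc k) (θ : E) = P.map (algebraMap k[X] (RatFunc k)) :=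
    minpoly.isIntegrallyClosed_eq_field_fractions (RatFunc k) E (hIntg θ)
  have hirr : Irreducible (P.map (algebraMap k[X] (RatFunc k))) := by
    rw [← hP]
    exact minpoly.irreducible (Algebra.IsIntegral.isIntegral _)
  choose g hg using hD
  have hgθ : ∀ π, g π (θ : E) = ∑ i : Fin n, c u ^ (i : ℕ) * (x (π i) : E) := by
    intro π
    have h1 : ((algebraMap k[X] B (Polynomial.C u) : B) : E) = c u := rfl
    have h2 : g π (c u) = c u := by
      have : c u = algebraMap (RatFunc k) E (algebraMap k[X] (RatFunc k) (Polynomial.C u)) := by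
        rw [← IsScalarTower.algebraMap_apply]; rfl
      rw [this, AlgEquiv.commutes]
    simp only [θ, AddSubmonoidClass.coe_finsetSum, map_sum, map_mul, map_pow, MulMemClass.coe_mul,
      SubmonoidClass.coe_pow, hg, h1, h2]
  have hinj : Function.Injective (fun π => g π (θ : E)) := by
    intro π π' h
    simp only [hgθ] at h
    have := hu (π, π') (by simp only [mul_sub, Finset.sum_sub_distrib, h, sub_self])
    ext i
    congr 1
    exact hx (Subtype.ext (sub_eq_zero.1 (this i)))
  have hdeg : n.factorial ≤ P.natDegree := by
    have h1 : (minpoly (RatFunc k) (θ : E)).natDegree = P.natDegree := by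
      rw [hP, hPm.natDegree_map]
    rw [← h1, ← (minpoly.monic (Algebra.IsIntegral.isIntegral (R := RatFunc k) (θ : E))).natDegree_map (algebraMap (RatFunc k) E)]
    have h2 : (Finset.univ.image (fun π => g π (θ : E))).card = n.factorial := by
      rw [Finset.card_image_of_injective _ hinj, Finset.card_univ, Fintype.card_perm, Fintype.card_fin]
    rw [← h2]
    apply Polynomial.card_le_degree_of_subset_roots
    intro w hw
    simp only [Finset.mem_val, Finset.mem_image, Finset.mem_univ, true_and] at hw
    obtain ⟨π, rfl⟩ := hw
    rw [Polynomial.mem_roots', Polynomial.IsRoot.def, Polynomial.eval_map_algebraMap]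
    refine ⟨((minpoly.monic (Algebra.IsIntegral.isIntegral (R := RatFunc k) (θ : E))).map _).ne_zero, ?_⟩
    rw [Polynomial.aeval_algHom_apply, minpoly.aeval, map_zero]
  let δ : B := ∏ p ∈ (Finset.univ : Finset (Fin n)).offDiag, (x p.1 - x p.2)
  have hδ : δ ≠ 0 := by
    rw [Finset.prod_ne_zero_iff]
    intro p hp
    rw [Finset.mem_offDiag] at hp
    exact sub_ne_zero.2 fun h => hp.2.2 (hx h)
  have hc0 : (minpoly k[X] δ).coeff 0 ≠ 0 := by
    intro h0
    have h1 : minpoly (RatFunc k) (δ : E) = (minpoly k[X] δ).map (algebraMap k[X] (RatFunc k)) :=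
      minpoly.isIntegrallyClosed_eq_field_fractions (RatFunc k) E (hIntg δ)
    refine minpoly.coeff_zero_ne_zero (A := RatFunc k) (x := (δ : E))
      (Algebra.IsIntegral.isIntegral _) (fun h => hδ (Subtype.ext h)) ?_
    rw [h1, Polynomial.coeff_map, h0, map_zero]
  obtain ⟨t, ht, ht'⟩ := ((hk P hirr).sdiff
    (((minpoly k[X] δ).coeff 0).roots.toFinset.finite_toSet)).nonempty
  obtain ⟨φ, hφ⟩ := exists_phi (E := E) t
  have hev : ∀ (b : B) (q : k[X][X]), Polynomial.aeval b q = 0 →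
      Polynomial.aeval (φ b) (q.map (Polynomial.evalRingHom t)) = 0 := by
    intro b q h
    rw [Polynomial.aeval_def, Polynomial.eval₂_map, ← hφ, ← Polynomial.hom_eval₂,
      ← Polynomial.aeval_def, h, map_zero]
  have hφδ : φ δ ≠ 0 := by
    intro h0
    have := hev δ _ (minpoly.aeval _ _)
    rw [h0, Polynomial.aeval_def, Polynomial.eval₂_at_zero, Polynomial.coeff_map] at this
    apply ht'
    simpa [hc0] using this
  have hy : Function.Injective (fun i => φ (x i)) := by
    intro i j hij
    by_contra hne
    apply hφδ
    simp only [δ, map_prod, map_sub]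
    exact Finset.prod_eq_zero (i := (i, j)) (by simp [hne]) (sub_eq_zero.2 hij)
  refine galois_step (fun i => φ (x i)) hy (f.map (Polynomial.evalRingHom t))
    (spec_prod f x hf t φ hφ) u (P.map (Polynomial.evalRingHom t)) ht (hPm.map _)
    (by rw [hPm.natDegree_map]; exact hdeg) ?_
  have hφu : φ (algebraMap k[X] B (Polynomial.C u)) = algebraMap k _ u := by
    have := RingHom.congr_fun hφ (Polynomial.C u)
    simpa using this
  rw [← hev θ P (minpoly.aeval _ _)]
  congr 2
  simp only [θ, map_sum, map_mul, map_pow, hφu]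
end setup3

lemma exists_roots {M : Type*} [Field M] (p : M[X]) (hm : p.Monic) (hs : p.Splits) (n : ℕ)
    (hn : p.natDegree = n) : ∃ x : Fin n → M, p = ∏ i, (Polynomial.X - Polynomial.C (x i)) := by
  subst hn
  have h1 := hs.eq_prod_roots_of_monic hm
  have h2 : p.roots.toList.length = p.natDegree := by
    rw [Multiset.length_toList, hs.natDegree_eq_card_roots]
  refine ⟨fun i => p.roots.toList.get (i.cast h2.symm), ?_⟩
  conv_lhs => rw [h1, ← Multiset.coe_toList p.roots, Multiset.map_coe, Multiset.prod_coe]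
  generalize p.roots.toList = l at h2
  generalize p.natDegree = d at h2
  subst h2
  rw [← Fin.prod_univ_getElem]
  refine Fintype.prod_equiv (finCongr (by simp)) _ _ fun i => ?_
  simp

section setup4
variable {k : Type*} [Field k] {E : Type*} [Field E] [Algebra k[X] E]
  [Algebra (RatFunc k) E] [IsScalarTower k[X] (RatFunc k) E]

set_option maxHeartbeats 1000000 in
lemma Sn_step (hk : IsHilbertian k) {n : ℕ} (f : k[X][X]) (x : Fin n → integralClosure k[X] E)
    [FaithfulSMul k[X] E]
    [(f.map (algebraMap k[X] (RatFunc k))).IsSplittingField (RatFunc k) E]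
    (hf : f.map (algebraMap k[X] (integralClosure k[X] E)) =
      ∏ i, (Polynomial.X - Polynomial.C (x i)))
    (a1 a2 a3 : k) (q1 q2 q3 : k[X]) (C : Finset k)
    (e1 : f.map (Polynomial.evalRingHom a1) = q1)
    (e2 : f.map (Polynomial.evalRingHom a2) = Polynomial.X * q2)
    (e3 : f.map (Polynomial.evalRingHom a3) = q3 * ∏ c ∈ C, (Polynomial.X - Polynomial.C c))
    (i1 : Irreducible q1) (i2 : Irreducible q2) (i3 : Irreducible q3)
    (m1 : q1.Monic) (m2 : q2.Monic) (m3 : q3.Monic) (d3 : q3.natDegree = 2) (s1 : q1.Separable)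
    (s2 : (Polynomial.X * q2).Separable) (s3 : (q3 * ∏ c ∈ C, (Polynomial.X - Polynomial.C c)).Separable) :
    ∃ F : IntermediateField k (AlgebraicClosure k), FiniteDimensional k F ∧ IsGalois k F ∧
      Nonempty (Gal(F/k) ≃* Perm (Fin n)) := by
  classical
  have : Infinite k := IsHilbertian.infinite hk
  let B := integralClosure k[X] E
  have hinj : ∀ (a : k) (φ : B →+* AlgebraicClosure k), φ.comp (algebraMap k[X] B) =
      (algebraMap k (AlgebraicClosure k)).comp (Polynomial.evalRingHom a) →
      (f.map (Polynomial.evalRingHom a)).Separable → Function.Injective (fun i => φ (x i)) := by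
    intro a φ hφ hs
    rw [← Polynomial.separable_map (algebraMap k (AlgebraicClosure k)), spec_prod f x hf a φ hφ] at hs
    exact Polynomial.separable_prod_X_sub_C_iff.1 hs
  have hroot : ∀ (a : k) (φ : B →+* AlgebraicClosure k), φ.comp (algebraMap k[X] B) =
      (algebraMap k (AlgebraicClosure k)).comp (Polynomial.evalRingHom a) → ∀ z,
      Polynomial.aeval z (f.map (Polynomial.evalRingHom a)) = 0 ↔ ∃ i, φ (x i) = z := by
    intro a φ hφ z
    rw [← Polynomial.eval_map_algebraMap, spec_prod f x hf a φ hφ, Polynomial.eval_prod, Finset.prod_eq_zero_iff]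
    simp only [Polynomial.eval_sub, Polynomial.eval_X, Polynomial.eval_C, sub_eq_zero,
      Finset.mem_univ, true_and]
    exact exists_congr fun i => eq_comm
  obtain ⟨φ1, hφ1⟩ := exists_phi (E := E) a1
  obtain ⟨φ2, hφ2⟩ := exists_phi (E := E) a2
  obtain ⟨φ3, hφ3⟩ := exists_phi (E := E) a3
  have j1 := hinj a1 φ1 hφ1 (by rw [e1]; exact s1)
  have j2 := hinj a2 φ2 hφ2 (by rw [e2]; exact s2)
  have j3 := hinj a3 φ3 hφ3 (by rw [e3]; exact s3)
  have r1 := hroot a1 φ1 hφ1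
  have r2 := hroot a2 φ2 hφ2
  have r3 := hroot a3 φ3 hφ3
  rw [e1] at r1
  rw [e2] at r2
  rw [e3] at r3
  have hx : Function.Injective x := fun i j h => j1 (congrArg φ1 h)
  have hxE : Function.Injective (fun i => (x i : E)) := fun i j h => hx (Subtype.ext h)
  have hfE : (f.map (algebraMap k[X] (RatFunc k))).map (algebraMap (RatFunc k) E) =
      ∏ i, (Polynomial.X - Polynomial.C (x i : E)) := by
    rw [Polynomial.map_map, ← IsScalarTower.algebraMap_eq, IsScalarTower.algebraMap_eq k[X] B E,
      ← Polynomial.map_map, hf, Polynomial.map_prod]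
    simp only [Polynomial.map_sub, Polynomial.map_X, Polynomial.map_C]
    rfl
  have hfd : FiniteDimensional (RatFunc k) E :=
    Polynomial.IsSplittingField.finiteDimensional E (f.map (algebraMap k[X] (RatFunc k)))
  have hgal : IsGalois (RatFunc k) E := by
    apply IsGalois.of_separable_splitting_field (p := f.map (algebraMap k[X] (RatFunc k)))
    rw [← Polynomial.separable_map (algebraMap (RatFunc k) E), hfE]
    exact Polynomial.separable_prod_X_sub_C_iff.2 hxE
  have hperm : ∀ g : Gal(E/RatFunc k), ∃ π : Perm (Fin n), ∀ i, g (x i) = x (π i) := by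
    intro g
    refine perm_of_aut (fun i => (x i : E)) hxE (g : E →+* E) g.injective ?_
    rw [← hfE, Polynomial.map_map]
    congr 1
    exact RingHom.ext fun z => g.commutes z
  let D : Subgroup (Perm (Fin n)) :=
    { carrier := {π | ∃ g : Gal(E/RatFunc k), ∀ i, g (x i) = x (π i)}
      one_mem' := ⟨1, fun i => rfl⟩
      mul_mem' := by
        rintro π π' ⟨g, hg⟩ ⟨g', hg'⟩
        exact ⟨g * g', fun i => by rw [AlgEquiv.mul_apply, hg', hg]; rfl⟩
      inv_mem' := by
        rintro π ⟨g, hg⟩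
        refine ⟨g⁻¹, fun i => ?_⟩
        apply g.injective
        rw [hg, ← AlgEquiv.mul_apply]
        simp }
  have hdec : ∀ (a : k) (φ : B →+* AlgebraicClosure k), φ.comp (algebraMap k[X] B) =
      (algebraMap k (AlgebraicClosure k)).comp (Polynomial.evalRingHom a) → 
      ∀ τ : AlgebraicClosure k ≃ₐ[k] AlgebraicClosure k,
      ∃ π ∈ D, ∀ i, φ (x (π i)) = τ (φ (x i)) := by
    intro a φ hφ τ
    obtain ⟨g, π, h1, h2⟩ := decomp x hperm a φ hφ τ
    exact ⟨π, ⟨g, h1⟩, h2⟩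
  have htr : ∀ i j, ∃ π ∈ D, π i = j := by
    intro i j
    obtain ⟨τ, hτ⟩ := conj_of_root q1 i1 m1 (φ1 (x i)) (φ1 (x j)) ((r1 _).2 ⟨i, rfl⟩)
      ((r1 _).2 ⟨j, rfl⟩)
    obtain ⟨π, hπ, h⟩ := hdec a1 φ1 hφ1 τ
    exact ⟨π, hπ, j1 ((h i).trans hτ)⟩
  obtain ⟨i0, hi0⟩ := (r2 0).1 (by simp)
  have h2 : ∀ i j, i ≠ i0 → j ≠ i0 → ∃ π ∈ D, π i0 = i0 ∧ π i = j := by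
    have hq : ∀ i, i ≠ i0 → Polynomial.aeval (φ2 (x i)) q2 = 0 := by
      intro i hi
      have h := (r2 _).2 ⟨i, rfl⟩
      rw [map_mul, Polynomial.aeval_X, mul_eq_zero] at h
      exact h.resolve_left fun h => hi (j2 (h.trans hi0.symm))
    intro i j hi hj
    obtain ⟨τ, hτ⟩ := conj_of_root q2 i2 m2 (φ2 (x i)) (φ2 (x j)) (hq i hi) (hq j hj)
    obtain ⟨π, hπ, h⟩ := hdec a2 φ2 hφ2 τ
    refine ⟨π, hπ, j2 ((h i0).trans ?_), j2 ((h i).trans hτ)⟩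
    simp only [hi0, map_zero]
  have hsw : ∃ i j, i ≠ j ∧ swap i j ∈ D := by
    have s3' : q3.Separable := s3.of_mul_left
    obtain ⟨z, hz⟩ := exists_roots (q3.map (algebraMap k (AlgebraicClosure k))) (m3.map _)
      (IsAlgClosed.splits _) 2 (by rw [m3.natDegree_map, d3])
    rw [Fin.prod_univ_two] at hz
    have hzr : ∀ w, Polynomial.aeval w q3 = 0 ↔ w = z 0 ∨ w = z 1 := by
      intro w
      rw [← Polynomial.eval_map_algebraMap, hz]
      simp [sub_eq_zero]
    have hne : z 0 ≠ z 1 := by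
      intro h
      rw [← Polynomial.separable_map (algebraMap k (AlgebraicClosure k)), hz, h] at s3'
      have := Polynomial.isUnit_of_self_mul_dvd_separable s3' dvd_rfl
      exact Polynomial.not_isUnit_X_sub_C _ this
    obtain ⟨i, hi⟩ := (r3 (z 0)).1 (by rw [map_mul, (hzr _).2 (Or.inl rfl), zero_mul])
    obtain ⟨j, hj⟩ := (r3 (z 1)).1 (by rw [map_mul, (hzr _).2 (Or.inr rfl), zero_mul])
    obtain ⟨τ, hτ⟩ := conj_of_root q3 i3 m3 (z 0) (z 1) ((hzr _).2 (Or.inl rfl))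
      ((hzr _).2 (Or.inr rfl))
    have hτ' : τ (z 1) = z 0 := by
      have h : Polynomial.aeval (τ (z 1)) q3 = 0 := by
        rw [Polynomial.aeval_algHom_apply, (hzr _).2 (Or.inr rfl), map_zero]
      refine ((hzr _).1 h).resolve_right fun h' => hne ?_
      exact τ.injective (hτ.trans h'.symm)
    obtain ⟨π, hπ, h⟩ := hdec a3 φ3 hφ3 τ
    have hij : i ≠ j := by
      rintro rfl
      exact hne (hi.symm.trans hj)
    refine ⟨i, j, hij, ?_⟩
    have : swap i j = π := by
      refine Equiv.ext fun l => ?_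
      by_cases hli : l = i
      · subst hli
        rw [swap_apply_left]
        apply j3
        change φ3 (x j) = φ3 (x (π l))
        rw [h, hi, hj, hτ]
      by_cases hlj : l = j
      · subst hlj
        rw [swap_apply_right]
        apply j3
        change φ3 (x i) = φ3 (x (π l))
        rw [h, hi, hj, hτ']
      rw [swap_apply_of_ne_of_ne hli hlj]
      apply j3
      change φ3 (x l) = φ3 (x (π l))
      rw [h]
      have hl := (r3 _).2 ⟨l, rfl⟩
      rw [map_mul, mul_eq_zero, hzr] at hl
      rcases hl with (hl | hl) | hl
      · exact absurd (j3 (hl.trans hi.symm)) hli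
      · exact absurd (j3 (hl.trans hj.symm)) hlj
      · rw [map_prod, Finset.prod_eq_zero_iff] at hl
        obtain ⟨c, -, hc⟩ := hl
        rw [map_sub, Polynomial.aeval_X, Polynomial.aeval_C, sub_eq_zero] at hc
        rw [hc, AlgEquiv.commutes]
    rw [this]
    exact hπ
  have hD := eq_top_criterion D htr i0 h2 hsw
  refine spec_step hk f x hf hx fun π => ?_
  have : π ∈ D := by rw [hD]; trivial
  exact this
end setup4

theorem exists_Sn {k : Type*} [Field k] (hk : IsHilbertian k) (n : ℕ) (hn : 3 ≤ n) :
    ∃ F : IntermediateField k (AlgebraicClosure k), FiniteDimensional k F ∧ IsGalois k F ∧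
      Nonempty (Gal(F/k) ≃* Perm (Fin n)) := by
  classical
  have : Infinite k := IsHilbertian.infinite hk
  obtain ⟨q1, m1, d1, i1, s1⟩ := exists_irred hk n (by omega)
  obtain ⟨q2, m2, d2, i2, s2⟩ := exists_irred hk (n - 1) (by omega)
  obtain ⟨q3, m3, d3, i3, s3⟩ := exists_irred hk 2 le_rfl
  obtain ⟨C, hC⟩ := Infinite.exists_subset_card_eq k (n - 2)
  have mp : (∏ c ∈ C, (Polynomial.X - Polynomial.C c) : k[X]).Monic :=
    Polynomial.monic_prod_of_monic _ _ fun c _ => Polynomial.monic_X_sub_C c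
  have dp : (∏ c ∈ C, (Polynomial.X - Polynomial.C c) : k[X]).natDegree = n - 2 := by
    rw [Polynomial.natDegree_prod_of_monic _ _ fun c _ => Polynomial.monic_X_sub_C c]
    simp [hC]
  have sp : (∏ c ∈ C, (Polynomial.X - Polynomial.C c) : k[X]).Separable :=
    Polynomial.separable_prod_X_sub_C_iff'.2 fun x _ y _ h => h
  have hnd : ∀ (q : k[X]) (c : k), Irreducible q → 2 ≤ q.natDegree →
      ¬ q ∣ Polynomial.X - Polynomial.C c := by
    intro q c _ hd h
    have := Polynomial.natDegree_le_of_dvd h (Polynomial.X_sub_C_ne_zero c)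
    rw [Polynomial.natDegree_X_sub_C] at this
    omega
  have S2 : (Polynomial.X * q2).Separable := by
    refine Polynomial.separable_X.mul s2 (IsCoprime.symm ?_)
    rw [i2.coprime_iff_not_dvd]
    have := hnd q2 0 i2 (by omega)
    simpa using this
  have S3 : (q3 * ∏ c ∈ C, (Polynomial.X - Polynomial.C c)).Separable := by
    refine s3.mul sp ?_
    rw [i3.coprime_iff_not_dvd, i3.prime.dvd_finsetProd_iff]
    rintro ⟨c, -, hc⟩
    exact hnd q3 c i3 (by omega) hc
  obtain ⟨f, fm, fd, a1, a2, a3, e1, e2, e3⟩ := exists_f n q1 (Polynomial.X * q2)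
    (q3 * ∏ c ∈ C, (Polynomial.X - Polynomial.C c)) m1 (Polynomial.monic_X.mul m2) (m3.mul mp) d1
    (by rw [Polynomial.monic_X.natDegree_mul m2, Polynomial.natDegree_X, d2]; omega)
    (by rw [m3.natDegree_mul mp, d3, dp]; omega)
  let E := (f.map (algebraMap k[X] (RatFunc k))).SplittingField
  have hfs : FaithfulSMul k[X] E := by
    rw [faithfulSMul_iff_algebraMap_injective, IsScalarTower.algebraMap_eq k[X] (RatFunc k) E]
    exact (algebraMap (RatFunc k) E).injective.comp (IsFractionRing.injective k[X] (RatFunc k))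
  obtain ⟨x, hx⟩ := exists_roots (f.map (algebraMap k[X] E)) (fm.map _)
    (by
      rw [IsScalarTower.algebraMap_eq k[X] (RatFunc k) E, ← Polynomial.map_map]
      exact Polynomial.SplittingField.splits _) n (by rw [fm.natDegree_map, fd])
  have hxi : ∀ i, IsIntegral k[X] (x i) := by
    intro i
    refine ⟨f, fm, ?_⟩
    rw [← Polynomial.eval_map, hx, Polynomial.eval_prod]
    exact Finset.prod_eq_zero (Finset.mem_univ i) (by simp)
  refine Sn_step (E := E) hk f (fun i => ⟨x i, hxi i⟩) ?_ a1 a2 a3 q1 q2 q3 C e1 e2 e3 i1 i2 i3 m1 m2 m3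
    d3 s1 S2 S3
  apply Polynomial.map_injective (algebraMap (integralClosure k[X] E) E) Subtype.val_injective
  rw [Polynomial.map_map, ← IsScalarTower.algebraMap_eq, hx, Polynomial.map_prod]
  simp only [Polynomial.map_sub, Polynomial.map_X, Polynomial.map_C]
  rfl

end AutHilb

/-- Main theorem: over a Hilbertian field `k`, every finite group occurs as the
automorphism group of infinitely many distinct finite extensions of `k`. -/
theorem aut_group_over_hilbertian (k : Type*) [Field k] (hk : IsHilbertian k)
    (G : Type*) [Group G] [Finite G] :
    {L : IntermediateField k (AlgebraicClosure k) |
      FiniteDimensional k L ∧ Nonempty ((L ≃ₐ[k] L) ≃* G)}.Infinite := by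
  classical
  refine Set.Infinite.of_image (fun L : IntermediateField k (AlgebraicClosure k) => Module.finrank k L) (Set.infinite_of_not_bddAbove ?_)
  rintro ⟨N, hN⟩
  obtain ⟨S, hS, H, ρ, hc, hi, h1, h2, h3⟩ := AutHilb.exists_perm_grp G (N + 1)
  obtain ⟨F, hfd, hgal, ⟨e⟩⟩ := AutHilb.exists_Sn hk (Nat.card S) hc
  obtain ⟨L, hL, hL', hr⟩ := AutHilb.partA F
    (e.trans (Equiv.permCongrHom (Finite.equivFin S).symm)) H ρ h1 h2 h3
  have := hN ⟨L, ⟨hL, hL'⟩, rfl⟩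
  simp only [hr] at this
  omega
end

section
/- Let k be a Hilbertian field and G a finite group. Then there exists a finite separable extension E of the rational function field k(T) such that Aut(E/k(T)) is isomorphic to G and [E·k̄ : k̄(T)] ≥ 2, where k̄ is an algebraic closure of k. -/
open Polynomial IntermediateField

set_option synthInstance.maxHeartbeats 400000

namespace HilbAux

noncomputable def fpoly {k : Type*} [Field k] (s : Finset k) : k[X] :=
  X ^ 2 * ∏ a ∈ s, (X - C a)

noncomputable def qpoly {k : Type*} [Field k] (s : Finset k) : (RatFunc k)[X] :=
  (fpoly s).map (algebraMap k (RatFunc k)) - C RatFunc.X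

universe u
section
variable {k : Type u} [Field k] (s : Finset k)

lemma fpoly_monic : (fpoly s).Monic :=
  (monic_X_pow 2).mul (monic_prod_of_monic _ _ fun a _ => monic_X_sub_C a)

lemma fpoly_natDegree : (fpoly s).natDegree = s.card + 2 := by
  unfold fpoly
  rw [(monic_X_pow 2).natDegree_mul (monic_prod_of_monic _ _ fun a _ => monic_X_sub_C a),
    natDegree_X_pow, natDegree_prod_of_monic _ _ (fun a _ => monic_X_sub_C a)]
  simp [add_comm]

lemma fpoly_eval {a : k} (ha : a ∈ s) : (fpoly s).eval a = 0 := by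
  simp [fpoly, eval_prod, Finset.prod_eq_zero_iff, sub_eq_zero, ha]

lemma fpoly_eval_eq_zero {a : k} (h : (fpoly s).eval a = 0) : a = 0 ∨ a ∈ s := by
  simp only [fpoly, eval_mul, eval_pow, eval_X, eval_prod, eval_sub, eval_C, mul_eq_zero,
    Finset.prod_eq_zero_iff, sub_eq_zero] at h
  rcases h with h | ⟨b, hb, rfl⟩
  · left; simpa using h
  · right; exact hb

lemma fpoly_deriv_eval (h0 : (0 : k) ∉ s) {a : k} (ha : a ∈ s) :
    (fpoly s).derivative.eval a ≠ 0 := by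
  classical
  unfold fpoly
  rw [← Finset.mul_prod_erase _ _ ha]
  have ha0 : a ≠ 0 := fun h => h0 (h ▸ ha)
  simp [derivative_mul, eval_prod, Finset.prod_eq_zero_iff, ha0, sub_eq_zero]

lemma natDeg_sub {R : Type*} [CommRing R] [Nontrivial R] (φ : k →+* R) (t : R) :
    ((fpoly s).map φ - C t).natDegree = s.card + 2 ∧ ((fpoly s).map φ - C t).Monic := by
  have hm := (fpoly_monic s).map φ
  have hd : ((fpoly s).map φ).natDegree = s.card + 2 := by
    rw [(fpoly_monic s).natDegree_map, fpoly_natDegree]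
  refine ⟨by rw [natDegree_sub_C, hd], hm.sub_of_left ?_⟩
  refine lt_of_le_of_lt degree_C_le ?_
  rw [degree_eq_natDegree hm.ne_zero, hd]
  exact_mod_cast Nat.succ_pos _

lemma qpoly_natDegree : (qpoly s).natDegree = s.card + 2 := (natDeg_sub s _ _).1
lemma qpoly_monic : (qpoly s).Monic := (natDeg_sub s _ _).2

lemma qpoly_irreducible : Irreducible (qpoly s) := by
  have h1 : qpoly s = ((fpoly s).map C - C X : k[X][X]).map (algebraMap k[X] (RatFunc k)) := by
    simp [qpoly, Polynomial.map_map]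
  rw [h1, ← Polynomial.Monic.irreducible_iff_irreducible_map_fraction_map (natDeg_sub s _ _).2]
  rw [← MulEquiv.irreducible_iff (Bivariate.swap (R := k)).toMulEquiv]
  have : (Bivariate.swap (R := k)) ((fpoly s).map C - C X) = - (X - C (fpoly s)) := by
    rw [map_sub, Bivariate.swap_map_C, Bivariate.swap_X]; ring
  change Irreducible ((Bivariate.swap (R := k)) ((fpoly s).map C - C X))
  rw [this]
  exact ((Associated.refl (X - C (fpoly s))).neg_left.irreducible_iff).2 (irreducible_X_sub_C (fpoly s))

lemma qpoly_separable (h0 : (0 : k) ∉ s) (hs : s.Nonempty) : (qpoly s).Separable := by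
  rw [separable_iff_derivative_ne_zero (qpoly_irreducible s)]
  obtain ⟨a, ha⟩ := hs
  intro h
  simp only [qpoly, derivative_sub, derivative_C, sub_zero, derivative_map] at h
  rw [Polynomial.map_eq_zero] at h
  exact fpoly_deriv_eval s h0 ha (by simp [h])

noncomputable def rpoly : (PowerSeries k)[X] := (fpoly s).map PowerSeries.C - C PowerSeries.X

lemma rpoly_root {a : k} (h0 : (0 : k) ∉ s) (ha : a ∈ s) :
    ∃ b : PowerSeries k, (rpoly s).IsRoot b ∧ PowerSeries.constantCoeff b = a := by
  have h := HenselianRing.is_henselian (I := Ideal.span {(PowerSeries.X : PowerSeries k)})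
    (rpoly s) (natDeg_sub s _ _).2 (PowerSeries.C a) ?_ ?_
  · obtain ⟨b, hb, hb'⟩ := h
    refine ⟨b, hb, ?_⟩
    rw [Ideal.mem_span_singleton, PowerSeries.X_dvd_iff, map_sub] at hb'
    simpa [sub_eq_zero] using hb'
  · simp only [rpoly, eval_sub, eval_C, eval_map, eval₂_at_apply, fpoly_eval s ha]
    simp
  · apply IsUnit.map
    simp only [rpoly, derivative_sub, derivative_C, sub_zero, derivative_map,
      eval_map, eval₂_at_apply]
    exact (IsUnit.mk0 _ (fpoly_deriv_eval s h0 ha)).map _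

lemma rpoly_const {u : PowerSeries k} (hu : (rpoly s).IsRoot u) :
    (fpoly s).eval (PowerSeries.constantCoeff u) = 0 := by
  have := congrArg (PowerSeries.constantCoeff) hu
  simp only [rpoly, eval_sub, eval_C, eval_map, map_sub, PowerSeries.constantCoeff_X,
    sub_zero, map_zero] at this
  rw [hom_eval₂] at this
  have h2 : (PowerSeries.constantCoeff (R := k)).comp PowerSeries.C = RingHom.id k := by
    ext; simp
  rw [h2] at this
  exact this

lemma rpoly_deriv_unit (h0 : (0 : k) ∉ s) {u : PowerSeries k}
    (hu : PowerSeries.constantCoeff u ∈ s) : IsUnit ((rpoly s).derivative.eval u) := by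
  rw [PowerSeries.isUnit_iff_constantCoeff]
  simp only [rpoly, derivative_sub, derivative_C, sub_zero, derivative_map, eval_map]
  rw [hom_eval₂]
  have h2 : (PowerSeries.constantCoeff (R := k)).comp PowerSeries.C = RingHom.id k := by
    ext; simp
  rw [h2]
  exact IsUnit.mk0 _ (fpoly_deriv_eval s h0 hu)

lemma rpoly_const_ne_zero {u : PowerSeries k} (hu : (rpoly s).IsRoot u) :
    PowerSeries.constantCoeff u ≠ 0 := by
  intro h
  rw [← PowerSeries.X_dvd_iff] at h
  obtain ⟨v, rfl⟩ := h
  simp only [rpoly, fpoly, IsRoot, Polynomial.map_mul, Polynomial.map_pow, map_X, eval_sub,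
    eval_mul, eval_pow, eval_X, eval_C, sub_eq_zero] at hu
  have := congrArg (PowerSeries.coeff 1) hu
  rw [PowerSeries.coeff_one_X, mul_pow, mul_assoc, PowerSeries.coeff_X_pow_mul'] at this
  simp at this

lemma rpoly_inj (h0 : (0 : k) ∉ s) {u v : PowerSeries k} (hu : (rpoly s).IsRoot u)
    (hv : (rpoly s).IsRoot v)
    (h : PowerSeries.constantCoeff u = PowerSeries.constantCoeff v) : u = v := by
  have h1 : PowerSeries.constantCoeff u ∈ s :=
    (fpoly_eval_eq_zero s (rpoly_const s hu)).resolve_left (rpoly_const_ne_zero s hu)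
  refine IsLocalRing.eq_of_eval_eq_zero_of_not_isUnit_sub hu hv ?_ (rpoly_deriv_unit s h0 h1)
  rw [PowerSeries.isUnit_iff_constantCoeff]
  simp [h]

noncomputable local instance instAlgLaurent : Algebra (RatFunc k) (LaurentSeries k) :=
  RatFunc.liftAlgebra k (LaurentSeries k)

lemma rpoly_map : (rpoly s).map (algebraMap (PowerSeries k) (LaurentSeries k)) =
    (qpoly s).map (algebraMap (RatFunc k) (LaurentSeries k)) := by
  simp only [rpoly, qpoly, Polynomial.map_sub, Polynomial.map_map, map_C]
  congr 1
  · congr 1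
    apply RingHom.ext
    intro a
    have h := RatFunc.coe_coe (F := k) (C a)
    simp only [RingHom.comp_apply]
    rw [Polynomial.coe_C, RatFunc.coePolynomial] at h
    rw [show algebraMap k (RatFunc k) a = algebraMap k[X] (RatFunc k) (C a) by simp]
    exact h
  · have h := RatFunc.coe_coe (F := k) X
    rw [Polynomial.coe_X, RatFunc.coePolynomial, RatFunc.algebraMap_X] at h
    exact congrArg C h

/-- A root of `qpoly` in the Laurent series field comes from a power series root. -/
lemma qpoly_root_laurent {u : LaurentSeries k}
    (hu : ((qpoly s).map (algebraMap (RatFunc k) (LaurentSeries k))).IsRoot u) :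
    ∃ w : PowerSeries k, (rpoly s).IsRoot w ∧ algebraMap _ (LaurentSeries k) w = u := by
  rw [← rpoly_map] at hu
  have hint : IsIntegral (PowerSeries k) u :=
    ⟨rpoly s, (natDeg_sub s _ _).2, by rw [← eval_map]; exact hu⟩
  obtain ⟨w, rfl⟩ := IsIntegrallyClosed.isIntegral_iff.1 hint
  refine ⟨w, ?_, rfl⟩
  have : algebraMap (PowerSeries k) (LaurentSeries k) ((rpoly s).eval w) = 0 := by
    rw [← eval₂_at_apply, ← eval_map]; exact hu
  exact (map_eq_zero_iff _ (IsFractionRing.injective (PowerSeries k) (LaurentSeries k))).1 this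

open scoped Classical in
lemma laurent_roots_card (h0 : (0 : k) ∉ s) :
    ((qpoly s).map (algebraMap (RatFunc k) (LaurentSeries k))).roots.toFinset.card = s.card := by
  classical
  choose! b hb hb' using fun a (ha : a ∈ s) => rpoly_root s h0 ha
  have hinj := IsFractionRing.injective (PowerSeries k) (LaurentSeries k)
  have hne : (qpoly s).map (algebraMap (RatFunc k) (LaurentSeries k)) ≠ 0 :=
    ((qpoly_monic s).map _).ne_zero
  symm
  refine Finset.card_bij (fun a _ => algebraMap (PowerSeries k) (LaurentSeries k) (b a)) ?_ ?_ ?_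
  · intro a ha
    rw [Multiset.mem_toFinset, mem_roots hne, ← rpoly_map]
    exact (hb a ha).map
  · intro a ha c hc h
    rw [← hb' a ha, ← hb' c hc, hinj h]
  · intro u hu
    rw [Multiset.mem_toFinset, mem_roots hne] at hu
    obtain ⟨w, hw, rfl⟩ := qpoly_root_laurent s hu
    have h1 : PowerSeries.constantCoeff w ∈ s :=
      (fpoly_eval_eq_zero s (rpoly_const s hw)).resolve_left (rpoly_const_ne_zero s hw)
    refine ⟨_, h1, ?_⟩
    rw [rpoly_inj s h0 (hb _ h1) hw (hb' _ h1)]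

open scoped Classical in
lemma exists_swap (h0 : (0 : k) ∉ s) (hs : s.Nonempty)
    [Fact (((qpoly s).map (algebraMap (RatFunc k) (AlgebraicClosure (LaurentSeries k)))).Splits)] :
    ∃ g : (qpoly s).Gal,
      (Gal.galActionHom (qpoly s) (AlgebraicClosure (LaurentSeries k)) g).IsSwap := by
  classical
  set L := LaurentSeries k
  set A := AlgebraicClosure L
  set q := qpoly s with hq
  set S : Finset A := (q.map (algebraMap (RatFunc k) A)).roots.toFinset with hS
  set S0 : Finset A := (q.map (algebraMap (RatFunc k) L)).roots.toFinset.image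
    (algebraMap L A) with hS0
  have hsep : q.Separable := qpoly_separable s h0 hs
  have hneL : q.map (algebraMap (RatFunc k) L) ≠ 0 := ((qpoly_monic s).map _).ne_zero
  have hneA : q.map (algebraMap (RatFunc k) A) ≠ 0 := ((qpoly_monic s).map _).ne_zero
  have hmap : q.map (algebraMap (RatFunc k) A) =
      (q.map (algebraMap (RatFunc k) L)).map (algebraMap L A) := by
    rw [Polynomial.map_map, ← IsScalarTower.algebraMap_eq]
  have hsub : S0 ⊆ S := by
    intro x hx
    simp only [hS0, Finset.mem_image, Multiset.mem_toFinset, mem_roots hneL] at hx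
    obtain ⟨y, hy, rfl⟩ := hx
    rw [hS, Multiset.mem_toFinset, mem_roots hneA, hmap]
    exact hy.map
  have hcS0 : S0.card = s.card := by
    rw [hS0, Finset.card_image_of_injective _ (algebraMap L A).injective]
    exact laurent_roots_card s h0
  have hcS : S.card = s.card + 2 := by
    have h1 : (q.map (algebraMap (RatFunc k) A)).roots.Nodup := nodup_roots hsep.map
    rw [hS, Multiset.toFinset_card_of_nodup h1,
      ← Polynomial.Splits.natDegree_eq_card_roots (Fact.out), natDegree_map, hq, qpoly_natDegree]
  have hmemS0 : ∀ x ∈ S, x ∉ S0 → x ∉ (⊥ : Subalgebra L A) := by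
    rintro x hx hx' hx''
    rw [Algebra.mem_bot] at hx''
    obtain ⟨y, rfl⟩ := hx''
    apply hx'
    rw [hS, Multiset.mem_toFinset, mem_roots hneA, hmap] at hx
    rw [hS0]
    refine Finset.mem_image_of_mem _ ?_
    rw [Multiset.mem_toFinset, mem_roots hneL]
    exact hx.of_map (algebraMap L A).injective
  have hd : (S \ S0).card = 2 := by rw [Finset.card_sdiff_of_subset hsub]; omega
  obtain ⟨u, v, huv, hSuv⟩ := Finset.card_eq_two.1 hd
  have hu : u ∈ S \ S0 := by rw [hSuv]; simp
  have hv : v ∈ S \ S0 := by rw [hSuv]; simp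
  rw [Finset.mem_sdiff] at hu hv
  have hroot : ∀ x, x ∈ S ↔ aeval x (q.map (algebraMap (RatFunc k) L)) = 0 := by
    intro x
    rw [hS, Multiset.mem_toFinset, mem_roots hneA, hmap, IsRoot, eval_map_algebraMap]
  have hus : IsSeparable L u := by
    refine Separable.of_dvd (hsep.map (f := algebraMap (RatFunc k) L)) ?_
    exact minpoly.dvd _ _ ((hroot u).1 hu.1)
  obtain ⟨w, huw, hw⟩ := (notMem_iff_exists_ne_and_isConjRoot hus
    (IsAlgClosed.splits _)).1 (hmemS0 u hu.1 hu.2)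
  obtain ⟨σ, hσ⟩ := hw.symm.exists_algEquiv
  have hσS : ∀ x ∈ S, σ x ∈ S := by
    intro x hx
    rw [hroot] at hx ⊢
    have := Polynomial.aeval_algHom_apply σ.toAlgHom x (q.map (algebraMap (RatFunc k) L))
    rw [hx, map_zero] at this
    exact this
  have hσ0 : ∀ x ∈ S0, σ x = x := by
    intro x hx
    rw [hS0, Finset.mem_image] at hx
    obtain ⟨y, -, rfl⟩ := hx
    exact σ.commutes y
  have hσd : ∀ x ∈ S \ S0, σ x ∈ S \ S0 := by
    intro x hx
    rw [Finset.mem_sdiff] at hx ⊢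
    refine ⟨hσS x hx.1, fun h => hx.2 ?_⟩
    have := σ.injective (hσ0 _ h)
    rwa [this] at h
  have hσu : σ u = v := by
    have := hσd u (Finset.mem_sdiff.2 hu)
    rw [hSuv] at this
    simp only [Finset.mem_insert, Finset.mem_singleton] at this
    rcases this with h | h
    · exact absurd (h.symm.trans hσ) huw
    · exact h
  have hσv : σ v = u := by
    have := hσd v (Finset.mem_sdiff.2 hv)
    rw [hSuv] at this
    simp only [Finset.mem_insert, Finset.mem_singleton] at this
    rcases this with h | h
    · exact h
    · exact absurd (σ.injective (hσu.trans h.symm)) huv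
  have hmemR : ∀ x, x ∈ q.rootSet A ↔ x ∈ S := by
    intro x
    rw [mem_rootSet, hroot, aeval_map_algebraMap]
    exact ⟨fun h => h.2, fun h => ⟨(qpoly_monic s).ne_zero, h⟩⟩
  refine ⟨Gal.restrict q A (σ.restrictScalars (RatFunc k)), ⟨u, (hmemR u).2 hu.1⟩,
    ⟨v, (hmemR v).2 hv.1⟩, fun h => huv (congrArg Subtype.val h), ?_⟩
  apply Equiv.ext
  intro x
  apply Subtype.ext
  rw [Gal.galActionHom_restrict, AlgEquiv.restrictScalars_apply]
  by_cases hx0 : (x : A) ∈ S0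
  · rw [hσ0 _ hx0, Equiv.swap_apply_of_ne_of_ne]
    · rintro rfl; exact hu.2 hx0
    · rintro rfl; exact hv.2 hx0
  · have : (x : A) ∈ S \ S0 := Finset.mem_sdiff.2 ⟨(hmemR _).1 x.2, hx0⟩
    rw [hSuv] at this
    simp only [Finset.mem_insert, Finset.mem_singleton] at this
    rcases this with h | h
    · have : x = ⟨u, (hmemR u).2 hu.1⟩ := Subtype.ext h
      rw [this, Equiv.swap_apply_left]; exact hσu
    · have : x = ⟨v, (hmemR v).2 hv.1⟩ := Subtype.ext h
      rw [this, Equiv.swap_apply_right]; exact hσv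

/-- The Galois group of `qpoly s` is the full symmetric group when the degree is prime. -/
lemma gal_mulEquiv (h0 : (0 : k) ∉ s) (hs : s.Nonempty) (hp : (s.card + 2).Prime) :
    ∃ (α : Type u) (_ : Fintype α), Fintype.card α = s.card + 2 ∧
      Nonempty ((qpoly s).Gal ≃* Equiv.Perm α) := by
  classical
  have : Fact (((qpoly s).map (algebraMap (RatFunc k)
    (AlgebraicClosure (LaurentSeries k)))).Splits) := ⟨IsAlgClosed.splits _⟩
  obtain ⟨g, hg⟩ := exists_swap s h0 hs
  set A := AlgebraicClosure (LaurentSeries k)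
  have hcard : Fintype.card ((qpoly s).rootSet A) = s.card + 2 := by
    rw [card_rootSet_eq_natDegree (qpoly_separable s h0 hs) (IsAlgClosed.splits _),
      qpoly_natDegree]
  have htr := Gal.galAction_isPretransitive (p := qpoly s) (E := A) (qpoly_irreducible s)
  set φ := Gal.galActionHom (qpoly s) A with hφ
  have htr' : MulAction.IsPretransitive φ.range ((qpoly s).rootSet A) := by
    refine ⟨fun x y => ?_⟩
    obtain ⟨g, hg⟩ := htr.exists_smul_eq x y
    exact ⟨⟨φ g, g, rfl⟩, hg⟩
  have hprim : MulAction.IsPreprimitive φ.range ((qpoly s).rootSet A) :=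
    MulAction.IsPreprimitive.of_prime_card (by rw [Nat.card_eq_fintype_card, hcard]; exact hp)
  have htop : φ.range = ⊤ :=
    Equiv.Perm.subgroup_eq_top_of_isPreprimitive_of_isSwap_mem hprim (φ g) hg ⟨g, rfl⟩
  exact ⟨(qpoly s).rootSet A, inferInstance, hcard,
    ⟨MulEquiv.ofBijective φ ⟨Gal.galActionHom_injective _ _, MonoidHom.range_eq_top.1 htop⟩⟩⟩

lemma not_mem_const {x : AlgebraicClosure (RatFunc k)} (hx : aeval x (qpoly s) = 0) :
    x ∉ adjoin (RatFunc k) {z : AlgebraicClosure (RatFunc k) | IsIntegral k z} := by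
  intro hxD
  let C0 : IntermediateField k (AlgebraicClosure (RatFunc k)) := algebraicClosure k (AlgebraicClosure (RatFunc k))
  set t : (AlgebraicClosure (RatFunc k)) := algebraMap (RatFunc k) (AlgebraicClosure (RatFunc k)) RatFunc.X with ht
  have htr : Transcendental k t := by
    have h1 : Transcendental k (RatFunc.X : RatFunc k) := RatFunc.transcendental_X
    rw [ht]
    intro h
    exact h1 ((isAlgebraic_algebraMap_iff (algebraMap (RatFunc k) (AlgebraicClosure (RatFunc k))).injective).1 h)
  have htr' : Transcendental C0 t := htr.extendScalars C0
  have hle : (adjoin (RatFunc k) {z : (AlgebraicClosure (RatFunc k)) | IsIntegral k z}).toSubfield ≤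
      (adjoin C0 {t}).toSubfield := by
    rw [adjoin_toSubfield, Subfield.closure_le]
    rintro z (⟨y, rfl⟩ | hz)
    · change algebraMap (RatFunc k) (AlgebraicClosure (RatFunc k)) y ∈ adjoin C0 {t}
      have hpol : ∀ p : k[X], algebraMap (RatFunc k) (AlgebraicClosure (RatFunc k)) (algebraMap k[X] (RatFunc k) p) ∈
          adjoin C0 {t} := by
        intro p
        have h1 : algebraMap (RatFunc k) (AlgebraicClosure (RatFunc k)) (algebraMap k[X] (RatFunc k) p) =
            aeval t (p.map (algebraMap k C0)) := by
          rw [aeval_map_algebraMap, ht, aeval_algebraMap_apply]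
          congr 1
          rw [← RatFunc.algebraMap_X, aeval_algebraMap_apply, aeval_X_left_apply]
        rw [h1]
        exact (mem_adjoin_simple_iff _ _).2 ⟨p.map (algebraMap k C0), 1, by simp⟩
      induction y using RatFunc.induction_on with
      | f p q hq =>
        rw [map_div₀]
        exact div_mem (hpol p) (hpol q)
    · change z ∈ adjoin C0 {t}
      have : z ∈ C0 := mem_algebraicClosure_iff'.2 hz
      exact (adjoin C0 {t}).algebraMap_mem ⟨z, this⟩
  have hxt : x ∈ adjoin C0 {t} := hle hxD
  let e := RatFunc.algEquivOfTranscendental (K := C0) t htr'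
  set y : RatFunc C0 := e.symm ⟨x, hxt⟩ with hy
  have hfx : aeval x (fpoly s) = t := by
    simp only [qpoly, map_sub, aeval_C, aeval_map_algebraMap, sub_eq_zero] at hx
    exact hx
  have hfy : aeval y (fpoly s) = RatFunc.X := by
    apply e.injective
    apply Subtype.ext
    have h1 : e RatFunc.X = ⟨t, mem_adjoin_simple_self _ _⟩ := by
      apply Subtype.ext
      simp [e, RatFunc.algEquivOfTranscendental_apply]
    rw [h1]
    have h2 : (aeval y ((fpoly s).map (algebraMap k C0))) = aeval y (fpoly s) := by
      rw [aeval_map_algebraMap]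
    rw [← h2]
    have h3 := Polynomial.aeval_algHom_apply e.toAlgHom y ((fpoly s).map (algebraMap k C0))
    have h4 : e.toAlgHom y = ⟨x, hxt⟩ := e.apply_symm_apply _
    rw [h4] at h3
    have h5 := congrArg Subtype.val h3
    refine h5.symm.trans ?_
    have h6 := Polynomial.aeval_algHom_apply (adjoin C0 {t}).val ⟨x, hxt⟩
      ((fpoly s).map (algebraMap k C0))
    refine h6.symm.trans ?_
    rw [aeval_map_algebraMap]
    exact hfx
  have hint : IsIntegral C0[X] y := by
    refine ⟨(fpoly s).map (algebraMap k C0[X]) - C X, (natDeg_sub s _ _).2, ?_⟩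
    rw [eval₂_sub, eval₂_C, eval₂_map, ← IsScalarTower.algebraMap_eq, RatFunc.algebraMap_X,
      ← hfy, aeval_def, sub_self]
  obtain ⟨p, hp⟩ := IsIntegrallyClosed.isIntegral_iff.1 hint
  have h7 : ((fpoly s).map (algebraMap k C0)).comp p = X := by
    apply IsFractionRing.injective C0[X] (RatFunc C0)
    rw [RatFunc.algebraMap_X, ← hfy, ← hp, aeval_algebraMap_apply, comp, eval₂_map]
    rfl
  have h8 := congrArg natDegree h7
  rw [natDegree_comp, (fpoly_monic s).natDegree_map, fpoly_natDegree, natDegree_X] at h8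
  have := Nat.eq_one_of_mul_eq_one_right h8
  omega

end
end HilbAux

namespace HilbAux
universe v

section Grp
variable {G : Type v} [Group G] (c : G → ℕ) (m r : ℕ)

/-- Colored families of subsets. -/
def V2 : Type v :=
  {p : G × (G → Finset (Fin m)) // ∀ x, (p.2 x).card = c (p.1⁻¹ * x)}

noncomputable instance [Finite G] : Finite (V2 c m) := by
  unfold V2
  infer_instance

abbrev Al : Type v := (G × Fin m) ⊕ (V2 c m ⊕ Fin r)

variable {c m r}

def v2psi (a : G → Equiv.Perm (Fin m)) (p : V2 c m) : V2 c m :=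
  ⟨(p.1.1, fun x => (p.1.2 x).map (a x).toEmbedding), fun x => by simpa using p.2 x⟩

def v2gam (h : G) (p : V2 c m) : V2 c m :=
  ⟨(h * p.1.1, fun x => p.1.2 (h⁻¹ * x)), fun x => by
    have := p.2 (h⁻¹ * x)
    simpa [mul_assoc] using this⟩

lemma v2psi_one (p : V2 c m) : v2psi 1 p = p :=
  Subtype.ext (Prod.ext rfl (funext fun _ => Finset.map_refl))

lemma v2psi_mul (a b : G → Equiv.Perm (Fin m)) (p : V2 c m) :
    v2psi (a * b) p = v2psi a (v2psi b p) :=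
  Subtype.ext (Prod.ext rfl (by
    refine _root_.funext fun x => ?_
    change (p.1.2 x).map _ = ((p.1.2 x).map _).map _
    rw [Finset.map_map]
    rfl))

lemma v2gam_one (p : V2 c m) : v2gam 1 p = p :=
  Subtype.ext (Prod.ext (one_mul _) (funext fun x => by simp [v2gam]))

lemma v2gam_mul (a b : G) (p : V2 c m) : v2gam (a * b) p = v2gam a (v2gam b p) :=
  Subtype.ext (Prod.ext (mul_assoc _ _ _) (funext fun x => by simp [v2gam, mul_assoc]))

def psiFun (p : (G → Equiv.Perm (Fin m)) × Equiv.Perm (Fin r)) : Al c m r → Al c m r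
  | Sum.inl q => Sum.inl (q.1, p.1 q.1 q.2)
  | Sum.inr (Sum.inl v) => Sum.inr (Sum.inl (v2psi p.1 v))
  | Sum.inr (Sum.inr i) => Sum.inr (Sum.inr (p.2 i))

def gamFun (h : G) : Al c m r → Al c m r
  | Sum.inl q => Sum.inl (h * q.1, q.2)
  | Sum.inr (Sum.inl v) => Sum.inr (Sum.inl (v2gam h v))
  | Sum.inr (Sum.inr i) => Sum.inr (Sum.inr i)

variable (c m r)

def psi : (G → Equiv.Perm (Fin m)) × Equiv.Perm (Fin r) →* Equiv.Perm (Al c m r) :=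
  MonoidHom.toHomPerm
  { toFun := psiFun
    map_one' := by
      funext x
      rcases x with x | x | x
      · rfl
      · exact congrArg (fun v => Sum.inr (Sum.inl v)) (v2psi_one x)
      · rfl
    map_mul' := by
      intro p q
      funext x
      rcases x with x | x | x
      · rfl
      · exact congrArg (fun v => Sum.inr (Sum.inl v)) (v2psi_mul p.1 q.1 x)
      · rfl }

def gam : G →* Equiv.Perm (Al c m r) :=
  MonoidHom.toHomPerm
  { toFun := gamFun
    map_one' := by
      funext x
      rcases x with x | x | x
      · exact congrArg Sum.inl (Prod.ext (one_mul _) rfl)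
      · exact congrArg (fun v => Sum.inr (Sum.inl v)) (v2gam_one x)
      · rfl
    map_mul' := by
      intro p q
      funext x
      rcases x with x | x | x
      · exact congrArg Sum.inl (Prod.ext (mul_assoc _ _ _) rfl)
      · exact congrArg (fun v => Sum.inr (Sum.inl v)) (v2gam_mul p q x)
      · rfl }

variable {c m r}
lemma psi_inl (p) (x : G) (i : Fin m) :
    psi c m r p (Sum.inl (x, i)) = Sum.inl (x, p.1 x i) := rfl
lemma psi_v2 (p) (v : V2 c m) :
    psi c m r p (Sum.inr (Sum.inl v)) = Sum.inr (Sum.inl (v2psi p.1 v)) := rfl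
lemma psi_inr (p) (i : Fin r) :
    psi c m r p (Sum.inr (Sum.inr i)) = Sum.inr (Sum.inr (p.2 i)) := rfl
lemma gam_inl (h x : G) (i : Fin m) :
    gam c m r h (Sum.inl (x, i)) = Sum.inl (h * x, i) := rfl
lemma gam_v2 (h : G) (v : V2 c m) :
    gam c m r h (Sum.inr (Sum.inl v)) = Sum.inr (Sum.inl (v2gam h v)) := rfl
lemma gam_inr (h : G) (i : Fin r) :
    gam c m r h (Sum.inr (Sum.inr i)) = Sum.inr (Sum.inr i) := rfl

variable (c m r) in
def Hs : Subgroup (Equiv.Perm (Al c m r)) := (psi c m r).range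

lemma gam_psi (h : G) (p : (G → Equiv.Perm (Fin m)) × Equiv.Perm (Fin r)) :
    gam c m r h * psi c m r p = psi c m r (fun x => p.1 (h⁻¹ * x), p.2) * gam c m r h := by
  apply Equiv.ext
  intro x
  simp only [Equiv.Perm.mul_apply]
  rcases x with ⟨x, i⟩ | v | x
  · simp [psi_inl, gam_inl]
  · simp only [psi_v2, gam_v2]
    rfl
  · simp [psi_inr, gam_inr]

lemma gam_mem (h : G) : gam c m r h ∈ Subgroup.normalizer (Hs c m r : Set (Equiv.Perm (Al c m r))) := by
  have key : ∀ (h : G) n, n ∈ Hs c m r → gam c m r h * n * (gam c m r h)⁻¹ ∈ Hs c m r := by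
    rintro h n ⟨p, rfl⟩
    rw [gam_psi, mul_inv_cancel_right]
    exact ⟨_, rfl⟩
  rw [Subgroup.mem_normalizer_iff]
  intro n
  refine ⟨key h n, fun hn => ?_⟩
  have := key h⁻¹ _ hn
  simpa [mul_assoc] using this

lemma gam_inj (hm : 0 < m) (h : G) (hh : gam c m r h ∈ Hs c m r) : h = 1 := by
  obtain ⟨p, hp⟩ := hh
  have := congrArg (fun σ => σ (Sum.inl (1, ⟨0, hm⟩))) hp
  simp only [psi_inl, gam_inl, mul_one] at this
  have := Sum.inl.inj this
  exact (congrArg Prod.fst this).symm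

lemma core_free (hm : 0 < m) (hr : 0 < r) (M : Subgroup (Equiv.Perm (Al c m r))) (hM : M.Normal)
    (hle : M ≤ Hs c m r) : M = ⊥ := by
  classical
  rw [eq_bot_iff]
  intro μ hμ
  rw [Subgroup.mem_bot]
  by_contra hne
  obtain ⟨x, hx⟩ : ∃ x, μ x ≠ x := by
    by_contra! h
    exact hne (Equiv.ext h)
  let v : Al c m r := Sum.inl (1, ⟨0, hm⟩)
  let w : Al c m r := Sum.inr (Sum.inr ⟨0, hr⟩)
  have hvw : v ≠ w := Sum.inl_ne_inr
  let g : Equiv.Perm (Al c m r) :=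
    Equiv.swap (Equiv.swap x v (μ x)) w * Equiv.swap x v
  have hgx : g x = v := by
    simp only [g, Equiv.Perm.mul_apply, Equiv.swap_apply_left]
    apply Equiv.swap_apply_of_ne_of_ne
    · intro h
      have h1 : Equiv.swap x v x = v := Equiv.swap_apply_left _ _
      exact hx ((Equiv.swap x v).injective (h.symm.trans h1.symm))
    · exact hvw
  have hgy : g (μ x) = w := by
    simp only [g, Equiv.Perm.mul_apply, Equiv.swap_apply_left]
  obtain ⟨p, hp⟩ := hle (hM.conj_mem μ hμ g)
  have h2 : (g * μ * g⁻¹) v = w := by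
    rw [← hgx, ← hgy]; simp
  rw [← hp, psi_inl] at h2
  exact Sum.inl_ne_inr h2

lemma invariant_set {S S' : Finset (Fin m)} (hS : 2 * S.card < m) (hS' : 2 * S'.card < m)
    (hne : S'.Nonempty)
    (h : ∀ ρ : Equiv.Perm (Fin m), S.map ρ.toEmbedding = S → S'.map ρ.toEmbedding = S') :
    S' = S := by
  have hmov : ∀ y z, y ∈ S' → (y ∈ S ↔ z ∈ S) → z ∈ S' := by
    intro y z hy hyz
    have h1 : S.map (Equiv.swap y z).toEmbedding = S := by
      ext w
      rw [Finset.mem_map_equiv, Equiv.symm_swap]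
      rcases eq_or_ne w y with rfl | hwy
      · rw [Equiv.swap_apply_left]; exact hyz.symm
      rcases eq_or_ne w z with rfl | hwz
      · rw [Equiv.swap_apply_right]; exact hyz
      rw [Equiv.swap_apply_of_ne_of_ne hwy hwz]
    have h2 := h _ h1
    rw [← h2, Finset.mem_map_equiv, Equiv.symm_swap, Equiv.swap_apply_right]
    exact hy
  have hsub : S' ⊆ S := by
    intro y hy
    by_contra hyS
    have : Sᶜ ⊆ S' := by
      intro z hz
      rw [Finset.mem_compl] at hz
      exact hmov y z hy (by simp [hyS, hz])
    have := Finset.card_le_card this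
    rw [Finset.card_compl, Fintype.card_fin] at this
    omega
  refine le_antisymm hsub ?_
  obtain ⟨y, hy⟩ := hne
  intro z hz
  exact hmov y z hy (by simp [hsub hy, hz])

/-- Main normalizer computation, given that the three pieces are preserved. -/
lemma normalizer_aux [Finite G] (hc : Function.Injective c) (hc0 : ∀ g, 0 < c g) (hcm : ∀ g, 2 * c g < m)
    (σ : Equiv.Perm (Al c m r))
    (hσ : ∀ p, ∃ p', σ * psi c m r p = psi c m r p' * σ)
    (h1 : ∀ x, ∃ y, σ (Sum.inl x) = Sum.inl y)
    (h2 : ∀ v, ∃ w, σ (Sum.inr (Sum.inl v)) = Sum.inr (Sum.inl w))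
    (h3 : ∀ v, ∃ w, σ (Sum.inr (Sum.inr v)) = Sum.inr (Sum.inr w)) :
    ∃ h : G, (gam c m r h)⁻¹ * σ ∈ Hs c m r := by
  classical
  have hm : 0 < m := by have := hcm 1; omega
  choose s hs using h1
  choose t ht using h2
  choose τ hτ using h3
  have hs1 : ∀ x i j, (s (x, i)).1 = (s (x, j)).1 := by
    intro x i j
    obtain ⟨p', hp'⟩ := hσ (fun _ => Equiv.swap i j, 1)
    have := congrArg (fun σ => σ (Sum.inl (x, i))) hp'
    simp only [Equiv.Perm.mul_apply, psi_inl, Equiv.swap_apply_left, hs] at this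
    exact (congrArg Prod.fst (Sum.inl.inj this)).symm
  let π : G → G := fun x => (s (x, ⟨0, hm⟩)).1
  have hb : ∀ x, Function.Injective (fun i => (s (x, i)).2) := by
    intro x i j hij
    have : s (x, i) = s (x, j) := Prod.ext (hs1 x i j) hij
    have h4 : σ (Sum.inl (x, i)) = σ (Sum.inl (x, j)) := by rw [hs, hs, this]
    have := Sum.inl.inj (σ.injective h4)
    exact congrArg Prod.snd this
  let b : G → Equiv.Perm (Fin m) := fun x =>
    Equiv.ofBijective _ (Finite.injective_iff_bijective.1 (hb x))
  have hsb : ∀ x i, σ (Sum.inl (x, i)) = Sum.inl (π x, b x i) := by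
    intro x i
    rw [hs]
    congr 1
    exact Prod.ext (hs1 x i _) rfl
  have hτi : Function.Injective τ := by
    intro i j hij
    have : σ (Sum.inr (Sum.inr i)) = σ (Sum.inr (Sum.inr j)) := by rw [hτ, hτ, hij]
    exact Sum.inr.inj (Sum.inr.inj (σ.injective this))
  let τ' : Equiv.Perm (Fin r) := Equiv.ofBijective τ (Finite.injective_iff_bijective.1 hτi)
  have hconj : ∀ p p', σ * psi c m r p = psi c m r p' * σ →
      ∀ x, p'.1 (π x) = b x * p.1 x * (b x)⁻¹ := by
    intro p p' h x
    apply Equiv.ext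
    intro i
    have := congrArg (fun σ => σ (Sum.inl (x, (b x)⁻¹ i))) h
    simp only [Equiv.Perm.mul_apply, psi_inl, hsb] at this
    have := congrArg Prod.snd (Sum.inl.inj this)
    simpa using this.symm
  have hf : ∀ (v : V2 c m) x, (t v).1.2 (π x) = (v.1.2 x).map (b x).toEmbedding := by
    intro v x
    apply invariant_set
    · rw [Finset.card_map, v.2]; exact hcm _
    · rw [(t v).2]; exact hcm _
    · rw [← Finset.card_pos, (t v).2]; exact hc0 _
    · intro ρ hρ
      let p : (G → Equiv.Perm (Fin m)) × Equiv.Perm (Fin r) :=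
        (Function.update (fun _ => 1) x ((b x)⁻¹ * ρ * b x), 1)
      obtain ⟨p', hp'⟩ := hσ p
      have hpx := hconj p p' hp' x
      simp only [p, Function.update_self] at hpx
      have hpx' : p'.1 (π x) = ρ := by rw [hpx]; group
      have hpv : v2psi p.1 v = v := by
        apply Subtype.ext
        refine Prod.ext rfl ?_
        funext y
        change (v.1.2 y).map (p.1 y).toEmbedding = v.1.2 y
        by_cases hy : y = x
        · subst hy
          simp only [p, Function.update_self]
          have h5 : ((v.1.2 y).map (b y).toEmbedding).map ρ.toEmbedding =
            (v.1.2 y).map (b y).toEmbedding := hρ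
          ext w
          have h6 := congrArg (fun S => b y w ∈ S) h5
          simp only [Finset.mem_map_equiv, eq_iff_iff, Equiv.symm_apply_apply] at h6
          rw [← h6, Finset.mem_map_equiv]
          rfl
        · simp only [p, Function.update_of_ne hy]
          exact Finset.map_refl
      have := congrArg (fun σ => σ (Sum.inr (Sum.inl v))) hp'
      simp only [Equiv.Perm.mul_apply, psi_v2, hpv, ht] at this
      have := Sum.inl.inj (Sum.inr.inj this)
      have h7 := congrArg (fun u : V2 c m => u.1.2 (π x)) this
      simp only [v2psi, hpx'] at h7
      exact h7.symm
  have hπ : ∀ (v : V2 c m) x, π x = (t v).1.1 * (v.1.1)⁻¹ * x := by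
    intro v x
    have h5 := congrArg Finset.card (hf v x)
    rw [Finset.card_map, (t v).2, v.2] at h5
    have := hc h5
    rw [mul_assoc, ← this]; group
  have hπ1 : ∀ x, π x = π 1 * x := by
    have : ∃ v : V2 c m, True := by
      have : ∀ x : G, ∃ S : Finset (Fin m), S.card = c ((1 : G)⁻¹ * x) := by
        intro x
        obtain ⟨S, -, hS⟩ := Finset.exists_subset_card_eq
          (s := (Finset.univ : Finset (Fin m))) (n := c ((1 : G)⁻¹ * x))
          (by rw [Finset.card_univ, Fintype.card_fin]; have := hcm ((1 : G)⁻¹ * x); omega)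
        exact ⟨S, hS⟩
      choose f hf using this
      exact ⟨⟨(1, f), hf⟩, trivial⟩
    obtain ⟨v, -⟩ := this
    intro x
    rw [hπ v x, hπ v 1, mul_one]
  refine ⟨π 1, (b, τ'), ?_⟩
  rw [eq_inv_mul_iff_mul_eq]
  apply Equiv.ext
  rintro (⟨x, i⟩ | v | i)
  · rw [Equiv.Perm.mul_apply, psi_inl, gam_inl, hsb, hπ1 x]
  · rw [Equiv.Perm.mul_apply, psi_v2, gam_v2, ht]
    congr 2
    have h5 : π 1 = (t v).1.1 * (v.1.1)⁻¹ := by rw [hπ v 1, mul_one]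
    apply Subtype.ext
    refine Prod.ext ?_ ?_
    · simp [v2gam, v2psi, h5]
    · funext x
      have := hf v ((π 1)⁻¹ * x)
      rw [hπ1, mul_inv_cancel_left] at this
      rw [this]
      rfl
  · rw [Equiv.Perm.mul_apply, psi_inr, gam_inr, hτ]
    rfl

lemma orbit_ncard (σ : Equiv.Perm (Al c m r))
    (hσ : σ ∈ Subgroup.normalizer (Hs c m r : Set (Equiv.Perm (Al c m r)))) (v : Al c m r) :
    (MulAction.orbit (Hs c m r) (σ v)).ncard = (MulAction.orbit (Hs c m r) v).ncard := by
  rw [← Set.ncard_image_of_injective (MulAction.orbit (Hs c m r) v) σ.injective]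
  congr 1
  rw [Subgroup.mem_normalizer_iff] at hσ
  ext w
  constructor
  · rintro ⟨⟨h, hh⟩, rfl⟩
    refine ⟨(σ⁻¹ * h * σ) v, ⟨⟨σ⁻¹ * h * σ, ?_⟩, rfl⟩, ?_⟩
    · rw [hσ]
      simpa [mul_assoc] using hh
    · change σ ((σ⁻¹ * h * σ) v) = h (σ v)
      simp
  · rintro ⟨_, ⟨⟨h, hh⟩, rfl⟩, rfl⟩
    refine ⟨⟨σ * h * σ⁻¹, (hσ h).1 hh⟩, ?_⟩
    change (σ * h * σ⁻¹) (σ v) = σ (h v)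
    simp

lemma choose_gt {m d : ℕ} (h2 : 2 ≤ d) (hd : 2 * d < m) : m < m.choose d := by
  induction d, h2 using Nat.le_induction with
  | base =>
    obtain ⟨n, rfl⟩ := Nat.exists_eq_add_of_le hd
    rw [Nat.choose_two_right, Nat.lt_div_iff_mul_lt (by norm_num)]
    have : (2 * 2).succ + n - 1 = 4 + n := by omega
    rw [this]
    simp only [Nat.succ_eq_add_one]
    zify
    have : (((2 * 2 + 1 + n) * (4 + n) - (2 - 1) : ℕ) : ℤ) = (5 + n) * (4 + n) - 1 := by
      rw [Nat.cast_sub]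
      · push_cast; ring
      · nlinarith
    rw [this]
    push_cast
    nlinarith
  | succ d hd' ih =>
    exact (ih (by omega)).trans_le (Nat.choose_le_succ_of_lt_half_left (by omega))

lemma orbit_V1 [Finite G] (x : G × Fin m) :
    (MulAction.orbit (Hs c m r) (Sum.inl x : Al c m r)).ncard ≤ m := by
  have : MulAction.orbit (Hs c m r) (Sum.inl x : Al c m r) ⊆
      Set.range (fun i : Fin m => (Sum.inl (x.1, i) : Al c m r)) := by
    rintro _ ⟨⟨_, p, rfl⟩, rfl⟩
    exact ⟨p.1 x.1 x.2, rfl⟩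
  refine (Set.ncard_le_ncard this (Set.toFinite _)).trans ?_
  rw [← Set.image_univ]
  refine (Set.ncard_image_le (Set.toFinite _)).trans ?_
  simp

lemma orbit_V2 [Finite G] (hc2 : ∀ g, 2 ≤ c g) (hcm : ∀ g, 2 * c g < m) (v : V2 c m) :
    m < (MulAction.orbit (Hs c m r) (Sum.inr (Sum.inl v) : Al c m r)).ncard := by
  classical
  refine (choose_gt (hc2 (v.1.1⁻¹ * 1)) (hcm _)).trans_le ?_
  have hcard : ((Finset.powersetCard (c (v.1.1⁻¹ * 1)) (Finset.univ : Finset (Fin m))) :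
      Set (Finset (Fin m))).ncard = m.choose (c (v.1.1⁻¹ * 1)) := by
    rw [Set.ncard_coe_finset, Finset.card_powersetCard, Finset.card_univ, Fintype.card_fin]
  rw [← hcard]
  have hex : ∀ S ∈ ((Finset.powersetCard (c (v.1.1⁻¹ * 1)) (Finset.univ : Finset (Fin m))) :
      Set (Finset (Fin m))), ∃ ρ : Equiv.Perm (Fin m), (v.1.2 1).map ρ.toEmbedding = S := by
    intro S hS
    rw [Finset.mem_coe, Finset.mem_powersetCard] at hS
    have h1 : (v.1.2 1).card = S.card := by rw [v.2, hS.2]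
    let e : {x // x ∈ v.1.2 1} ≃ {x // x ∈ S} := Finset.equivOfCardEq h1
    refine ⟨e.extendSubtype, ?_⟩
    apply Finset.eq_of_subset_of_card_le
    · intro y hy
      rw [Finset.mem_map] at hy
      obtain ⟨z, hz, rfl⟩ := hy
      exact e.extendSubtype_mem z hz
    · rw [Finset.card_map, h1]
  choose! ρ hρ using hex
  refine Set.ncard_le_ncard_of_injOn
    (fun S => (Sum.inr (Sum.inl (v2psi (fun _ => ρ S) v)) : Al c m r)) ?_ ?_ (Set.toFinite _)
  · intro S _
    exact ⟨⟨_, (fun _ => ρ S, 1), rfl⟩, rfl⟩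
  · intro S hS S' hS' h
    have h1 := Sum.inl.inj (Sum.inr.inj h)
    have h2 := congrArg (fun u : V2 c m => u.1.2 1) h1
    change (v.1.2 1).map (ρ S).toEmbedding = (v.1.2 1).map (ρ S').toEmbedding at h2
    rw [hρ S hS, hρ S' hS'] at h2
    exact h2

lemma orbit_V2_le [Finite G] (v : V2 c m) :
    (MulAction.orbit (Hs c m r) (Sum.inr (Sum.inl v) : Al c m r)).ncard ≤ Nat.card (V2 c m) := by
  have : MulAction.orbit (Hs c m r) (Sum.inr (Sum.inl v) : Al c m r) ⊆
      (fun i : V2 c m => (Sum.inr (Sum.inl i) : Al c m r)) '' Set.univ := by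
    rintro _ ⟨⟨_, p, rfl⟩, rfl⟩
    exact ⟨v2psi p.1 v, trivial, rfl⟩
  refine (Set.ncard_le_ncard this (Set.toFinite _)).trans ?_
  refine (Set.ncard_image_le (Set.toFinite _)).trans ?_
  rw [Set.ncard_univ]

lemma orbit_R [Finite G] (i : Fin r) :
    r ≤ (MulAction.orbit (Hs c m r) (Sum.inr (Sum.inr i) : Al c m r)).ncard := by
  have h0 : (Set.univ : Set (Fin r)).ncard = r := by simp
  conv_lhs => rw [← h0]
  refine Set.ncard_le_ncard_of_injOn (fun j => (Sum.inr (Sum.inr j) : Al c m r)) ?_ ?_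
    (Set.toFinite _)
  · intro j _
    refine ⟨⟨_, (1, Equiv.swap i j), rfl⟩, ?_⟩
    change psi c m r _ _ = _
    rw [psi_inr, Equiv.swap_apply_left]
  · intro j _ j' _ h
    exact Sum.inr.inj (Sum.inr.inj h)

lemma normalizer_main [Finite G] (hc : Function.Injective c) (hc2 : ∀ g, 2 ≤ c g)
    (hcm : ∀ g, 2 * c g < m) (hmr : m < r) (hVr : Nat.card (V2 c m) < r)
    (σ : Equiv.Perm (Al c m r))
    (hσ : σ ∈ Subgroup.normalizer (Hs c m r : Set (Equiv.Perm (Al c m r)))) :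
    ∃ h : G, (gam c m r h)⁻¹ * σ ∈ Hs c m r := by
  have hn := orbit_ncard σ hσ
  refine normalizer_aux hc (fun g => by have := hc2 g; omega) hcm σ ?_ ?_ ?_ ?_
  · intro p
    rw [Subgroup.mem_normalizer_iff] at hσ
    obtain ⟨p', hp'⟩ := (hσ (psi c m r p)).1 ⟨p, rfl⟩
    exact ⟨p', by rw [hp']; group⟩
  · intro x
    have h1 := hn (Sum.inl x)
    have h2 := orbit_V1 (c := c) (r := r) x
    rcases h : σ (Sum.inl x) with y | y | y
    · exact ⟨y, rfl⟩
    · rw [h] at h1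
      have := orbit_V2 (r := r) hc2 hcm y
      omega
    · rw [h] at h1
      have := orbit_R (c := c) (m := m) y
      omega
  · intro v
    have h1 := hn (Sum.inr (Sum.inl v))
    have h2 := orbit_V2 (r := r) hc2 hcm v
    have h3 := orbit_V2_le (r := r) v
    rcases h : σ (Sum.inr (Sum.inl v)) with y | y | y
    · rw [h] at h1
      have := orbit_V1 (c := c) (r := r) y
      omega
    · exact ⟨y, rfl⟩
    · rw [h] at h1
      have := orbit_R (c := c) (m := m) y
      omega
  · intro v
    have h1 := hn (Sum.inr (Sum.inr v))
    have h2 := orbit_R (c := c) (m := m) v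
    rcases h : σ (Sum.inr (Sum.inr v)) with y | y | y
    · rw [h] at h1
      have := orbit_V1 (c := c) (r := r) y
      omega
    · rw [h] at h1
      have := orbit_V2_le (r := r) y
      omega
    · exact ⟨y, rfl⟩

end Grp

/-- Every finite group is `N(H)/H` inside a symmetric group of prime degree, `H` core-free. -/
lemma group_main (G : Type v) [Group G] [Finite G] :
    ∃ p : ℕ, p.Prime ∧ 3 ≤ p ∧ ∀ (α : Type*) [Fintype α], Fintype.card α = p →
      ∃ (H : Subgroup (Equiv.Perm α)) (γ : G →* Equiv.Perm α),
        (∀ g, γ g ∈ Subgroup.normalizer (H : Set (Equiv.Perm α))) ∧ (∀ g, γ g ∈ H → g = 1) ∧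
        (∀ σ ∈ Subgroup.normalizer (H : Set (Equiv.Perm α)), ∃ g, (γ g)⁻¹ * σ ∈ H) ∧
        (∀ M : Subgroup (Equiv.Perm α), M.Normal → M ≤ H → M = ⊥) := by
  classical
  set N := Nat.card G with hN
  let e : G ≃ Fin N := Finite.equivFin G
  let c : G → ℕ := fun g => (e g : ℕ) + 2
  let m := 2 * N + 3
  have hc : Function.Injective c := fun g h hgh => e.injective (Fin.ext (by simpa [c] using hgh))
  have hc2 : ∀ g, 2 ≤ c g := fun g => by simp [c]
  have hcm : ∀ g, 2 * c g < m := fun g => by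
    have := (e g).2
    simp only [c, m]; omega
  obtain ⟨p, hp1, hp⟩ := Nat.exists_infinite_primes
    (2 * (N * m + Nat.card (V2 c m)) + m + 3)
  refine ⟨p, hp, by omega, fun α _ hα => ?_⟩
  obtain ⟨r, hr⟩ : ∃ r, p = N * m + (Nat.card (V2 c m) + r) :=
    ⟨p - N * m - Nat.card (V2 c m), by omega⟩
  have hmr : m < r := by omega
  have hVr : Nat.card (V2 c m) < r := by omega
  have hcard : Nat.card (Al c m r) = Nat.card α := by
    rw [Nat.card_sum, Nat.card_sum, Nat.card_prod, Nat.card_eq_fintype_card (α := α), hα, hr]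
    simp [hN]
  obtain ⟨E⟩ : Nonempty (Al c m r ≃ α) := Finite.card_eq.1 hcard
  let F : Equiv.Perm (Al c m r) ≃* Equiv.Perm α := E.permCongrHom
  have hmem : ∀ τ, τ ∈ (Hs c m r).map F.toMonoidHom ↔ F.symm τ ∈ Hs c m r := by
    intro τ
    rw [Subgroup.mem_map]
    constructor
    · rintro ⟨x, hx, rfl⟩
      simpa using hx
    · intro h
      exact ⟨_, h, by simp⟩
  have hnorm : ∀ τ, τ ∈ Subgroup.normalizer
      ((Hs c m r).map F.toMonoidHom : Set (Equiv.Perm α)) ↔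
      F.symm τ ∈ Subgroup.normalizer (Hs c m r : Set (Equiv.Perm (Al c m r))) := by
    intro τ
    rw [Subgroup.mem_normalizer_iff,
      Subgroup.mem_normalizer_iff]
    constructor
    · intro h n
      have := h (F n)
      rw [hmem, hmem] at this
      simpa using this
    · intro h n
      have := h (F.symm n)
      rw [hmem, hmem]
      simpa using this
  refine ⟨(Hs c m r).map F.toMonoidHom, F.toMonoidHom.comp (gam c m r), ?_, ?_, ?_, ?_⟩
  · intro g
    rw [hnorm]
    simpa using gam_mem g
  · intro g hg
    rw [hmem] at hg
    refine gam_inj (c := c) (m := m) (r := r) (by omega) g (by simpa using hg)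
  · intro σ hσ
    rw [hnorm] at hσ
    obtain ⟨h, hh⟩ := normalizer_main hc hc2 hcm hmr hVr _ hσ
    refine ⟨h, ?_⟩
    rw [hmem]
    simpa using hh
  · intro M hM hle
    have : M.comap F.toMonoidHom = ⊥ := by
      apply core_free (c := c) (m := m) (r := r) (by omega) (by omega) _ (hM.comap _)
      intro x hx
      have := hle hx
      rw [hmem] at this
      simpa using this
    rw [eq_bot_iff]
    intro x hx
    have h1 : F.symm x ∈ M.comap F.toMonoidHom := by
      rw [Subgroup.mem_comap]; simpa using hx
    rw [this, Subgroup.mem_bot] at h1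
    rw [Subgroup.mem_bot]
    simpa using h1
end HilbAux

namespace HilbAux

lemma aut_fixed {K F : Type*} [Field K] [Field F] [Algebra K F] [FiniteDimensional K F]
    [IsGalois K F] (H : Subgroup (F ≃ₐ[K] F)) {G : Type*} [Group G] (γ : G →* (F ≃ₐ[K] F))
    (h1 : ∀ g, γ g ∈ Subgroup.normalizer (H : Set (F ≃ₐ[K] F)))
    (h2 : ∀ g, γ g ∈ H → g = 1)
    (h3 : ∀ σ ∈ Subgroup.normalizer (H : Set (F ≃ₐ[K] F)), ∃ g, (γ g)⁻¹ * σ ∈ H) :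
    Nonempty ((fixedField H ≃ₐ[K] fixedField H) ≃* G) := by
  have hst : ∀ g, ∀ x : fixedField H, γ g x ∈ fixedField H := by
    intro g x
    rw [mem_fixedField_iff]
    intro f hf
    have h := (Subgroup.mem_normalizer_iff.1 (h1 g⁻¹) f).1 hf
    have := (mem_fixedField_iff H x.1).1 x.2 _ h
    have h4 := congrArg (γ g) this
    rw [← AlgEquiv.mul_apply] at h4
    simpa [mul_assoc] using h4
  let ψ : G →* (fixedField H →ₐ[K] fixedField H) :=
    { toFun := fun g => ((γ g).toAlgHom.comp (fixedField H).val).codRestrict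
        (fixedField H).toSubalgebra (fun x => hst g x)
      map_one' := by
        ext x
        change γ 1 x = x
        simp
      map_mul' := by
        intro a b
        ext x
        change γ (a * b) x = γ a (γ b x)
        simp }
  have hψ : ∀ g x, ((ψ g x : fixedField H) : F) = γ g x := fun g x => rfl
  have hinj : Function.Injective ψ := by
    rw [injective_iff_map_eq_one]
    intro g hg
    apply h2
    rw [← IntermediateField.fixingSubgroup_fixedField H, IntermediateField.mem_fixingSubgroup_iff]
    intro x hx
    have := hψ g ⟨x, hx⟩
    rw [hg] at this
    exact this.symm
  have hsurj : Function.Surjective ψ := by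
    intro τ
    let τ' : fixedField H ≃ₐ[K] fixedField H := (algEquivEquivAlgHom K (fixedField H)).symm τ
    have hτ' : ∀ x, τ' x = τ x := fun x => rfl
    let σ : F ≃ₐ[K] F := τ'.liftNormal F
    have hσ : ∀ x : fixedField H, σ x = τ' x := fun x => AlgEquiv.liftNormal_commutes τ' F x
    have hσ' : ∀ x : fixedField H, σ⁻¹ x = τ'.symm x := by
      intro x
      rw [AlgEquiv.aut_inv, AlgEquiv.symm_apply_eq, hσ]
      simp
    have hN : σ ∈ Subgroup.normalizer (H : Set (F ≃ₐ[K] F)) := by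
      rw [Subgroup.mem_normalizer_iff]
      intro h
      rw [← IntermediateField.fixingSubgroup_fixedField H,
        IntermediateField.mem_fixingSubgroup_iff, IntermediateField.mem_fixingSubgroup_iff]
      constructor
      · intro hh x hx
        rw [AlgEquiv.mul_apply, AlgEquiv.mul_apply, hσ' ⟨x, hx⟩, hh _ (τ'.symm ⟨x, hx⟩).2, hσ]
        simp
      · intro hh x hx
        have := hh _ (τ' ⟨x, hx⟩).2
        rw [AlgEquiv.mul_apply, AlgEquiv.mul_apply, hσ', ← hσ] at this
        simpa using this
    obtain ⟨g, hg⟩ := h3 σ hN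
    refine ⟨g, ?_⟩
    ext x
    rw [hψ, ← hτ', ← hσ]
    have := (mem_fixedField_iff H x.1).1 x.2 _ hg
    rw [AlgEquiv.mul_apply, AlgEquiv.aut_inv, AlgEquiv.symm_apply_eq] at this
    exact this.symm
  exact ⟨(algEquivEquivAlgHom K (fixedField H)).trans (MulEquiv.ofBijective ψ ⟨hinj, hsurj⟩).symm⟩

lemma le_of_core {K Ω : Type*} [Field K] [Field Ω] [Algebra K Ω] [Normal K Ω]
    (F : IntermediateField K Ω) [FiniteDimensional K F] [IsGalois K F]
    (H : Subgroup (F ≃ₐ[K] F))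
    (h4 : ∀ M : Subgroup (F ≃ₐ[K] F), M.Normal → M ≤ H → M = ⊥)
    (D : IntermediateField K Ω) (hD : ∀ (σ : Ω ≃ₐ[K] Ω), ∀ x ∈ D, σ x ∈ D)
    (hE : lift (fixedField H) ≤ D) : F ≤ D := by
  let D' : IntermediateField K F := D.comap F.val
  have hD' : ∀ x, x ∈ D' ↔ (x : Ω) ∈ D := fun x => Iff.rfl
  have hst : ∀ (σ : F ≃ₐ[K] F), ∀ x ∈ D', σ x ∈ D' := by
    intro σ x hx
    rw [hD'] at hx ⊢
    have := hD (σ.liftNormal Ω) _ hx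
    rwa [show ((x : F) : Ω) = algebraMap F Ω x from rfl, AlgEquiv.liftNormal_commutes] at this
  have hn : (D'.fixingSubgroup).Normal := by
    constructor
    intro n hn g
    rw [IntermediateField.mem_fixingSubgroup_iff] at hn ⊢
    intro x hx
    rw [AlgEquiv.mul_apply, AlgEquiv.mul_apply, hn _ (hst g⁻¹ x hx)]
    simp
  have hle : D'.fixingSubgroup ≤ H := by
    rw [← IntermediateField.fixingSubgroup_fixedField H]
    apply IntermediateField.fixingSubgroup_le
    intro x hx
    rw [hD']
    exact hE ((IntermediateField.mem_lift x).2 hx)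
  have hb := h4 _ hn hle
  have htop : D' = ⊤ := by
    rw [← IsGalois.fixedField_fixingSubgroup D', hb, IntermediateField.fixedField_bot]
  intro x hx
  have : (⟨x, hx⟩ : F) ∈ D' := by rw [htop]; trivial
  exact this

lemma two_le_finrank {K Ω : Type*} [Field K] [Field Ω] [Algebra K Ω]
    (E D : IntermediateField K Ω) [FiniteDimensional K E] (h : ¬ E ≤ D) :
    2 ≤ Module.finrank D (extendScalars (le_sup_right : D ≤ E ⊔ D)) := by
  have hfd : FiniteDimensional D (extendScalars (le_sup_right : D ≤ E ⊔ D)) := by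
    obtain ⟨S, hS⟩ := IntermediateField.essFiniteType_iff.1
      (inferInstance : Algebra.EssFiniteType K E)
    have : extendScalars (le_sup_right : D ≤ E ⊔ D) = adjoin D (S : Set Ω) := by
      apply le_antisymm
      · have h1 : E ⊔ D ≤ (adjoin D (S : Set Ω)).restrictScalars K := by
          apply sup_le
          · rw [← hS, adjoin_le_iff]
            exact subset_adjoin D _
          · intro x hx
            exact (adjoin D (S : Set Ω)).algebraMap_mem ⟨x, hx⟩
        exact h1
      · rw [adjoin_le_iff]
        intro x hx
        have : x ∈ E ⊔ D := (le_sup_left : E ≤ E ⊔ D) (hS ▸ subset_adjoin K _ hx)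
        exact this
    rw [this]
    apply finiteDimensional_adjoin
    intro x hx
    have hxE : x ∈ E := hS ▸ subset_adjoin K _ hx
    have : IsIntegral K x := (Algebra.IsIntegral.isIntegral (R := K) (⟨x, hxE⟩ : E)).map E.val
    exact this.tower_top
  have hpos := Module.finrank_pos (R := D) (M := extendScalars (le_sup_right : D ≤ E ⊔ D))
  have hne : Module.finrank D (extendScalars (le_sup_right : D ≤ E ⊔ D)) ≠ 1 := by
    intro h1
    rw [IntermediateField.finrank_eq_one_iff] at h1
    apply h
    intro x hx
    have hx' : x ∈ extendScalars (le_sup_right : D ≤ E ⊔ D) :=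
      (le_sup_left : E ≤ E ⊔ D) hx
    rw [h1, IntermediateField.mem_bot] at hx'
    obtain ⟨y, rfl⟩ := hx'
    exact y.2
  omega

lemma infinite_of_hilb {k : Type*} [Field k] (hk :  ∀ P : Polynomial (Polynomial k),
    Irreducible (P.map (algebraMap (Polynomial k) (RatFunc k))) →
    {t₀ : k | Irreducible (P.map (Polynomial.evalRingHom t₀))}.Infinite) : Infinite k := by
  have := hk X (by simpa using irreducible_X)
  exact Set.infinite_univ_iff.1 (this.mono (Set.subset_univ _))

lemma exists_finset {k : Type*} [Field k] [Infinite k] (n : ℕ) :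
    ∃ s : Finset k, 0 ∉ s ∧ s.card = n := by
  obtain ⟨t, h1, h2⟩ := (Set.finite_singleton (0 : k)).infinite_compl.exists_subset_card_eq n
  exact ⟨t, fun h => h1 h rfl, h2⟩

lemma const_stable {k : Type*} [Field k] (σ : AlgebraicClosure (RatFunc k) ≃ₐ[RatFunc k] AlgebraicClosure (RatFunc k)) :
    ∀ x ∈ adjoin (RatFunc k) {z : AlgebraicClosure (RatFunc k) | IsIntegral k z},
      σ x ∈ adjoin (RatFunc k) {z : AlgebraicClosure (RatFunc k) | IsIntegral k z} := by
  have : adjoin (RatFunc k) {z : AlgebraicClosure (RatFunc k) | IsIntegral k z} ≤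
      (adjoin (RatFunc k) {z : AlgebraicClosure (RatFunc k) | IsIntegral k z}).comap
        (σ : AlgebraicClosure (RatFunc k) →ₐ[RatFunc k] AlgebraicClosure (RatFunc k)) := by
    rw [adjoin_le_iff]
    intro z hz
    apply subset_adjoin
    have hz : IsIntegral k z := hz
    exact hz.map (σ.toAlgHom.restrictScalars k)
  exact this

lemma transfer {P Q : Type*} [Group P] [Group Q] (e : P ≃* Q) {G : Type*} [Group G]
    (h : ∃ (H : Subgroup P) (γ : G →* P),
      (∀ g, γ g ∈ Subgroup.normalizer (H : Set P)) ∧ (∀ g, γ g ∈ H → g = 1) ∧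
      (∀ σ ∈ Subgroup.normalizer (H : Set P), ∃ g, (γ g)⁻¹ * σ ∈ H) ∧
      (∀ M : Subgroup P, M.Normal → M ≤ H → M = ⊥)) :
    ∃ (H : Subgroup Q) (γ : G →* Q),
      (∀ g, γ g ∈ Subgroup.normalizer (H : Set Q)) ∧ (∀ g, γ g ∈ H → g = 1) ∧
      (∀ σ ∈ Subgroup.normalizer (H : Set Q), ∃ g, (γ g)⁻¹ * σ ∈ H) ∧
      (∀ M : Subgroup Q, M.Normal → M ≤ H → M = ⊥) := by
  obtain ⟨H, γ, h1, h2, h3, h4⟩ := h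
  have hmem : ∀ x, x ∈ H.comap e.symm.toMonoidHom ↔ e.symm x ∈ H := fun x => Iff.rfl
  have hn : ∀ x, x ∈ Subgroup.normalizer (H.comap e.symm.toMonoidHom : Set Q) ↔
      e.symm x ∈ Subgroup.normalizer (H : Set P) := by
    intro x
    rw [Subgroup.mem_normalizer_iff, Subgroup.mem_normalizer_iff]
    constructor
    · intro h n
      have := h (e n)
      rw [hmem, hmem] at this
      simpa using this
    · intro h n
      have := h (e.symm n)
      rw [hmem, hmem]
      simpa using this
  refine ⟨H.comap e.symm.toMonoidHom, e.toMonoidHom.comp γ, ?_, ?_, ?_, ?_⟩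
  · intro g
    rw [hn]
    simpa using h1 g
  · intro g hg
    rw [hmem] at hg
    exact h2 g (by simpa using hg)
  · intro σ hσ
    rw [hn] at hσ
    obtain ⟨g, hg⟩ := h3 _ hσ
    refine ⟨g, ?_⟩
    rw [hmem]
    simpa using hg
  · intro M hM hMH
    have := h4 (M.comap e.toMonoidHom) (hM.comap _) (by
      intro x hx
      have := hMH hx
      simpa using this)
    rw [Subgroup.eq_bot_iff_forall] at this ⊢
    intro x hx
    have h5 := this (e.symm x) (by simpa using hx)
    simpa using h5
end HilbAux

/-- Over a Hilbertian field `k`, every finite group `G` is the automorphism group of some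
finite separable extension `E/k(T)` with `[E·k̄ : k̄(T)] ≥ 2`, where `k̄` is the algebraic
closure of `k` inside an algebraic closure `Ω` of `k(T)` (realized as the elements of `Ω`
integral over `k`), and `E·k̄` denotes the compositum of `E` and `k̄(T)` inside `Ω`. -/
theorem exists_function_field_extension (k : Type*) [Field k] (hk : IsHilbertian k)
    (G : Type*) [Group G] [Finite G] :
    ∃ E : IntermediateField (RatFunc k) (AlgebraicClosure (RatFunc k)),
      FiniteDimensional (RatFunc k) E ∧ Algebra.IsSeparable (RatFunc k) E ∧
      Nonempty ((E ≃ₐ[RatFunc k] E) ≃* G) ∧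
      2 ≤ Module.finrank
        (adjoin (RatFunc k) {z : AlgebraicClosure (RatFunc k) | IsIntegral k z})
        (extendScalars
          (le_sup_right :
            adjoin (RatFunc k) {z : AlgebraicClosure (RatFunc k) | IsIntegral k z} ≤
              E ⊔ adjoin (RatFunc k) {z : AlgebraicClosure (RatFunc k) | IsIntegral k z})) := by
  haveI : Infinite k := HilbAux.infinite_of_hilb hk
  obtain ⟨p, hp, hp3, hgrp⟩ := HilbAux.group_main G
  obtain ⟨s, h0, hs⟩ := HilbAux.exists_finset (k := k) (p - 2)
  have hsp : s.card + 2 = p := by omega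
  have hsne : s.Nonempty := by
    rw [← Finset.card_pos]
    omega
  obtain ⟨α, _, hα, ⟨e⟩⟩ := HilbAux.gal_mulEquiv s h0 hsne (by rwa [hsp])
  have hspl : ((HilbAux.qpoly s).map
      (algebraMap (RatFunc k) (AlgebraicClosure (RatFunc k)))).Splits :=
    IsAlgClosed.splits _
  let F : IntermediateField (RatFunc k) (AlgebraicClosure (RatFunc k)) :=
    adjoin (RatFunc k) ((HilbAux.qpoly s).rootSet (AlgebraicClosure (RatFunc k)))
  haveI hF : (HilbAux.qpoly s).IsSplittingField (RatFunc k) F :=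
    adjoin_rootSet_isSplittingField hspl
  haveI : FiniteDimensional (RatFunc k) F :=
    Polynomial.IsSplittingField.finiteDimensional F (HilbAux.qpoly s)
  haveI : IsGalois (RatFunc k) F :=
    IsGalois.of_separable_splitting_field (HilbAux.qpoly_separable s h0 hsne)
  have e2 : (F ≃ₐ[RatFunc k] F) ≃* (HilbAux.qpoly s).Gal :=
    AlgEquiv.autCongr (Polynomial.IsSplittingField.algEquiv F (HilbAux.qpoly s))
  obtain ⟨H, γ, h1, h2, h3, h4⟩ :=
    HilbAux.transfer (e2.trans e).symm (hgrp α (hα.trans hsp))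
  obtain ⟨a⟩ := HilbAux.aut_fixed H γ h1 h2 h3
  have eL : fixedField H ≃ₐ[RatFunc k] lift (fixedField H) := liftAlgEquiv (fixedField H)
  haveI hfd : FiniteDimensional (RatFunc k) (lift (fixedField H)) :=
    LinearEquiv.finiteDimensional eL.toLinearEquiv
  refine ⟨lift (fixedField H), hfd, AlgEquiv.Algebra.isSeparable eL,
    ⟨(AlgEquiv.autCongr eL).symm.trans a⟩, ?_⟩
  apply HilbAux.two_le_finrank
  intro hle
  have hFD := HilbAux.le_of_core F H h4 _ HilbAux.const_stable hle
  obtain ⟨x, hx⟩ := IsAlgClosed.exists_aeval_eq_zero (AlgebraicClosure (RatFunc k))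
    (HilbAux.qpoly s) (HilbAux.qpoly_irreducible s).degree_pos.ne'
  refine HilbAux.not_mem_const s hx (hFD (subset_adjoin _ _ ?_))
  rw [Polynomial.mem_rootSet]
  exact ⟨(HilbAux.qpoly_monic s).ne_zero, hx⟩
end

section
/- Let K ⊆ L be fields with L/K finite Galois, T an indeterminate, y ∈ K with K = k(y) for some subfield k, and x a root of X^3 + (T−y)X + (T−y) in an algebraic closure of L(T). Set E = L(T, x). Then every automorphism of E fixing K(T) pointwise fixes x, and Aut(E/K(T)) ≅ Gal(L/K). -/
open Polynomial IntermediateField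

set_option synthInstance.maxHeartbeats 1000000
set_option maxHeartbeats 1000000

lemma quad_aux {L : Type*} [Field L] (w : RatFunc L)
    (h : (RatFunc.X + 1) * (w ^ 2 + w) + 1 = 0) : False := by
  have hd : algebraMap L[X] (RatFunc L) w.denom ≠ 0 :=
    RatFunc.algebraMap_ne_zero w.denom_ne_zero
  have hw := RatFunc.num_div_denom w
  have hco := RatFunc.isCoprime_num_denom w
  set a := w.num
  set b := w.denom
  have h1 : (X + 1 : L[X]) * (a ^ 2 + a * b) + b ^ 2 = 0 := by
    apply RatFunc.algebraMap_injective L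
    simp only [map_add, map_mul, map_pow, map_one, map_zero, RatFunc.algebraMap_X]
    rw [← hw] at h
    field_simp at h
    linear_combination h
  have hp : Prime (X + 1 : L[X]) := by
    have := Polynomial.prime_X_sub_C (-1 : L)
    simpa using this
  have hb : (X + 1 : L[X]) ∣ b :=
    hp.dvd_of_dvd_pow (n := 2) ⟨-(a ^ 2 + a * b), by linear_combination h1⟩
  obtain ⟨c, hc⟩ := hb
  have h2 : a ^ 2 = (X + 1) * (-(a * c) - c ^ 2) := by
    apply mul_left_cancel₀ hp.ne_zero
    rw [hc] at h1
    linear_combination h1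
  have ha : (X + 1 : L[X]) ∣ a := hp.dvd_of_dvd_pow (n := 2) ⟨_, h2⟩
  exact hp.not_isUnit (hco.isUnit_of_dvd' ha ⟨c, hc⟩)

lemma X_add_one_ne {L : Type*} [Field L] : (RatFunc.X + 1 : RatFunc L) ≠ 0 := by
  intro h
  have : (X + C 1 : L[X]) = 0 := by
    apply RatFunc.algebraMap_injective L
    simpa using h
  exact Polynomial.X_add_C_ne_zero 1 this

lemma root_unique {L : Type*} [Field L] (z S : RatFunc L)
    (hS : S * (RatFunc.X + 1) = - RatFunc.X ^ 3)
    (hz : z ^ 3 + S * z + S = 0) : z = RatFunc.X := by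
  by_contra hne
  have h0 : (RatFunc.X : RatFunc L) ≠ 0 := RatFunc.X_ne_zero
  have h1 := X_add_one_ne (L := L)
  have hq : z ^ 2 + RatFunc.X * z + (RatFunc.X ^ 2 + S) = 0 := by
    apply mul_left_cancel₀ (sub_ne_zero.2 hne)
    linear_combination hz - hS
  apply quad_aux (z / RatFunc.X)
  field_simp
  linear_combination (RatFunc.X + 1) * hq - hS

/-- The main argument, for a model of `E` identified with the rational function field `L(x)`. -/
theorem core (K L KT M : Type*) [Field K] [Field L] [Algebra K L]
    [Normal K L] [Field KT] [Field M] [Algebra K KT] [Algebra KT M] [Algebra K M]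
    [IsScalarTower K KT M] (y : K) (e : RatFunc L ≃ₐ[K] M) (t : KT)
    (ht : algebraMap KT M t =
      e (algebraMap K (RatFunc L) y - RatFunc.X ^ 3 / (RatFunc.X + 1)))
    (hgen : ∀ f : M ≃ₐ[K] M, f (algebraMap KT M t) = algebraMap KT M t →
      ∀ r : KT, f (algebraMap KT M r) = algebraMap KT M r) :
    (∀ σ : M ≃ₐ[KT] M, σ (e RatFunc.X) = e RatFunc.X) ∧
      Nonempty ((M ≃ₐ[KT] M) ≃* (L ≃ₐ[K] L)) := by
  have h1 := X_add_one_ne (L := L)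
  have part1 : ∀ σ : M ≃ₐ[KT] M, σ (e RatFunc.X) = e RatFunc.X := by
    intro σ
    let s : RatFunc L ≃ₐ[K] RatFunc L := (e.trans (σ.restrictScalars K)).trans e.symm
    have hs : ∀ f, s f = e.symm (σ (e f)) := fun f => rfl
    have hst : s (algebraMap K (RatFunc L) y - RatFunc.X ^ 3 / (RatFunc.X + 1)) =
        algebraMap K (RatFunc L) y - RatFunc.X ^ 3 / (RatFunc.X + 1) := by
      rw [hs, ← ht, AlgEquiv.commutes, ht, AlgEquiv.symm_apply_apply]
    have hsX : s RatFunc.X = RatFunc.X := by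
      apply root_unique _ (- (RatFunc.X ^ 3 / (RatFunc.X + 1)))
      · field_simp
      · rw [map_sub, AlgEquiv.commutes, sub_right_inj] at hst
        have h2 : s RatFunc.X + 1 ≠ 0 := by
          have := (map_ne_zero s).2 h1
          simpa using this
        rw [← hst, map_div₀, map_pow, map_add, map_one]
        field_simp
        ring
    rw [hs] at hsX
    exact (AlgEquiv.symm_apply_eq e).1 hsX
  refine ⟨part1, ?_⟩
  let Φ : (M ≃ₐ[KT] M) →* (L ≃ₐ[K] L) :=
    { toFun := fun σ => ((e.trans (σ.restrictScalars K)).trans e.symm).restrictNormal L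
      map_one' := by
        ext l
        apply (algebraMap L (RatFunc L)).injective
        rw [AlgEquiv.restrictNormal_commutes]
        simp
      map_mul' := fun σ τ => by
        ext l
        apply (algebraMap L (RatFunc L)).injective
        rw [AlgEquiv.mul_apply]
        simp only [AlgEquiv.restrictNormal_commutes]
        simp only [AlgEquiv.trans_apply, AlgEquiv.restrictScalars_apply,
          AlgEquiv.apply_symm_apply, AlgEquiv.mul_apply] }
  have hΦ : ∀ σ l, algebraMap L (RatFunc L) (Φ σ l) = e.symm (σ (e (algebraMap L _ l))) :=
    fun σ l => AlgEquiv.restrictNormal_commutes _ _ _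
  have hext : ∀ f g : RatFunc L →+* M, (∀ l, f (algebraMap L _ l) = g (algebraMap L _ l)) →
      f RatFunc.X = g RatFunc.X → f = g := by
    intro f g h h'
    apply IsFractionRing.injective_comp_algebraMap (A := L[X])
    apply Polynomial.ringHom_ext
    · intro l; simpa using h l
    · simpa using h'
  refine ⟨MulEquiv.ofBijective Φ ⟨?_, ?_⟩⟩
  · intro σ τ h
    have := hext ((σ : M →+* M).comp (e : RatFunc L →+* M))
      ((τ : M →+* M).comp (e : RatFunc L →+* M)) (fun l => by
        have h3 := hΦ σ l
        rw [h, hΦ] at h3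
        simpa using h3.symm) (by
        have := part1 σ
        have := part1 τ
        simp_all)
    ext m
    obtain ⟨r, rfl⟩ := e.surjective m
    exact RingHom.congr_fun this r
  · intro τ
    let s : RatFunc L ≃ₐ[K] RatFunc L :=
      IsFractionRing.fieldEquivOfAlgEquiv K (RatFunc L) (RatFunc L)
        (Polynomial.mapAlgEquiv τ)
    have hsX : s RatFunc.X = RatFunc.X := by
      have := IsFractionRing.fieldEquivOfAlgEquiv_algebraMap K (RatFunc L) (RatFunc L)
        (Polynomial.mapAlgEquiv τ) X
      simpa using this
    have hsC : ∀ l, s (algebraMap L _ l) = algebraMap L _ (τ l) := by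
      intro l
      have := IsFractionRing.fieldEquivOfAlgEquiv_algebraMap K (RatFunc L) (RatFunc L)
        (Polynomial.mapAlgEquiv τ) (C l)
      simpa using this
    let σ₀ : M ≃ₐ[K] M := (e.symm.trans s).trans e
    have hσ₀ : ∀ m, σ₀ m = e (s (e.symm m)) := fun _ => rfl
    have hfix := hgen σ₀ (by
      rw [hσ₀, ht, AlgEquiv.symm_apply_apply, map_sub, AlgEquiv.commutes, map_div₀, map_pow,
        map_add, map_one, hsX])
    let σ : M ≃ₐ[KT] M := AlgEquiv.ofRingEquiv (f := (σ₀ : M ≃+* M))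
      (fun r => hfix r)
    refine ⟨σ, ?_⟩
    ext l
    apply (algebraMap L (RatFunc L)).injective
    rw [hΦ]
    change e.symm (e (s (e.symm (e _)))) = _
    simp only [AlgEquiv.symm_apply_apply, hsC]

/-- Let `L/K` be finite Galois, `K = k₀(y)`, and `x` a root of `X^3 + (T−y)X + (T−y)` in
an algebraic closure `Ω` of `L(T)`. With `E = L(T, x)`, every automorphism of `E` fixing
`K(T)` pointwise fixes `x`, and `Aut(E/K(T)) ≅ Gal(L/K)`. -/
theorem aut_of_compositum (K L : Type*) [Field K] [Field L] [Algebra K L]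
    [FiniteDimensional K L] [IsGalois K L]
    (y : K) (k₀ : Subfield K) (hk₀ : adjoin k₀ {y} = (⊤ : IntermediateField k₀ K))
    (x : AlgebraicClosure (RatFunc L))
    (hx : aeval x (X ^ 3 + C (RatFunc.X - algebraMap K (RatFunc L) y) * X +
      C (RatFunc.X - algebraMap K (RatFunc L) y) : Polynomial (RatFunc L)) = 0)
    -- `K(T)`, as an intermediate field of `Ω/K`
    (KT : IntermediateField K (AlgebraicClosure (RatFunc L)))
    (hKT : KT = adjoin K {algebraMap (RatFunc L) (AlgebraicClosure (RatFunc L)) RatFunc.X})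
    -- `E = L(T, x)`, as an intermediate field of `Ω/K`
    (E : IntermediateField K (AlgebraicClosure (RatFunc L)))
    (hE : E = adjoin K (Set.range (algebraMap L (AlgebraicClosure (RatFunc L))) ∪
      {algebraMap (RatFunc L) (AlgebraicClosure (RatFunc L)) RatFunc.X, x}))
    (hle : KT ≤ E) (hxE : x ∈ extendScalars hle) :
    (∀ σ : extendScalars hle ≃ₐ[KT] extendScalars hle, σ ⟨x, hxE⟩ = ⟨x, hxE⟩) ∧
      Nonempty ((extendScalars hle ≃ₐ[KT] extendScalars hle) ≃* (L ≃ₐ[K] L)) := by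
  have h1 : x + 1 ≠ 0 := by
    intro h
    have hx1 : x = -1 := by linear_combination h
    rw [hx1] at hx
    simp at hx
    ring_nf at hx
    simp at hx
  set T : AlgebraicClosure (RatFunc L) :=
    algebraMap (RatFunc L) (AlgebraicClosure (RatFunc L)) RatFunc.X with hT
  have hTx : T = algebraMap K _ y - x ^ 3 / (x + 1) := by
    simp only [map_add, map_mul, map_pow, aeval_X, aeval_C, map_sub,
      ← IsScalarTower.algebraMap_apply] at hx
    field_simp
    linear_combination hx
  have htr : Transcendental L x := by
    intro hal
    have hTal : IsAlgebraic L T := by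
      rw [hTx, IsScalarTower.algebraMap_apply K L]
      have h2 : IsAlgebraic L (x + 1) := hal.add isAlgebraic_one
      rw [div_eq_mul_inv]
      exact isAlgebraic_algebraMap _ |>.sub ((hal.pow 3).mul h2.inv)
    rw [hT, isAlgebraic_algebraMap_iff (algebraMap (RatFunc L) _).injective] at hTal
    exact RatFunc.transcendental_X hTal
  have hTE : T ∈ KT := by rw [hKT]; exact mem_adjoin_simple_self K T
  have hEL : ∀ z, z ∈ E ↔ z ∈ adjoin L {x} := by
    intro z
    have : E = (adjoin L {x}).restrictScalars K := by
      rw [hE]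
      apply le_antisymm
      · rw [adjoin_le_iff]
        have hxx : x ∈ adjoin L {x} := mem_adjoin_simple_self L x
        rintro w (⟨l, rfl⟩ | rfl | rfl)
        · exact (adjoin L {x}).algebraMap_mem l
        · change T ∈ adjoin L {x}
          rw [hTx, IsScalarTower.algebraMap_apply K L]
          exact sub_mem ((adjoin L {x}).algebraMap_mem _)
            (div_mem (pow_mem hxx 3) (add_mem hxx (one_mem _)))
        · exact hxx
      · intro w hw
        have hw' : w ∈ adjoin L {x} := hw
        induction hw' using adjoin_induction with
        | mem w h =>
          rw [Set.mem_singleton_iff.1 h]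
          exact subset_adjoin _ _ (by simp)
        | algebraMap l => exact subset_adjoin _ _ (by simp)
        | add a b ha hb iha ihb => exact add_mem (iha ha) (ihb hb)
        | inv a ha iha => exact inv_mem (iha ha)
        | mul a b ha hb iha ihb => exact mul_mem (iha ha) (ihb hb)
    rw [this]; rfl
  let e₁ := RatFunc.algEquivOfTranscendental x htr
  let f : RatFunc L →ₐ[K] extendScalars hle :=
    { toFun := fun r => ⟨(e₁ r : AlgebraicClosure (RatFunc L)), (hEL _).2 (e₁ r).2⟩
      map_one' := by ext; simp
      map_zero' := by ext; simp
      map_mul' := fun a b => by ext; simp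
      map_add' := fun a b => by ext; simp
      commutes' := fun c => by
        ext
        change ((e₁ (algebraMap K _ c) : adjoin L {x}) : AlgebraicClosure (RatFunc L)) =
          algebraMap K _ c
        rw [IsScalarTower.algebraMap_apply K L (RatFunc L), AlgEquiv.commutes,
          IsScalarTower.algebraMap_apply K L (AlgebraicClosure (RatFunc L))]
        rfl }
  have hf : Function.Bijective f := by
    refine ⟨f.toRingHom.injective, ?_⟩
    rintro ⟨z, hz⟩
    obtain ⟨r, hr⟩ := e₁.surjective ⟨z, (hEL z).1 hz⟩
    refine ⟨r, ?_⟩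
    ext
    change ((e₁ r : adjoin L {x}) : AlgebraicClosure (RatFunc L)) = z
    rw [hr]
  let e := AlgEquiv.ofBijective f hf
  have heX : e RatFunc.X = ⟨x, hxE⟩ := by
    ext
    exact RatFunc.algEquivOfTranscendental_X x htr
  have key := core K L KT (extendScalars hle) y e ⟨T, hTE⟩ (by
    rw [map_sub, AlgEquiv.commutes, map_div₀, map_pow, map_add, map_one, heX]
    ext
    exact hTx) (by
    intro g hg r
    have := IntermediateField.algHom_ext_of_eq_adjoin K hKT
      (φ₁ := (g : extendScalars hle →ₐ[K] extendScalars hle).comp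
        (IsScalarTower.toAlgHom K KT (extendScalars hle)))
      (φ₂ := IsScalarTower.toAlgHom K KT (extendScalars hle)) (by
        intro w hw
        obtain rfl := Set.mem_singleton_iff.1 hw
        exact hg)
    exact AlgHom.congr_fun this r)
  rw [heX] at key
  exact key
end

section
/- Let k be a Hilbertian field, G a finite group, and E/k(T) a finite separable extension with Aut(E/k(T)) ≅ G. Then there exist infinitely many t₀ ∈ k such that the specialized extension E_{t₀}/k is separable with Aut(E_{t₀}/k) ≅ G. -/
open Polynomial IntermediateField

set_option synthInstance.maxHeartbeats 1000000
set_option maxHeartbeats 1000000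

theorem exists_ext {R S Ω : Type*} [CommRing R] [CommRing S] [Algebra R S]
    [Algebra.IsIntegral R S] (hinj : Function.Injective (algebraMap R S)) [Field Ω]
    [IsAlgClosed Ω] (ψ : R →+* Ω) : ∃ φ : S →+* Ω, φ.comp (algebraMap R S) = ψ := by
  have hp : (RingHom.ker ψ).IsPrime := RingHom.ker_isPrime ψ
  obtain ⟨Q, -, hQ, hQp⟩ := Ideal.exists_ideal_over_prime_of_isIntegral (RingHom.ker ψ) (⊥ : Ideal S)
    (by
      intro r hr
      have : algebraMap R S r = 0 := by simpa using hr
      have : r = 0 := hinj (by simpa using this)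
      simp [this])
  have : Q.LiesOver (RingHom.ker ψ) := ⟨hQp.symm⟩
  let : Algebra (R ⧸ RingHom.ker ψ) Ω := (RingHom.kerLift ψ).toAlgebra
  have : FaithfulSMul (R ⧸ RingHom.ker ψ) Ω :=
    (faithfulSMul_iff_algebraMap_injective _ _).2 (RingHom.kerLift_injective ψ)
  have : Algebra.IsIntegral (R ⧸ RingHom.ker ψ) (S ⧸ Q) := inferInstance
  have : Algebra.IsAlgebraic (R ⧸ RingHom.ker ψ) (S ⧸ Q) := inferInstance
  have hi : Function.Injective (algebraMap (R ⧸ RingHom.ker ψ) (S ⧸ Q)) :=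
    FaithfulSMul.algebraMap_injective _ _
  have : Module.IsTorsionFree (R ⧸ RingHom.ker ψ) (S ⧸ Q) :=
    (Module.isTorsionFree_iff_algebraMap_injective).2 hi
  let l : (S ⧸ Q) →ₐ[R ⧸ RingHom.ker ψ] Ω := IsAlgClosed.lift
  refine ⟨(l : (S ⧸ Q) →+* Ω).comp (Ideal.Quotient.mk Q), ?_⟩
  ext r
  have := l.commutes (Ideal.Quotient.mk _ r)
  rw [← RingHom.kerLift_mk ψ r]
  exact this

/-- The hom from the normalizer. -/
noncomputable def normRestr {K L : Type*} [Field K] [Field L] [Algebra K L] [FiniteDimensional K L]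
    [IsGalois K L] (F : IntermediateField K L) :
    Subgroup.normalizer (F.fixingSubgroup : Set (L ≃ₐ[K] L)) →* (F ≃ₐ[K] F) := by
  have key : ∀ σ ∈ Subgroup.normalizer (F.fixingSubgroup : Set (L ≃ₐ[K] L)), ∀ x ∈ F, σ x ∈ F := by
    intro σ hσ x hx
    rw [← IsGalois.fixedField_fixingSubgroup F, mem_fixedField_iff]
    intro h hh
    have h1 := (Subgroup.mem_normalizer_iff''.1 hσ h).1 hh
    have h2 : (σ⁻¹ * h * σ) x = x := (IntermediateField.mem_fixingSubgroup_iff F _).1 h1 x hx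
    have h3 := congrArg σ h2
    simpa [AlgEquiv.mul_apply] using h3
  exact MonoidHom.mk' (fun σ =>
    { toFun := fun x => ⟨σ.1 x.1, key σ.1 σ.2 x.1 x.2⟩
      invFun := fun x => ⟨(σ⁻¹).1 x.1, key (σ⁻¹).1 (σ⁻¹).2 x.1 x.2⟩
      left_inv := fun x => by ext; simp
      right_inv := fun x => by ext; simp
      map_mul' := fun x y => by ext; simp
      map_add' := fun x y => by ext; simp
      commutes' := fun x => by ext; simp }) (fun σ τ => by ext; rfl)

theorem normRestr_coe {K L : Type*} [Field K] [Field L] [Algebra K L] [FiniteDimensional K L]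
    [IsGalois K L] (F : IntermediateField K L)
    (σ : Subgroup.normalizer (F.fixingSubgroup : Set (L ≃ₐ[K] L))) (x : F) :
    ((normRestr F σ x : F) : L) = σ.1 x.1 := rfl

theorem normRestr_surj {K L : Type*} [Field K] [Field L] [Algebra K L] [FiniteDimensional K L]
    [IsGalois K L] (F : IntermediateField K L) : Function.Surjective (normRestr F) := by
  intro τ
  have hl : ∀ x : F, τ.liftNormal L x.1 = (τ x).1 := fun x => τ.liftNormal_commutes L x
  refine ⟨⟨τ.liftNormal L, ?_⟩, ?_⟩
  · rw [Subgroup.mem_normalizer_iff'']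
    intro h
    simp only [IntermediateField.mem_fixingSubgroup_iff, AlgEquiv.mul_apply]
    constructor
    · intro hh x hx
      have := hl ⟨x, hx⟩
      simp only at this
      rw [this, hh _ (τ ⟨x, hx⟩).2, ← this]
      exact AlgEquiv.symm_apply_apply _ _
    · intro hh x hx
      have h1 := hl (τ.symm ⟨x, hx⟩)
      rw [AlgEquiv.apply_symm_apply] at h1
      have h2 := hh _ (τ.symm ⟨x, hx⟩).2
      rw [h1] at h2
      have h3 := congrArg (τ.liftNormal L) h2
      rw [h1] at h3
      exact (AlgEquiv.apply_symm_apply (τ.liftNormal L) (h x)).symm.trans h3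
  · ext x
    rw [normRestr_coe]
    exact hl x

theorem normRestr_ker {K L : Type*} [Field K] [Field L] [Algebra K L] [FiniteDimensional K L]
    [IsGalois K L] (F : IntermediateField K L)
    (σ : Subgroup.normalizer (F.fixingSubgroup : Set (L ≃ₐ[K] L))) :
    σ ∈ (normRestr F).ker ↔ σ.1 ∈ F.fixingSubgroup := by
  rw [MonoidHom.mem_ker, IntermediateField.mem_fixingSubgroup_iff]
  constructor
  · intro h x hx
    rw [← normRestr_coe F σ ⟨x, hx⟩, h]; rfl
  · intro h
    ext x
    rw [normRestr_coe]
    exact h x.1 x.2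

theorem aut_equiv {K L K' L' : Type*} [Field K] [Field L] [Algebra K L] [FiniteDimensional K L]
    [IsGalois K L] [Field K'] [Field L'] [Algebra K' L'] [FiniteDimensional K' L']
    [IsGalois K' L'] (F : IntermediateField K L) (F' : IntermediateField K' L')
    (e : (L ≃ₐ[K] L) ≃* (L' ≃ₐ[K'] L'))
    (he : ∀ σ, σ ∈ F.fixingSubgroup ↔ e σ ∈ F'.fixingSubgroup) :
    Nonempty ((F ≃ₐ[K] F) ≃* (F' ≃ₐ[K'] F')) := by
  have hN : ∀ σ, σ ∈ Subgroup.normalizer (F.fixingSubgroup : Set (L ≃ₐ[K] L)) ↔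
      e σ ∈ Subgroup.normalizer (F'.fixingSubgroup : Set (L' ≃ₐ[K'] L')) := by
    intro σ
    simp only [Subgroup.mem_normalizer_iff]
    constructor
    · intro h g
      obtain ⟨g, rfl⟩ := e.surjective g
      simpa only [he, map_mul, map_inv] using h g
    · intro h g
      simpa only [he, map_mul, map_inv] using h (e g)
  let eN : Subgroup.normalizer (F.fixingSubgroup : Set (L ≃ₐ[K] L)) ≃*
      Subgroup.normalizer (F'.fixingSubgroup : Set (L' ≃ₐ[K'] L')) :=
    { toFun := fun σ => ⟨e σ.1, (hN _).1 σ.2⟩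
      invFun := fun σ => ⟨e.symm σ.1, (hN _).2 (by simp)⟩
      left_inv := fun σ => by ext; simp
      right_inv := fun σ => by ext; simp
      map_mul' := fun σ τ => by ext; simp }
  have hker : (normRestr F).ker.map (eN : _ →* _) = (normRestr F').ker := by
    ext σ
    obtain ⟨σ, rfl⟩ := eN.surjective σ
    rw [normRestr_ker]
    simp only [Subgroup.mem_map]
    constructor
    · rintro ⟨τ, hτ, h⟩
      obtain rfl := eN.injective h
      exact (he _).1 ((normRestr_ker F τ).1 hτ)
    · intro h
      exact ⟨σ, (normRestr_ker F σ).2 ((he _).2 h), rfl⟩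
  exact ⟨(QuotientGroup.quotientKerEquivOfSurjective _ (normRestr_surj F)).symm.trans
    ((QuotientGroup.congr _ _ eN hker).trans
    (QuotientGroup.quotientKerEquivOfSurjective _ (normRestr_surj F')))⟩

theorem coe_aeval_if {k Ω : Type*} [Field k] [Field Ω] [Algebra k Ω] (F : IntermediateField k Ω)
    (z : F) (q : k[X]) : ((aeval z q : F) : Ω) = aeval (z : Ω) q :=
  (aeval_algHom_apply F.val z q).symm

/-- Pure algebra: if the values `f σ` behave like specialized conjugates, we get the Galois group. -/
theorem gal_of_values {k Ω Γ : Type*} [Field k] [Field Ω] [Algebra k Ω] [Group Γ] [Finite Γ]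
    (p : k[X]) (hp : p.Monic) (hirr : Irreducible p) (hcard : Nat.card Γ = p.natDegree)
    (f : Γ → Ω) (hf : Function.Injective f) (hroot : ∀ σ, aeval (f σ) p = 0)
    (c : Γ → k) (hc : ∀ σ, c σ ≠ 0) (b : Γ → k[X])
    (hb : ∀ σ τ, c τ • f (σ * τ) = aeval (f σ) (b τ)) (x₁ : Ω) (hx₁ : f 1 = x₁) :
    FiniteDimensional k k⟮x₁⟯ ∧ IsGalois k k⟮x₁⟯ ∧
      ∃ e : Γ ≃* (k⟮x₁⟯ ≃ₐ[k] k⟮x₁⟯), ∀ σ,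
        ((e σ (AdjoinSimple.gen k x₁) : k⟮x₁⟯) : Ω) = f σ := by
  subst hx₁
  have hint : IsIntegral k (f 1) := ⟨p, hp, hroot 1⟩
  have hmin : p = minpoly k (f 1) := minpoly.eq_of_irreducible_of_monic hirr (hroot 1) hp
  have hfd : FiniteDimensional k k⟮f 1⟯ := adjoin.finiteDimensional hint
  have hrank : Module.finrank k k⟮f 1⟯ = Nat.card Γ := by
    rw [adjoin.finrank hint, hcard, ← hmin]
  have hmem : ∀ σ, f σ ∈ k⟮f 1⟯ := by
    intro σ
    have h1 := hb 1 σ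
    rw [one_mul] at h1
    have h2 : f σ = (c σ)⁻¹ • aeval (f 1) (b σ) := by
      rw [← h1, smul_smul, inv_mul_cancel₀ (hc σ), one_smul]
    rw [h2]
    apply IntermediateField.smul_mem
    rw [show f 1 = ((AdjoinSimple.gen k (f 1) : k⟮f 1⟯) : Ω) from rfl, ← coe_aeval_if]
    exact Subtype.property _
  have hτ : ∀ σ, ∃ τ : k⟮f 1⟯ ≃ₐ[k] k⟮f 1⟯,
      ((τ (AdjoinSimple.gen k (f 1)) : k⟮f 1⟯) : Ω) = f σ := by
    intro σ
    have hr : (⟨f σ, hmem σ⟩ : k⟮f 1⟯) ∈ (minpoly k (f 1)).aroots k⟮f 1⟯ := by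
      rw [mem_aroots]
      refine ⟨minpoly.ne_zero hint, ?_⟩
      apply Subtype.val_injective
      rw [← hmin]
      rw [coe_aeval_if]
      exact hroot σ
    refine ⟨(algEquivEquivAlgHom k k⟮f 1⟯).symm
      ((algHomAdjoinIntegralEquiv k hint).symm ⟨_, hr⟩), ?_⟩
    have := algHomAdjoinIntegralEquiv_symm_apply_gen k hint ⟨_, hr⟩
    exact congrArg Subtype.val this
  choose τ hτ using hτ
  have hev : ∀ σ (q : k[X]) (z : k⟮f 1⟯), (z : Ω) = aeval (f 1) q →
      ((τ σ z : k⟮f 1⟯) : Ω) = aeval (f σ) q := by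
    intro σ q z hz
    have hz' : z = aeval (AdjoinSimple.gen k (f 1)) q := by
      apply Subtype.val_injective
      rw [coe_aeval_if, hz]; rfl
    have h1 := aeval_algHom_apply (τ σ : k⟮f 1⟯ →ₐ[k] k⟮f 1⟯) (AdjoinSimple.gen k (f 1)) q
    rw [hz', ← hτ σ, ← coe_aeval_if]
    exact congrArg Subtype.val h1.symm
  have hval : ∀ σ ρ, ((τ σ ⟨f ρ, hmem ρ⟩ : k⟮f 1⟯) : Ω) = f (σ * ρ) := by
    intro σ ρ
    have h1 := hev σ (b ρ) (c ρ • ⟨f ρ, hmem ρ⟩) (by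
      have := hb 1 ρ
      rw [one_mul] at this
      rw [← this]; rfl)
    rw [map_smul, ← hb] at h1
    exact smul_right_injective Ω (hc ρ) h1
  have hext : ∀ g g' : k⟮f 1⟯ ≃ₐ[k] k⟮f 1⟯,
      g (AdjoinSimple.gen k (f 1)) = g' (AdjoinSimple.gen k (f 1)) → g = g' := by
    intro g g' h
    have : (g : k⟮f 1⟯ →ₐ[k] k⟮f 1⟯) = g' := by
      apply (adjoin.powerBasis hint).algHom_ext
      simpa using h
    ext z
    exact congrArg Subtype.val (DFunLike.congr_fun this z)
  let t : Γ →* (k⟮f 1⟯ ≃ₐ[k] k⟮f 1⟯) := MonoidHom.mk' τ (by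
    intro σ ρ
    apply hext
    apply Subtype.val_injective
    rw [AlgEquiv.mul_apply]
    have : τ ρ (AdjoinSimple.gen k (f 1)) = ⟨f ρ, hmem ρ⟩ := Subtype.val_injective (hτ ρ)
    rw [this]
    exact (hτ _).trans (hval σ ρ).symm)
  have htinj : Function.Injective t := by
    intro σ ρ h
    apply hf
    exact (hτ σ).symm.trans ((congrArg (fun g : k⟮f 1⟯ ≃ₐ[k] k⟮f 1⟯ =>
      ((g (AdjoinSimple.gen k (f 1)) : k⟮f 1⟯) : Ω)) h).trans (hτ ρ))
  have hle : Nat.card (k⟮f 1⟯ ≃ₐ[k] k⟮f 1⟯) ≤ Nat.card Γ := by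
    rw [← hrank]
    rw [Nat.card_eq_fintype_card]
    exact AlgEquiv.card_le
  have hcardeq : Nat.card Γ = Nat.card (k⟮f 1⟯ ≃ₐ[k] k⟮f 1⟯) :=
    le_antisymm (Nat.card_le_card_of_injective t htinj) hle
  have htbij : Function.Bijective t :=
    (Nat.bijective_iff_injective_and_card t).2 ⟨htinj, hcardeq⟩
  refine ⟨hfd, IsGalois.of_card_aut_eq_finrank _ _ (by rw [hrank, hcardeq]),
    MulEquiv.ofBijective t htbij, hτ⟩

theorem specialize_gal {k K L Ω : Type*} [Field k] [Field K] [Field L] [Field Ω]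
    [Algebra k[X] K] [IsFractionRing k[X] K] [Algebra K L] [Algebra k[X] L]
    [IsScalarTower k[X] K L] [FiniteDimensional K L] [IsGalois K L]
    [Algebra k Ω] [IsAlgClosure k Ω]
    (P a : k[X][X]) (x : L) (hx : K⟮x⟯ = ⊤) (hint : IsIntegral k[X] x)
    (hmin : minpoly K x = P.map (algebraMap k[X] K)) :
    ∃ n : k[X], n ≠ 0 ∧ ∀ t : k, n.eval t ≠ 0 → Irreducible (P.map (evalRingHom t)) →
      ∀ xt : Ω, aeval xt (P.map (evalRingHom t)) = 0 →
      FiniteDimensional k k⟮xt⟯ ∧ IsGalois k k⟮xt⟯ ∧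
      ∃ e : (L ≃ₐ[K] L) ≃* (k⟮xt⟯ ≃ₐ[k] k⟮xt⟯), ∀ σ,
        σ (aeval x a) = aeval x a ↔
        e σ (aeval (AdjoinSimple.gen k xt) (a.map (evalRingHom t))) =
          aeval (AdjoinSimple.gen k xt) (a.map (evalRingHom t)) := by
  classical
  have : IsAlgClosed Ω := IsAlgClosure.isAlgClosed k
  have hintK : IsIntegral K x := Algebra.IsIntegral.isIntegral x
  have hinjAK : Function.Injective (algebraMap k[X] K) := IsFractionRing.injective _ _
  have hinjAL : Function.Injective (algebraMap k[X] L) := by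
    rw [IsScalarTower.algebraMap_eq k[X] K L]
    exact (algebraMap K L).injective.comp hinjAK
  have hPm : P.Monic := by
    apply monic_of_injective hinjAK
    rw [← hmin]; exact minpoly.monic hintK
  have hPx : aeval x P = 0 := by
    have := minpoly.aeval K x
    rwa [hmin, aeval_map_algebraMap] at this
  have hcard : Nat.card (L ≃ₐ[K] L) = P.natDegree := by
    rw [IsGalois.card_aut_eq_finrank, ← IntermediateField.finrank_top', ← hx, adjoin.finrank hintK,
      hmin, hPm.natDegree_map]
  -- conjugates as polynomial expressions
  have hq : ∀ σ : L ≃ₐ[K] L, ∃ c : k[X], c ≠ 0 ∧ ∃ b : k[X][X], c • σ x = aeval x b := by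
    intro σ
    have h1 : σ x ∈ K⟮x⟯ := by rw [hx]; trivial
    rw [← IntermediateField.mem_toSubalgebra,
      adjoin_simple_toSubalgebra_of_isAlgebraic hintK.isAlgebraic,
      Algebra.adjoin_singleton_eq_range_aeval] at h1
    obtain ⟨q, hq⟩ := h1
    obtain ⟨c, hc, hcb⟩ := IsLocalization.integerNormalization_spec (nonZeroDivisors k[X]) q
    refine ⟨c, nonZeroDivisors.ne_zero hc,
      IsLocalization.integerNormalization (nonZeroDivisors k[X]) q, ?_⟩
    rw [← aeval_map_algebraMap K, hcb, ← hq]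
    rw [← algebraMap_smul K c q, map_smul, algebraMap_smul]
    rfl
  choose c hc b hb using hq
  let B := integralClosure k[X] L
  have hconj : ∀ σ : L ≃ₐ[K] L, IsIntegral k[X] (σ x) := fun σ =>
    hint.map (σ.toAlgHom.restrictScalars k[X])
  let bx : (L ≃ₐ[K] L) → B := fun σ => ⟨σ x, hconj σ⟩
  have hsig : ∀ (σ : L ≃ₐ[K] L) (q : k[X][X]), σ (aeval x q) = aeval (σ x) q := fun σ q =>
    (aeval_algHom_apply (σ.toAlgHom.restrictScalars k[X]) x q).symm
  have hBcoe : ∀ (σ : L ≃ₐ[K] L) (q : k[X][X]), ((aeval (bx σ) q : B) : L) = σ (aeval x q) := by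
    intro σ q
    rw [hsig]
    exact (aeval_algHom_apply B.val (bx σ) q).symm
  have hbxinj : ∀ σ τ, bx σ = bx τ → σ = τ := by
    intro σ τ h
    have h1 : σ x = τ x := congrArg Subtype.val h
    apply AlgEquiv.coe_toAlgHom_injective
    apply AlgHom.ext_of_adjoin_eq_top (s := {x})
    · rw [← adjoin_simple_toSubalgebra_of_isAlgebraic hintK.isAlgebraic, hx]; rfl
    · intro y hy
      obtain rfl := hy
      exact h1
  let z : B := (∏ σ, algebraMap k[X] B (c σ)) *
    (∏ σ, ∏ τ, if σ = τ then 1 else bx σ - bx τ) *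
    (∏ σ, if aeval (bx σ) a = aeval (bx 1) a then 1 else aeval (bx σ) a - aeval (bx 1) a)
  have hinjAB : Function.Injective (algebraMap k[X] B) := by
    intro r s h
    exact hinjAL (congrArg Subtype.val h)
  have hz : z ≠ 0 := by
    refine mul_ne_zero (mul_ne_zero ?_ ?_) ?_
    · refine Finset.prod_ne_zero_iff.2 fun σ _ h => hc σ (hinjAB (h.trans (map_zero _).symm))
    · refine Finset.prod_ne_zero_iff.2 fun σ _ => Finset.prod_ne_zero_iff.2 fun τ _ => ?_
      split_ifs with h
      · exact one_ne_zero
      · exact sub_ne_zero.2 fun h' => h (hbxinj _ _ h')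
    · refine Finset.prod_ne_zero_iff.2 fun σ _ => ?_
      split_ifs with h
      · exact one_ne_zero
      · exact sub_ne_zero.2 h
  have hBint : Algebra.IsIntegral k[X] B := inferInstance
  obtain ⟨n, hn, w, hw⟩ := (hBint.isIntegral z).isAlgebraic.exists_nonzero_dvd
    (mem_nonZeroDivisors_of_ne_zero hz)
  refine ⟨n, hn, fun t ht hirr xt hxt => ?_⟩
  let ψ : k[X] →+* Ω := (algebraMap k Ω).comp (evalRingHom t)
  obtain ⟨φ₀, hφ₀⟩ := exists_ext hinjAB ψ
  have hpm : (P.map (evalRingHom t)).Monic := hPm.map _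
  have hev : ∀ (φ : B →+* Ω), φ.comp (algebraMap k[X] B) = ψ → ∀ (u : B) (q : k[X][X]),
      φ (aeval u q) = aeval (φ u) (q.map (evalRingHom t)) := by
    intro φ hφ u q
    rw [aeval_def, hom_eval₂, hφ, aeval_def, eval₂_map]
  have hbP : ∀ σ, aeval (bx σ) P = 0 := by
    intro σ
    apply Subtype.val_injective
    rw [hBcoe, hPx]; simp
  have hconj2 : IsConjRoot k xt (φ₀ (bx 1)) := by
    have h1 : aeval (φ₀ (bx 1)) (P.map (evalRingHom t)) = 0 := by
      rw [← hev φ₀ hφ₀, hbP, map_zero]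
    rw [IsConjRoot, ← minpoly.eq_of_irreducible_of_monic hirr hxt hpm,
      ← minpoly.eq_of_irreducible_of_monic hirr h1 hpm]
  have : Normal k Ω := IsAlgClosure.normal k Ω
  obtain ⟨g, hg⟩ := isConjRoot_iff_exists_algEquiv.1 hconj2
  let φ : B →+* Ω := (g : Ω →+* Ω).comp φ₀
  have hφ : φ.comp (algebraMap k[X] B) = ψ := by
    ext r
    · have := RingHom.congr_fun hφ₀ (C r)
      simp only [RingHom.comp_apply, ψ, φ] at this ⊢
      rw [this]; simp
    · have := RingHom.congr_fun hφ₀ X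
      simp only [RingHom.comp_apply, ψ, φ] at this ⊢
      rw [this]; simp
  have hφx : φ (bx 1) = xt := hg
  have hφz : φ z ≠ 0 := by
    intro h
    have h1 : φ (algebraMap k[X] B n) = 0 := by rw [hw, map_mul, h, zero_mul]
    have h2 : ψ n = 0 := by rw [← hφ]; exact h1
    apply ht
    simpa [ψ] using h2
  simp only [z, map_mul, map_prod] at hφz
  obtain ⟨⟨hz1, hz2⟩, hz3⟩ : (_ ∧ _) ∧ _ :=
    ⟨⟨left_ne_zero_of_mul (left_ne_zero_of_mul hφz), right_ne_zero_of_mul (left_ne_zero_of_mul hφz)⟩,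
      right_ne_zero_of_mul hφz⟩
  have hc' : ∀ σ, (c σ).eval t ≠ 0 := by
    intro σ h
    apply Finset.prod_ne_zero_iff.1 hz1 σ (Finset.mem_univ _)
    have : ψ (c σ) = 0 := by simp [ψ, h]
    rw [← this, ← hφ]; rfl
  have hfinj : Function.Injective (fun σ => φ (bx σ)) := by
    intro σ τ h
    by_contra hne
    have h1 := Finset.prod_ne_zero_iff.1 (Finset.prod_ne_zero_iff.1 hz2 σ (Finset.mem_univ _)) τ
      (Finset.mem_univ _)
    rw [if_neg hne, map_sub] at h1
    exact h1 (sub_eq_zero.2 h)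
  have key := gal_of_values (P.map (evalRingHom t)) hpm hirr
    (by rw [hcard, hPm.natDegree_map]) (fun σ : L ≃ₐ[K] L => φ (bx σ)) hfinj
    (fun σ => by rw [← hev φ hφ, hbP, map_zero]) (fun σ => (c σ).eval t) hc'
    (fun σ => (b σ).map (evalRingHom t)) (fun σ τ => by
      rw [← hev φ hφ]
      have h1 : aeval (bx σ) (b τ) = algebraMap k[X] B (c τ) * bx (σ * τ) := by
        apply Subtype.val_injective
        rw [hBcoe, ← hb τ]
        rw [Algebra.smul_def, map_mul, IsScalarTower.algebraMap_apply k[X] K L, AlgEquiv.commutes,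
          ← IsScalarTower.algebraMap_apply k[X] K L]
        rfl
      rw [h1, map_mul, ← RingHom.comp_apply, hφ, Algebra.smul_def]
      rfl) xt hφx
  obtain ⟨h1, h2, e, he⟩ := key
  refine ⟨h1, h2, e, fun σ => ?_⟩
  have hya : ∀ σ, ((e σ (aeval (AdjoinSimple.gen k xt) (a.map (evalRingHom t))) : k⟮xt⟯) : Ω) =
      φ (aeval (bx σ) a) := by
    intro σ
    rw [hev φ hφ, ← he σ, ← coe_aeval_if]
    congr 1
    exact (aeval_algHom_apply (e σ : k⟮xt⟯ →ₐ[k] k⟮xt⟯) _ _).symm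
  have hya1 := hya 1
  rw [map_one, AlgEquiv.one_apply] at hya1
  rw [← Subtype.val_injective.eq_iff, hya, hya1]
  have hy1 : σ (aeval x a) = aeval x a ↔ aeval (bx σ) a = aeval (bx 1) a := by
    rw [← Subtype.val_injective.eq_iff, hBcoe, hBcoe]; rfl
  rw [hy1]
  constructor
  · intro h; rw [h]
  · intro h
    by_contra hne
    have h3 := Finset.prod_ne_zero_iff.1 hz3 σ (Finset.mem_univ _)
    rw [if_neg hne, map_sub] at h3
    exact h3 (sub_eq_zero.2 h)

theorem mem_fixingSubgroup_adjoin_simple {K L : Type*} [Field K] [Field L] [Algebra K L]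
    (y : L) (σ : L ≃ₐ[K] L) : σ ∈ (K⟮y⟯).fixingSubgroup ↔ σ y = y := by
  rw [IntermediateField.mem_fixingSubgroup_iff]
  constructor
  · intro h
    exact h y (mem_adjoin_simple_self K y)
  · intro h x hx
    have hle : K⟮y⟯ ≤ fixedField (Subgroup.zpowers σ) := by
      rw [adjoin_simple_le_iff, mem_fixedField_iff]
      intro g hg
      have h2 : Subgroup.zpowers σ ≤ MulAction.stabilizer (L ≃ₐ[K] L) y := by
        rw [Subgroup.zpowers_le]; exact h
      exact h2 hg
    exact (mem_fixedField_iff _ _).1 (hle hx) σ (Subgroup.mem_zpowers σ)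

/-- Over a Hilbertian field `k`, if `E/k(T)` is finite separable with `Aut(E/k(T)) ≅ G`
(in the specialization framework: `Ê = k(T)(x̂)` the Galois closure, `x̂` integral over
`k[T]` with minimal polynomial `P(T,X)`, and `E` generated by `a(T, x̂)`), then there are
infinitely many `t₀ ∈ k` such that the specialized extension `E_{t₀}/k` is separable with
`Aut(E_{t₀}/k) ≅ G`. -/
theorem specialization_aut (k : Type*) [Field k] (hk : IsHilbertian k)
    (G : Type*) [Group G] [Finite G]
    (E : IntermediateField (RatFunc k) (AlgebraicClosure (RatFunc k)))
    [FiniteDimensional (RatFunc k) E] [Algebra.IsSeparable (RatFunc k) E]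
    (hG : Nonempty ((E ≃ₐ[RatFunc k] E) ≃* G))
    (P a : Polynomial (Polynomial k)) (xhat : AlgebraicClosure (RatFunc k))
    (hprim : adjoin (RatFunc k) {xhat} =
      normalClosure (RatFunc k) E (AlgebraicClosure (RatFunc k)))
    (hint : IsIntegral (Polynomial k) xhat)
    (hmin : minpoly (RatFunc k) xhat = P.map (algebraMap (Polynomial k) (RatFunc k)))
    (hgen : adjoin (RatFunc k)
      {Polynomial.eval₂ (algebraMap (Polynomial k) (AlgebraicClosure (RatFunc k))) xhat a} = E) :
    {t₀ : k |
      Irreducible (P.map (evalRingHom t₀)) ∧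
      ∀ xt : AlgebraicClosure k, aeval xt (P.map (evalRingHom t₀)) = 0 →
        FiniteDimensional k
          (adjoin k ({Polynomial.eval₂ ((algebraMap k (AlgebraicClosure k)).comp
            (evalRingHom t₀)) xt a} : Set (AlgebraicClosure k))) ∧
        Algebra.IsSeparable k
          (adjoin k ({Polynomial.eval₂ ((algebraMap k (AlgebraicClosure k)).comp
            (evalRingHom t₀)) xt a} : Set (AlgebraicClosure k))) ∧
        Nonempty
          ((adjoin k ({Polynomial.eval₂ ((algebraMap k (AlgebraicClosure k)).comp
              (evalRingHom t₀)) xt a} : Set (AlgebraicClosure k)) ≃ₐ[k]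
            adjoin k ({Polynomial.eval₂ ((algebraMap k (AlgebraicClosure k)).comp
              (evalRingHom t₀)) xt a} : Set (AlgebraicClosure k))) ≃* G)}.Infinite := by
  classical
  have hgal : IsGalois (RatFunc k) (adjoin (RatFunc k) {xhat}) := by
    rw [hprim]
    have hle : normalClosure (RatFunc k) E (AlgebraicClosure (RatFunc k)) ≤
        separableClosure (RatFunc k) (AlgebraicClosure (RatFunc k)) := by
      rw [normalClosure_le_iff]
      rintro f _ ⟨z, rfl⟩
      rw [mem_separableClosure_iff]
      exact IsSeparable.map f f.injective (Algebra.IsSeparable.isSeparable (RatFunc k) z)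
    have hsep := (le_separableClosure_iff _ _ _).1 hle
    have hnor : Normal (RatFunc k)
      (normalClosure (RatFunc k) E (AlgebraicClosure (RatFunc k))) := inferInstance
    exact @IsGalois.mk _ _ _ _ _ hsep hnor
  have hxK : IsIntegral (RatFunc k) xhat := Algebra.IsIntegral.isIntegral xhat
  have hfd : FiniteDimensional (RatFunc k) (adjoin (RatFunc k) {xhat}) :=
    adjoin.finiteDimensional hxK
  have htop : adjoin (RatFunc k) {AdjoinSimple.gen (RatFunc k) xhat} = ⊤ := by
    apply IntermediateField.lift_injective
    rw [lift_adjoin_simple, lift_top]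
    rfl
  have hgint : IsIntegral k[X] (AdjoinSimple.gen (RatFunc k) xhat) := by
    refine (isIntegral_algHom_iff ((adjoin (RatFunc k) {xhat}).val.restrictScalars k[X])
      Subtype.val_injective).1 hint
  have hgmin : minpoly (RatFunc k) (AdjoinSimple.gen (RatFunc k) xhat) =
      P.map (algebraMap (Polynomial k) (RatFunc k)) := by
    rw [minpoly_gen, hmin]
  obtain ⟨n, hn, hspec⟩ := specialize_gal (Ω := AlgebraicClosure k) P a
    (AdjoinSimple.gen (RatFunc k) xhat) htop hgint hgmin
  have hirr : Irreducible (P.map (algebraMap (Polynomial k) (RatFunc k))) := by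
    rw [← hmin]; exact minpoly.irreducible hxK
  have hfin : {t : k | n.eval t = 0}.Finite :=
    (n.roots.toFinset.finite_toSet).subset fun t ht => by
      simpa [hn] using ht
  refine ((hk P hirr).sdiff hfin).mono ?_
  rintro t₀ ⟨hti, htn⟩
  refine ⟨hti, fun xt hxt => ?_⟩
  obtain ⟨h1, h2, e, he⟩ := hspec t₀ htn hti xt hxt
  -- the specialized field inside `k⟮xt⟯`
  have hyt : Polynomial.eval₂ ((algebraMap k (AlgebraicClosure k)).comp (evalRingHom t₀)) xt a =
      ((aeval (AdjoinSimple.gen k xt) (a.map (evalRingHom t₀)) : k⟮xt⟯) : AlgebraicClosure k) := by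
    rw [coe_aeval_if, aeval_def, eval₂_map]
    rfl
  have hy : Polynomial.eval₂ (algebraMap (Polynomial k) (AlgebraicClosure (RatFunc k))) xhat a =
      ((aeval (AdjoinSimple.gen (RatFunc k) xhat) a : adjoin (RatFunc k) {xhat}) :
        AlgebraicClosure (RatFunc k)) :=
    aeval_algHom_apply ((adjoin (RatFunc k) {xhat}).val.restrictScalars k[X])
      (AdjoinSimple.gen (RatFunc k) xhat) a
  rw [hy] at hgen
  rw [hyt]
  generalize aeval (AdjoinSimple.gen k xt) (a.map (evalRingHom t₀)) = yt at he ⊢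
  generalize aeval (AdjoinSimple.gen (RatFunc k) xhat) a = y at he hgen
  rw [← lift_adjoin_simple] at hgen
  rw [← lift_adjoin_simple]
  subst hgen
  let e1 := liftAlgEquiv (adjoin (RatFunc k) {y})
  let e2 := liftAlgEquiv (adjoin k {yt})
  obtain ⟨r⟩ := hG
  obtain ⟨s⟩ := aut_equiv (adjoin (RatFunc k) {y}) (adjoin k {yt}) e (fun σ => by
    rw [mem_fixingSubgroup_adjoin_simple, mem_fixingSubgroup_adjoin_simple]
    exact he σ)
  refine ⟨e2.toLinearEquiv.finiteDimensional, ?_, ?_⟩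
  · have : Algebra.IsSeparable k (adjoin k {yt}) := inferInstance
    exact AlgEquiv.Algebra.isSeparable e2
  · exact ⟨(AlgEquiv.autCongr e2).symm.trans (s.symm.trans ((AlgEquiv.autCongr e1).trans r))⟩
end
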